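/- There exist constants c > 0 and C < ∞, depending only on d, with the following property: if ε > 0 and f is a nonnegative measurable function on ℝ^d with 0 < ‖f‖_{L^{(d+1)/d}} < ∞ and ‖T(f)‖_{L^{d+1}} ≥ ε ‖f‖_{L^{(d+1)/d}}, then there exist a scalar t > 0, a Lebesgue measurable set E ⊆ ℝ^d, and a ball ℬ = ℬ(z̄, e, r, r*) such that: t χ_E ≤ f; ‖t χ_E‖_{L^{(d+1)/d}} ≥ c ε^C ‖f‖_{L^{(d+1)/d}}; |π*(ℬ)| ≤ |E|; and |π*(ℬ) ∩ E| ≥ c ε^C |E|. -/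

import Mathlib

open MeasureTheory ENNReal
open scoped RealInnerProductSpace

noncomputable section

/-- `ℝ^{d-1}` -/
abbrev Vec (n : ℕ) : Type := EuclideanSpace ℝ (Fin n)

/-- `ℝ^d = ℝ^{d-1} × ℝ`, a point `x = (x', x_d)` -/
abbrev Pt (n : ℕ) : Type := Vec n × ℝ

/-- The Radon-like transform `Tf(x) = ∫_{ℝ^{d-1}} f(x' - t, x_d - |t|²) dt`. -/
def radonT (n : ℕ) (f : Pt n → ℝ≥0∞) (x : Pt n) : ℝ≥0∞ :=
  ∫⁻ t : Vec n, f (x.1 - t, x.2 - ‖t‖ ^ 2)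

/-- The incidence functional `𝒯(E, E*) = ∫_E T(χ_{E*})`. -/
def incT (n : ℕ) (E Estar : Set (Pt n)) : ℝ≥0∞ :=
  ∫⁻ x in E, radonT n (Estar.indicator 1) x

/-- Admissibility of the parameters of a ball `ℬ(z̄, e, r, r*)`:
the center `z̄ = (x̄, x̄*)` lies on the incidence manifold `ℐ`, `ρ > 0`,
`e` is an orthonormal basis of `ℝ^{d-1}`, and `r_j r*_j = ρ > 0` for all `j`. -/
def IsBallParams (n : ℕ) (zb : Pt n × Pt n) (e : Fin n → Vec n)
    (r rs : Fin n → ℝ) (ρ : ℝ) : Prop :=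
  zb.2.2 = zb.1.2 - ‖zb.2.1 - zb.1.1‖ ^ 2 ∧ 0 < ρ ∧ Orthonormal ℝ e ∧
    (∀ j, 0 < r j) ∧ (∀ j, 0 < rs j) ∧ (∀ j, r j * rs j = ρ)

/-- The ball `ℬ(z̄, e, r, r*)`, a subset of the incidence manifold
`ℐ = {(x,y) : y_d = x_d - |y' - x'|²} ⊆ ℝ^d × ℝ^d`. -/
def ballI (n : ℕ) (zb : Pt n × Pt n) (e : Fin n → Vec n)
    (r rs : Fin n → ℝ) (ρ : ℝ) : Set (Pt n × Pt n) :=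
  fun z => z.2.2 = z.1.2 - ‖z.2.1 - z.1.1‖ ^ 2 ∧
    (∀ j, |⟪z.1.1 - zb.1.1, e j⟫| < r j) ∧
    |z.1.2 - zb.2.2 - ‖z.1.1 - zb.2.1‖ ^ 2| < ρ ∧
    (∀ j, |⟪z.2.1 - zb.2.1, e j⟫| < rs j) ∧
    |z.2.2 - zb.1.2 + ‖z.2.1 - zb.1.1‖ ^ 2| < ρ

/-- The `L^p` norm `(∫ f^p)^{1/p}` of a nonnegative function. -/
def LpN (n : ℕ) (p : ℝ) (f : Pt n → ℝ≥0∞) : ℝ≥0∞ :=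
  (∫⁻ x, f x ^ p) ^ (1 / p)

/-!
The shear `(y', y_d) ↦ (y', y_d - |y'|²)` turns `T` into the transform `R` that integrates over all
non-vertical hyperplanes, and the projections `π*(ℬ)` into boxes. In contrapositive form one has to
show a power gain: if `g` has norm at most one and little mass on every box, relative to the
critical power of the volume of the box, then `R g` is small.

Let `n` be the dimension and let `P_k(p)` be the `k`-th moment of `R g` over the pencil of
hyperplanes through `p`. By Fubini `∫ (R g)^(n+1)` is the integral of `g(p) P_n(p)`; at the cost of
a constant, by taking `p` to be the point of the `(n+1)`-tuple where `g` is largest, one may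
truncate `g` at height `g(p)` in `P_n(p)`. Seen from `p`, the pencil is the family of all
hyperplanes of a space of one dimension less, and `P_n(p)` is a moment of the transform of the
function obtained by integrating `g` along the lines through `p`. A box in the space of these lines
is a cone at `p`, whose truncations lie in boxes, so this function again has little mass on boxes,
and one can induct on the dimension.

In the plane the mass that the lines through `p` see is compared with a strip around one of them:
the part of the strip near `p` is a parallelogram, which carries little mass, the part far from `p`
has a small weight, and the part off the strip is controlled by integrating over all positions of
the strip. A dyadic decomposition of the values of `g` reduces the general case to such a
restricted estimate. Finally, on a box carrying much of the mass of `f` a single level set of `f`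
carries a comparable part, and averaging over translates of a small dilate of the box makes the box
no larger than the level set.
-/

/-- The truncation of `g` that keeps the values at most `s` and replaces the others by `0`. -/
def truncLE {α : Type*} (g : α → ℝ≥0∞) (s : ℝ≥0∞) : α → ℝ≥0∞ := {z | g z ≤ s}.indicator g

section Truncation

variable {α : Type*} {g : α → ℝ≥0∞}

lemma truncLE_apply_le (g : α → ℝ≥0∞) (s : ℝ≥0∞) (z : α) : truncLE g s z ≤ s :=
  Set.indicator_le (g := fun _ => s) (fun _ hz => hz) z

lemma truncLE_le_self (g : α → ℝ≥0∞) (s : ℝ≥0∞) : truncLE g s ≤ g :=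
  Set.indicator_le_self _ _

lemma truncLE_mono {s t : ℝ≥0∞} (hst : s ≤ t) : truncLE g s ≤ truncLE g t :=
  Set.indicator_le_indicator_of_subset (fun _ hz => le_trans hz hst) fun _ => zero_le

variable [MeasurableSpace α]

@[fun_prop]
lemma measurable_truncLE_comp {β : Type*} [MeasurableSpace β] {s : β → ℝ≥0∞} {u : β → α}
    (hg : Measurable g) (hs : Measurable s) (hu : Measurable u) :
    Measurable fun b => truncLE g (s b) (u b) :=
  Measurable.ite (measurableSet_le (hg.comp hu) hs) (hg.comp hu) measurable_const

variable {μ : Measure α} [SFinite μ]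

lemma measurable_lintegral_truncLE_self (hg : Measurable g) :
    Measurable fun y => ∫⁻ z, truncLE g (g y) z ∂μ :=
  (measurable_truncLE_comp hg (hg.comp measurable_fst) measurable_snd).lintegral_prod_right'

-- Of two values `g y`, `g z` one survives the truncation at the height of the other.
lemma lintegral_mul_lintegral_le_of_monotone {h : α → ℝ≥0∞} (hg : Measurable g)
    (hh : Measurable h) (hmono : ∀ y z, g y ≤ g z → h y ≤ h z) :
    (∫⁻ z, g z * h z ∂μ) * ∫⁻ y, g y ∂μ ≤
      2 * ∫⁻ y, g y * h y * ∫⁻ z, truncLE g (g y) z ∂μ ∂μ := by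
  have htrunc : ∀ y z, g y ≤ g z → truncLE g (g z) y = g y := fun y z hyz =>
    Set.indicator_of_mem (s := {x | g x ≤ g z}) hyz g
  have hmeas : Measurable fun q : α × α => g q.1 * h q.1 * truncLE g (g q.1) q.2 := by fun_prop
  have hpair : ∀ z y, g z * h z * g y ≤
      g z * h z * truncLE g (g z) y + g y * h y * truncLE g (g y) z := by
    intro z y
    rcases le_total (g y) (g z) with hyz | hzy
    · rw [htrunc y z hyz]
      exact le_self_add
    · rw [htrunc z y hzy]
      refine le_add_left ?_
      calc g z * h z * g y ≤ g z * h y * g y := by gcongr; exact hmono z y hzy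
        _ = g y * h y * g z := by ring
  calc (∫⁻ z, g z * h z ∂μ) * ∫⁻ y, g y ∂μ
      = ∫⁻ z, ∫⁻ y, g z * h z * g y ∂μ ∂μ := by
        rw [← lintegral_mul_const _ (by fun_prop)]
        exact lintegral_congr fun z => (lintegral_const_mul _ hg).symm
    _ ≤ ∫⁻ z, ∫⁻ y, g z * h z * truncLE g (g z) y + g y * h y * truncLE g (g y) z ∂μ ∂μ :=
        lintegral_mono fun z => lintegral_mono fun y => hpair z y
    _ = (∫⁻ z, ∫⁻ y, g z * h z * truncLE g (g z) y ∂μ ∂μ) +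
          ∫⁻ z, ∫⁻ y, g y * h y * truncLE g (g y) z ∂μ ∂μ := by
        rw [← lintegral_add_left hmeas.lintegral_prod_right']
        exact lintegral_congr fun z => lintegral_add_left (by fun_prop) _
    _ = 2 * ∫⁻ z, ∫⁻ y, g z * h z * truncLE g (g z) y ∂μ ∂μ := by
        rw [lintegral_lintegral_swap (f := fun z y => g y * h y * truncLE g (g y) z)
          (hmeas.comp measurable_swap).aemeasurable, two_mul]
    _ = _ := by
        congr 1
        exact lintegral_congr fun z => lintegral_const_mul _ (by fun_prop)

theorem lintegral_pow_succ_le (hg : Measurable g) (k : ℕ) :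
    (∫⁻ y, g y ∂μ) ^ (k + 1) ≤ 2 ^ k * ∫⁻ y, g y * (∫⁻ z, truncLE g (g y) z ∂μ) ^ k ∂μ := by
  have hG := measurable_lintegral_truncLE_self (μ := μ) hg
  induction k with
  | zero => simp
  | succ k ih =>
    have hstep := lintegral_mul_lintegral_le_of_monotone (μ := μ) hg (hG.pow_const k)
      fun y z hyz => pow_le_pow_left' (lintegral_mono (truncLE_mono hyz)) k
    calc (∫⁻ y, g y ∂μ) ^ (k + 1 + 1) = (∫⁻ y, g y ∂μ) ^ (k + 1) * ∫⁻ y, g y ∂μ := pow_succ _ _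
      _ ≤ 2 ^ k * (∫⁻ y, g y * (∫⁻ z, truncLE g (g y) z ∂μ) ^ k ∂μ) * ∫⁻ y, g y ∂μ := by gcongr
      _ ≤ 2 ^ k * (2 * ∫⁻ y, g y * (∫⁻ z, truncLE g (g y) z ∂μ) ^ k *
            ∫⁻ z, truncLE g (g y) z ∂μ ∂μ) := by
          rw [mul_assoc]
          gcongr
      _ = _ := by simp only [pow_succ, mul_assoc]

end Truncation

/-- The integral of `f` over the hyperplane `{(y, x.2 + ⟪x.1, y⟫)}` of slope `x.1` and intercept
`x.2`, with respect to `dy`. A shear conjugates it to `radonT`. -/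
def hyperplaneTransform {V : Type*} [NormedAddCommGroup V] [InnerProductSpace ℝ V] [MeasureSpace V]
    (f : V × ℝ → ℝ≥0∞) (x : V × ℝ) : ℝ≥0∞ :=
  ∫⁻ y, f (y, x.2 + ⟪x.1, y⟫)

/-- The `k`-th moment of the hyperplane integrals of `g` over the pencil of all (non-vertical)
hyperplanes through the point `p`, parametrised by their slopes `a`. -/
def pencilMoment {V : Type*} [NormedAddCommGroup V] [InnerProductSpace ℝ V] [MeasureSpace V]
    (k : ℕ) (g : V × ℝ → ℝ≥0∞) (p : V × ℝ) : ℝ≥0∞ :=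
  ∫⁻ a, hyperplaneTransform g (a, p.2 - ⟪a, p.1⟫) ^ k

section HyperplaneTransform

variable {V : Type*} [NormedAddCommGroup V] [InnerProductSpace ℝ V] [MeasureSpace V]

lemma hyperplaneTransform_mono {f g : V × ℝ → ℝ≥0∞} (h : f ≤ g) :
    hyperplaneTransform f ≤ hyperplaneTransform g :=
  fun _ => lintegral_mono fun _ => h _

lemma pencilMoment_mono {f g : V × ℝ → ℝ≥0∞} (h : f ≤ g) (k : ℕ) :
    pencilMoment k f ≤ pencilMoment k g :=
  fun _ => lintegral_mono fun _ => pow_le_pow_left' (hyperplaneTransform_mono h _) k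

variable [BorelSpace V]

lemma hyperplaneTransform_through [(volume : Measure V).IsAddLeftInvariant] (f : V × ℝ → ℝ≥0∞)
    (p : V × ℝ) (a : V) :
    hyperplaneTransform f (a, p.2 - ⟪a, p.1⟫) = ∫⁻ z, f (p.1 + z, p.2 + ⟪a, z⟫) := by
  rw [hyperplaneTransform, ← lintegral_add_left_eq_self _ p.1]
  refine lintegral_congr fun z => ?_
  congr 2
  rw [inner_add_right]
  ring

variable [SecondCountableTopology V]

lemma hyperplaneTransform_const_mul (c : ℝ≥0∞) {f : V × ℝ → ℝ≥0∞} (hf : Measurable f)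
    (x : V × ℝ) :
    hyperplaneTransform (fun q => c * f q) x = c * hyperplaneTransform f x :=
  lintegral_const_mul c (by fun_prop)

lemma hyperplaneTransform_add {f g : V × ℝ → ℝ≥0∞} (hf : Measurable f) (x : V × ℝ) :
    hyperplaneTransform (f + g) x = hyperplaneTransform f x + hyperplaneTransform g x :=
  lintegral_add_left (by fun_prop) _

variable [SFinite (volume : Measure V)]

@[fun_prop]
lemma measurable_hyperplaneTransform {f : V × ℝ → ℝ≥0∞} (hf : Measurable f) :
    Measurable (hyperplaneTransform f) :=
  Measurable.lintegral_prod_right' (f := fun q : (V × ℝ) × V => f (q.2, q.1.2 + ⟪q.1.1, q.2⟫))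
    (by fun_prop)

@[fun_prop]
lemma measurable_pencilMoment {g : V × ℝ → ℝ≥0∞} (hg : Measurable g) (k : ℕ) :
    Measurable (pencilMoment k g) :=
  Measurable.lintegral_prod_right'
    (f := fun q : (V × ℝ) × V => hyperplaneTransform g (q.2, q.1.2 - ⟪q.2, q.1.1⟫) ^ k)
    (by fun_prop)

lemma lintegral_incidence_swap {Φ : (V × ℝ) × (V × ℝ) → ℝ≥0∞} (hΦ : Measurable Φ) :
    ∫⁻ x : V × ℝ, ∫⁻ y : V, Φ ((y, x.2 + ⟪x.1, y⟫), x) =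
      ∫⁻ p : V × ℝ, ∫⁻ a : V, Φ (p, (a, p.2 - ⟪a, p.1⟫)) := by
  have hmeas : Measurable fun q : (V × ℝ) × V => Φ ((q.2, q.1.2 + ⟪q.1.1, q.2⟫), q.1) := by
    fun_prop
  have hmeas' : Measurable fun q : (V × ℝ) × V => Φ (q.1, (q.2, q.1.2 - ⟪q.2, q.1.1⟫)) := by
    fun_prop
  calc ∫⁻ x : V × ℝ, ∫⁻ y : V, Φ ((y, x.2 + ⟪x.1, y⟫), x)
      = ∫⁻ a : V, ∫⁻ v : ℝ, ∫⁻ y : V, Φ ((y, v + ⟪a, y⟫), (a, v)) := by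
        rw [Measure.volume_eq_prod, lintegral_prod _ hmeas.lintegral_prod_right'.aemeasurable]
    _ = ∫⁻ a : V, ∫⁻ y : V, ∫⁻ v : ℝ, Φ ((y, v + ⟪a, y⟫), (a, v)) := by
        refine lintegral_congr fun a => lintegral_lintegral_swap ?_
        apply Measurable.aemeasurable
        fun_prop
    _ = ∫⁻ a : V, ∫⁻ y : V, ∫⁻ v : ℝ, Φ ((y, v), (a, v - ⟪a, y⟫)) := by
        refine lintegral_congr fun a => lintegral_congr fun y => ?_
        rw [← lintegral_add_right_eq_self (fun v => Φ ((y, v), (a, v - ⟪a, y⟫))) ⟪a, y⟫]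
        simp only [add_sub_cancel_right]
    _ = ∫⁻ a : V, ∫⁻ p : V × ℝ, Φ (p, (a, p.2 - ⟪a, p.1⟫)) := by
        refine lintegral_congr fun a => ?_
        rw [Measure.volume_eq_prod, lintegral_prod]
        exact (hmeas'.comp measurable_prodMk_right).aemeasurable
    _ = _ := lintegral_lintegral_swap (hmeas'.comp measurable_swap).aemeasurable

theorem lintegral_hyperplaneTransform_pow_succ_le {f : V × ℝ → ℝ≥0∞} (hf : Measurable f) (k : ℕ) :
    ∫⁻ x, hyperplaneTransform f x ^ (k + 1) ≤
      2 ^ k * ∫⁻ p, f p * pencilMoment k (truncLE f (f p)) p := by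
  have hmeas : Measurable fun q : (V × ℝ) × (V × ℝ) =>
      hyperplaneTransform (truncLE f (f q.1)) q.2 := by
    refine Measurable.lintegral_prod_right' (f := fun r : ((V × ℝ) × (V × ℝ)) × V =>
      truncLE f (f r.1.1) (r.2, r.1.2.2 + ⟪r.1.2.1, r.2⟫)) ?_
    fun_prop
  calc ∫⁻ x, hyperplaneTransform f x ^ (k + 1)
      ≤ ∫⁻ x : V × ℝ, 2 ^ k * ∫⁻ y : V, f (y, x.2 + ⟪x.1, y⟫) *
          hyperplaneTransform (truncLE f (f (y, x.2 + ⟪x.1, y⟫))) x ^ k :=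
        lintegral_mono fun x =>
          lintegral_pow_succ_le (g := fun y => f (y, x.2 + ⟪x.1, y⟫)) (by fun_prop) k
    _ = 2 ^ k * ∫⁻ x : V × ℝ, ∫⁻ y : V, f (y, x.2 + ⟪x.1, y⟫) *
          hyperplaneTransform (truncLE f (f (y, x.2 + ⟪x.1, y⟫))) x ^ k :=
        lintegral_const_mul' _ _ (by simp)
    _ = 2 ^ k * ∫⁻ p : V × ℝ, ∫⁻ a : V,
          f p * hyperplaneTransform (truncLE f (f p)) (a, p.2 - ⟪a, p.1⟫) ^ k := by
        rw [lintegral_incidence_swap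
          (Φ := fun q => f q.1 * hyperplaneTransform (truncLE f (f q.1)) q.2 ^ k) (by fun_prop)]
    _ = _ := by
        congr 1
        refine lintegral_congr fun p => lintegral_const_mul _ (Measurable.pow_const ?_ k)
        exact hmeas.comp (measurable_const.prodMk (by fun_prop : Measurable fun a : V => (a, _)))

end HyperplaneTransform

instance isAddHaarMeasure_volume_prod {E F : Type*}
    [AddCommGroup E] [TopologicalSpace E] [IsTopologicalAddGroup E] [SecondCountableTopology E]
    [MeasureSpace E] [BorelSpace E] [(volume : Measure E).IsAddHaarMeasure]
    [SFinite (volume : Measure E)]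
    [AddCommGroup F] [TopologicalSpace F] [IsTopologicalAddGroup F] [SecondCountableTopology F]
    [MeasureSpace F] [BorelSpace F] [(volume : Measure F).IsAddHaarMeasure]
    [SFinite (volume : Measure F)] :
    (volume : Measure (E × F)).IsAddHaarMeasure :=
  inferInstanceAs ((volume : Measure E).prod (volume : Measure F)).IsAddHaarMeasure

section PolarCoordinates

variable {W : Type*} [NormedAddCommGroup W] [NormedSpace ℝ W] [FiniteDimensional ℝ W]
  [MeasurableSpace W] [BorelSpace W] (μ : Measure W) [μ.IsAddHaarMeasure]

lemma lintegral_eq_abs_pow_finrank_mul_comp_smul {r : ℝ} (hr : r ≠ 0) (h : W → ℝ≥0∞) :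
    ∫⁻ x, h x ∂μ = ENNReal.ofReal (|r| ^ Module.finrank ℝ W) * ∫⁻ x, h (r • x) ∂μ := by
  have hmap : ∫⁻ x, h (r • x) ∂μ = ∫⁻ x, h x ∂(Measure.map (r • ·) μ) :=
    (lintegral_map_equiv h (Homeomorph.smulOfNeZero r hr).toMeasurableEquiv).symm
  have hscale : |r| ^ Module.finrank ℝ W * |(r ^ Module.finrank ℝ W)⁻¹| = 1 := by
    rw [abs_inv, abs_pow, mul_inv_cancel₀ (pow_ne_zero _ (abs_ne_zero.mpr hr))]
  rw [hmap, Measure.map_addHaar_smul μ hr, lintegral_smul_measure, smul_eq_mul, ← mul_assoc,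
    ← ENNReal.ofReal_mul (by positivity), hscale, ENNReal.ofReal_one, one_mul]

lemma lintegral_lintegral_eq_projective {h : ℝ × W → ℝ≥0∞} (hh : Measurable h) :
    ∫⁻ r : ℝ, ∫⁻ x, h (r, x) ∂μ =
      ∫⁻ x, (∫⁻ r : ℝ, ENNReal.ofReal (|r| ^ Module.finrank ℝ W) * h (r, r • x)) ∂μ := by
  have hmeas : Measurable fun q : ℝ × W =>
      ENNReal.ofReal (|q.1| ^ Module.finrank ℝ W) * h (q.1, q.1 • q.2) := by fun_prop
  rw [← lintegral_lintegral_swap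
    (f := fun r x => ENNReal.ofReal (|r| ^ Module.finrank ℝ W) * h (r, r • x)) hmeas.aemeasurable]
  refine lintegral_congr_ae ?_
  filter_upwards [Measure.ae_ne volume (0 : ℝ)] with r hr
  rw [lintegral_eq_abs_pow_finrank_mul_comp_smul μ hr, lintegral_const_mul _ (by fun_prop)]

end PolarCoordinates

namespace Vec

variable {m : ℕ}

/-- The vector of `ℝ^{m+1}` with first coordinate `r` and remaining coordinates `w`. -/
def cons (r : ℝ) (w : Vec m) : Vec (m + 1) := WithLp.toLp 2 (Fin.cons r w.ofLp)

@[simp] lemma cons_zero_apply (r : ℝ) (w : Vec m) : cons r w 0 = r := rfl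

@[simp] lemma cons_succ_apply (r : ℝ) (w : Vec m) (i : Fin m) : cons r w i.succ = w i := rfl

lemma inner_cons (r s : ℝ) (w z : Vec m) : ⟪cons r w, cons s z⟫ = r * s + ⟪w, z⟫ := by
  simp [PiLp.inner_apply, Fin.sum_univ_succ, mul_comm r s]

lemma smul_cons (c r : ℝ) (w : Vec m) : c • cons r w = cons (c * r) (c • w) := by
  ext i
  refine Fin.cases ?_ (fun j => ?_) i <;> simp

@[fun_prop]
lemma measurable_cons {α : Type*} [MeasurableSpace α] {r : α → ℝ} {w : α → Vec m}
    (hr : Measurable r) (hw : Measurable w) : Measurable fun a => cons (r a) (w a) := by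
  refine (WithLp.measurable_toLp 2 _).comp (measurable_pi_iff.2 fun i => ?_)
  refine Fin.cases hr (fun j => ?_) i
  simp only [Fin.cons_succ]
  fun_prop

lemma lintegral_cons {h : Vec (m + 1) → ℝ≥0∞} (hh : Measurable h) :
    ∫⁻ y, h y = ∫⁻ r : ℝ, ∫⁻ w : Vec m, h (cons r w) := by
  have hsplit := (volume_preserving_piFinSuccAbove (fun _ : Fin (m + 1) => ℝ) 0).symm
  have hcons := (PiLp.volume_preserving_toLp (Fin (m + 1))).comp
    (hsplit.comp ((MeasurePreserving.id volume).prod (PiLp.volume_preserving_ofLp (Fin m))))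
  rw [← hcons.lintegral_comp hh, lintegral_prod]
  · simp [cons, MeasurableEquiv.piFinSuccAbove_symm_apply, Fin.consEquiv]
  · exact (hh.comp hcons.measurable).aemeasurable

lemma lintegral_projective {h : Vec (m + 1) → ℝ≥0∞} (hh : Measurable h) :
    ∫⁻ y, h y = ∫⁻ w : Vec m, ∫⁻ r : ℝ, ENNReal.ofReal (|r| ^ m) * h (r • cons 1 w) := by
  have hpolar := lintegral_lintegral_eq_projective (volume : Measure (Vec m))
    (h := fun q => h (cons q.1 q.2)) (by fun_prop)
  simpa only [lintegral_cons hh, smul_cons, mul_one, finrank_euclideanSpace_fin] using hpolar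

end Vec

section Fan

variable {m : ℕ}

lemma lintegral_pt_cons {h : Pt (m + 1) → ℝ≥0∞} (hh : Measurable h) :
    ∫⁻ q, h q = ∫⁻ r : ℝ, ∫⁻ w : Pt m, h (Vec.cons r w.1, w.2) := by
  rw [Measure.volume_eq_prod, lintegral_prod _ hh.aemeasurable,
    Vec.lintegral_cons hh.lintegral_prod_right']
  refine lintegral_congr fun r => ?_
  rw [Measure.volume_eq_prod, lintegral_prod]
  apply Measurable.aemeasurable
  fun_prop

lemma lintegral_pt_projective {h : Pt (m + 1) → ℝ≥0∞} (hh : Measurable h) :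
    ∫⁻ q, h q = ∫⁻ w : Pt m, ∫⁻ r : ℝ,
      ENNReal.ofReal (|r| ^ (m + 1)) * h (r • (Vec.cons 1 w.1, w.2)) := by
  have hpolar := lintegral_lintegral_eq_projective (volume : Measure (Pt m))
    (h := fun q => h (Vec.cons q.1 q.2.1, q.2.2)) (by fun_prop)
  simpa only [lintegral_pt_cons hh, Module.finrank_prod, finrank_euclideanSpace_fin,
    Module.finrank_self, Prod.smul_fst, Prod.smul_snd, Prod.smul_mk, Vec.smul_cons, mul_one]
    using hpolar

/-- The projection of `g` from the point `p`: its integral, with the weight `|r| ^ m`, along the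
line through `p` in the direction `(1, w)`. The weight is the one for which the integral of `g`
over a hyperplane through `p` is an integral of `fanProjection g p` over a hyperplane. -/
def fanProjection (g : Pt (m + 1) → ℝ≥0∞) (p : Pt (m + 1)) (w : Pt m) : ℝ≥0∞ :=
  ∫⁻ r : ℝ, ENNReal.ofReal (|r| ^ m) * g (p + r • (Vec.cons 1 w.1, w.2))

@[fun_prop]
lemma measurable_fanProjection {g : Pt (m + 1) → ℝ≥0∞} (hg : Measurable g) (p : Pt (m + 1)) :
    Measurable (fanProjection g p) :=
  Measurable.lintegral_prod_right' (f := fun q : Pt m × ℝ =>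
    ENNReal.ofReal (|q.2| ^ m) * g (p + q.2 • (Vec.cons 1 q.1.1, q.1.2))) (by fun_prop)

lemma hyperplaneTransform_through_eq_fanProjection {g : Pt (m + 1) → ℝ≥0∞} (hg : Measurable g)
    (p : Pt (m + 1)) (s : ℝ) (a : Vec m) :
    hyperplaneTransform g (Vec.cons s a, p.2 - ⟪Vec.cons s a, p.1⟫) =
      hyperplaneTransform (fanProjection g p) (a, s) := by
  rw [hyperplaneTransform_through, Vec.lintegral_projective (by fun_prop)]
  refine lintegral_congr fun w => lintegral_congr fun r => ?_
  rw [real_inner_smul_right, Vec.inner_cons, mul_one]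
  rfl

theorem pencilMoment_eq_lintegral_fanProjection {g : Pt (m + 1) → ℝ≥0∞} (hg : Measurable g)
    (k : ℕ) (p : Pt (m + 1)) :
    pencilMoment k g p = ∫⁻ x : Pt m, hyperplaneTransform (fanProjection g p) x ^ k := by
  have hmeas : Measurable fun x : Pt m => hyperplaneTransform (fanProjection g p) x ^ k := by
    fun_prop
  rw [pencilMoment, Vec.lintegral_cons (by fun_prop), Measure.volume_eq_prod,
    lintegral_prod_symm _ hmeas.aemeasurable]
  simp only [hyperplaneTransform_through_eq_fanProjection hg]

end Fan

lemma ofReal_pow_rpow {x t : ℝ} {k j : ℕ} (hx : 0 ≤ x) (ht : 0 ≤ t) (h : k * t = j) :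
    ENNReal.ofReal (x ^ k) ^ t = ENNReal.ofReal (x ^ j) := by
  rw [ENNReal.ofReal_rpow_of_nonneg (by positivity) ht, ← Real.rpow_natCast, ← Real.rpow_mul hx, h,
    Real.rpow_natCast]

lemma exists_eq_ofReal_pow {x : ℝ≥0∞} (h0 : x ≠ 0) (htop : x ≠ ⊤) {n : ℕ} (hn : n ≠ 0) :
    ∃ y : ℝ, 0 < y ∧ x = ENNReal.ofReal (y ^ n) :=
  ⟨x.toReal ^ (n : ℝ)⁻¹, Real.rpow_pos_of_pos (ENNReal.toReal_pos h0 htop) _, by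
    rw [Real.rpow_inv_natCast_pow ENNReal.toReal_nonneg hn, ENNReal.ofReal_toReal htop]⟩

lemma holderConjugate_add_one_div {a : ℝ} (ha : 0 < a) : ((a + 1) / a).HolderConjugate (a + 1) := by
  rw [Real.holderConjugate_iff]
  refine ⟨(one_lt_div ha).2 (lt_add_one a), ?_⟩
  field_simp

section RadialIntegrals

lemma setLIntegral_abs_le_pow_mul_le (m : ℕ) {s : ℝ≥0∞} {g : ℝ → ℝ≥0∞} (hg : ∀ r, g r ≤ s)
    {ρ : ℝ} (hρ : 0 < ρ) :
    ∫⁻ r in {r : ℝ | |r| ≤ ρ}, ENNReal.ofReal (|r| ^ m) * g r ≤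
      ENNReal.ofReal (2 * ρ ^ (m + 1)) * s := by
  have hIcc : {r : ℝ | |r| ≤ ρ} = Set.Icc (-ρ) ρ := by
    simp only [abs_le, Set.Icc_def]
  calc ∫⁻ r in {r : ℝ | |r| ≤ ρ}, ENNReal.ofReal (|r| ^ m) * g r
      ≤ ∫⁻ _ in {r : ℝ | |r| ≤ ρ}, ENNReal.ofReal (ρ ^ m) * s := by
        have hpoint : ∀ r ∈ {r : ℝ | |r| ≤ ρ},
            ENNReal.ofReal (|r| ^ m) * g r ≤ ENNReal.ofReal (ρ ^ m) * s := fun r hr =>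
          mul_le_mul' (ofReal_le_ofReal (pow_le_pow_left₀ (abs_nonneg r) hr m)) (hg r)
        exact setLIntegral_mono' (by rw [hIcc]; exact measurableSet_Icc) hpoint
    _ = ENNReal.ofReal (2 * ρ ^ (m + 1)) * s := by
        rw [setLIntegral_const, hIcc, Real.volume_Icc, mul_right_comm,
          ← ENNReal.ofReal_mul (by positivity)]
        congr 2
        ring

lemma setLIntegral_Ioi_rpow_neg_two {R : ℝ} (hR : 0 < R) :
    ∫⁻ r in Set.Ioi R, ENNReal.ofReal (|r| ^ (-2 : ℝ)) = ENNReal.ofReal (1 / R) := by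
  have hvalue : ∫ t in Set.Ioi R, t ^ (-2 : ℝ) = 1 / R := by
    rw [integral_Ioi_rpow_of_lt (by norm_num) hR]
    norm_num [Real.rpow_neg_one]
  rw [← hvalue, ofReal_integral_eq_lintegral_ofReal
    (integrableOn_Ioi_rpow_of_lt (by norm_num) hR)]
  · refine setLIntegral_congr_fun measurableSet_Ioi fun r hr => ?_
    simp only [abs_of_pos (hR.trans hr)]
  · filter_upwards [ae_restrict_mem measurableSet_Ioi] with r hr
    exact Real.rpow_nonneg (hR.trans hr).le _

lemma setLIntegral_lt_abs_rpow_neg_two_le {R : ℝ} (hR : 0 < R) :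
    ∫⁻ r in {r : ℝ | R < |r|}, ENNReal.ofReal (|r| ^ (-2 : ℝ)) ≤ ENNReal.ofReal (2 / R) := by
  have hunion : {r : ℝ | R < |r|} = Set.Ioi R ∪ Set.Iio (-R) := by
    ext r
    simp [lt_abs, lt_neg]
  have hneg : ∫⁻ r in Set.Iio (-R), ENNReal.ofReal (|r| ^ (-2 : ℝ)) = ENNReal.ofReal (1 / R) := by
    rw [← setLIntegral_Ioi_rpow_neg_two hR,
      ← (Measure.measurePreserving_neg (volume : Measure ℝ)).setLIntegral_comp_preimage
        measurableSet_Iio (by fun_prop)]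
    simp
  rw [hunion]
  refine (lintegral_union_le _ _ _).trans_eq ?_
  rw [setLIntegral_Ioi_rpow_neg_two hR, hneg, ← ENNReal.ofReal_add (by positivity) (by positivity)]
  congr 1
  ring

-- The two factors are arranged so that their powers `(m + 3) / (m + 2)` and `m + 3` carry the
-- weights `|r| ^ (m + 1)` and `|r| ^ (-2)`.
lemma abs_pow_mul_eq_mul_rpow (m : ℕ) {r : ℝ} (hr : 0 < |r|) (x : ℝ≥0∞) :
    ENNReal.ofReal (|r| ^ m) * x =
      ENNReal.ofReal (|r| ^ (((m : ℝ) + 1) * (m + 2) / (m + 3))) * x *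
        ENNReal.ofReal (|r| ^ (-2 / ((m : ℝ) + 3))) := by
  rw [mul_right_comm, ← ENNReal.ofReal_mul (by positivity), ← Real.rpow_add hr,
    ← Real.rpow_natCast]
  congr 3
  field_simp
  ring

lemma lintegral_setLIntegral_lt_abs_pow_mul_le {Y : Type*} [MeasurableSpace Y] (ν : Measure Y)
    [SFinite ν] (m : ℕ) {g : Y × ℝ → ℝ≥0∞} (hg : Measurable g) {R : ℝ} (hR : 0 < R) :
    ∫⁻ w, (∫⁻ r in {r : ℝ | R < |r|}, ENNReal.ofReal (|r| ^ m) * g (w, r)) ∂ν ≤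
      (∫⁻ w, (∫⁻ r : ℝ, ENNReal.ofReal (|r| ^ (m + 1)) * g (w, r) ^ (((m : ℝ) + 3) / (m + 2))) ∂ν)
        ^ (((m : ℝ) + 2) / (m + 3)) *
      (ν Set.univ * ENNReal.ofReal (2 / R)) ^ (1 / ((m : ℝ) + 3)) := by
  set S : Set ℝ := {r : ℝ | R < |r|}
  have hSm : MeasurableSet S := measurableSet_lt measurable_const (by fun_prop)
  set a : Y × ℝ → ℝ≥0∞ := fun q =>
    ENNReal.ofReal (|q.2| ^ (((m : ℝ) + 1) * (m + 2) / (m + 3))) * g q with ha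
  set b : Y × ℝ → ℝ≥0∞ := fun q => ENNReal.ofReal (|q.2| ^ (-2 / ((m : ℝ) + 3))) with hb
  have ham : Measurable a := by fun_prop
  have hbm : Measurable b := by fun_prop
  have hpq : (((m : ℝ) + 3) / (m + 2)).HolderConjugate ((m : ℝ) + 3) := by
    convert holderConjugate_add_one_div (a := (m : ℝ) + 2) (by positivity) using 1 <;> ring
  have hfactor : ∫⁻ w, (∫⁻ r in S, ENNReal.ofReal (|r| ^ m) * g (w, r)) ∂ν =
      ∫⁻ q, (a * b) q ∂(ν.prod (volume.restrict S)) := by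
    rw [lintegral_prod _ (ham.mul hbm).aemeasurable]
    exact lintegral_congr fun w => setLIntegral_congr_fun hSm fun r hr =>
      abs_pow_mul_eq_mul_rpow m (hR.trans hr) _
  rw [hfactor]
  refine (ENNReal.lintegral_mul_le_Lp_mul_Lq _ hpq ham.aemeasurable hbm.aemeasurable).trans ?_
  rw [one_div_div]
  gcongr
  · rw [lintegral_prod _ (ham.pow_const _).aemeasurable]
    refine lintegral_mono fun w => (setLIntegral_congr_fun hSm fun r _ => ?_).trans_le
      (setLIntegral_le_lintegral S _)
    simp only [ha]
    rw [ENNReal.mul_rpow_of_nonneg _ _ (by positivity),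
      ENNReal.ofReal_rpow_of_nonneg (by positivity) (by positivity),
      ← Real.rpow_mul (abs_nonneg r), ← Real.rpow_natCast]
    congr 3
    push_cast
    field_simp
  · rw [lintegral_prod _ (hbm.pow_const _).aemeasurable, mul_comm, ← lintegral_const]
    refine lintegral_mono fun w => (setLIntegral_congr_fun hSm fun r _ => ?_).trans_le
      (setLIntegral_lt_abs_rpow_neg_two_le hR)
    simp only [hb]
    rw [ENNReal.ofReal_rpow_of_nonneg (by positivity) (by positivity),
      ← Real.rpow_mul (abs_nonneg r), div_mul_cancel₀ _ (by positivity)]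

variable {m : ℕ} {g : ℝ → ℝ≥0∞}

lemma lintegral_abs_pow_mul_eq_zero (hg : Measurable g) {k : ℕ} {q : ℝ} (hq : 0 < q)
    (h0 : ∫⁻ r : ℝ, ENNReal.ofReal (|r| ^ k) * g r ^ q = 0) :
    ∫⁻ r, ENNReal.ofReal (|r| ^ m) * g r = 0 := by
  rw [lintegral_eq_zero_iff (by fun_prop)] at h0 ⊢
  filter_upwards [h0, Measure.ae_ne volume (0 : ℝ)] with r hr hr0
  have hgr : g r = 0 := by
    have hpow : ENNReal.ofReal (|r| ^ k) ≠ 0 := by simpa using fun h => absurd h hr0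
    exact (ENNReal.rpow_eq_zero_iff_of_pos hq).1 ((mul_eq_zero.1 hr).resolve_left hpow)
  simp [hgr]

lemma lintegral_abs_pow_mul_le_add (hg : Measurable g) {s : ℝ≥0∞} (hs : ∀ r, g r ≤ s) {ρ : ℝ}
    (hρ : 0 < ρ) :
    ∫⁻ r, ENNReal.ofReal (|r| ^ m) * g r ≤ ENNReal.ofReal (2 * ρ ^ (m + 1)) * s +
      (∫⁻ r : ℝ, ENNReal.ofReal (|r| ^ (m + 1)) * g r ^ (((m : ℝ) + 3) / (m + 2)))
        ^ (((m : ℝ) + 2) / (m + 3)) * ENNReal.ofReal (2 / ρ) ^ (1 / ((m : ℝ) + 3)) := by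
  have hnear : MeasurableSet {r : ℝ | |r| ≤ ρ} := measurableSet_le (by fun_prop) measurable_const
  have hcompl : {r : ℝ | |r| ≤ ρ}ᶜ = {r | ρ < |r|} := by ext r; simp
  have hfar := lintegral_setLIntegral_lt_abs_pow_mul_le (Measure.dirac ()) m
    (hg.comp measurable_snd) hρ
  simp only [Function.comp_apply, lintegral_dirac, measure_univ, one_mul] at hfar
  rw [← lintegral_add_compl _ hnear, hcompl]
  exact add_le_add (setLIntegral_abs_le_pow_mul_le m hs hρ) hfar

-- Optimising over the radius at which near and far parts are separated.
theorem lintegral_abs_pow_mul_le (hg : Measurable g) {σ : ℝ} (hσ : 0 < σ)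
    (hs : ∀ r, g r ≤ ENNReal.ofReal (σ ^ ((m + 2) ^ 2))) :
    ∫⁻ r, ENNReal.ofReal (|r| ^ m) * g r ≤ ENNReal.ofReal (4 * σ) *
      (∫⁻ r : ℝ, ENNReal.ofReal (|r| ^ (m + 1)) * g r ^ (((m : ℝ) + 3) / (m + 2)))
        ^ (((m : ℝ) + 1) / (m + 2)) := by
  set M := ∫⁻ r : ℝ, ENNReal.ofReal (|r| ^ (m + 1)) * g r ^ (((m : ℝ) + 3) / (m + 2)) with hM
  rcases eq_or_ne M 0 with h0 | h0
  · rw [lintegral_abs_pow_mul_eq_zero hg (by positivity) h0]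
    exact zero_le
  rcases eq_or_ne M ⊤ with htop | htop
  · rw [htop, ENNReal.top_rpow_of_pos (by positivity), ENNReal.mul_top (by simp [hσ])]
    exact le_top
  obtain ⟨μ, hμ, hMμ⟩ := exists_eq_ofReal_pow h0 htop (n := (m + 3) * (m + 2)) (by positivity)
  refine (lintegral_abs_pow_mul_le_add hg hs (ρ := (μ / σ) ^ (m + 3)) (by positivity)).trans ?_
  have htail : ENNReal.ofReal (2 / (μ / σ) ^ (m + 3)) ^ (1 / ((m : ℝ) + 3)) ≤
      ENNReal.ofReal (2 * σ / μ) := by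
    rw [← pow_one (2 * σ / μ), ← ofReal_pow_rpow (k := m + 3) (t := 1 / ((m : ℝ) + 3))
      (by positivity) (by positivity) (by push_cast; field_simp)]
    gcongr
    rw [show 2 * σ / μ = 2 / (μ / σ) by field_simp, div_pow 2]
    gcongr
    exact le_self_pow₀ one_le_two (by omega)
  rw [← hM, hMμ, ofReal_pow_rpow hμ.le (j := (m + 2) ^ 2) (by positivity)
      (by push_cast; field_simp),
    ofReal_pow_rpow hμ.le (j := (m + 3) * (m + 1)) (by positivity) (by push_cast; field_simp)]
  refine (add_le_add le_rfl (mul_le_mul_right htail _)).trans_eq ?_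
  rw [← ENNReal.ofReal_mul (by positivity), ← ENNReal.ofReal_mul (by positivity),
    ← ENNReal.ofReal_mul (by positivity), ← ENNReal.ofReal_add (by positivity) (by positivity)]
  have hexp : (m + 2) ^ 2 = (m + 3) * (m + 1) + 1 := by ring
  rw [hexp, ← pow_mul, div_pow, pow_succ σ, pow_succ μ]
  congr 1
  field_simp
  ring

end RadialIntegrals

/-- The set `{x | ‖A (x - b)‖ ≤ R}`. For an injective map `A` into `Fin k → ℝ` with `k` the
dimension of `E`, this is the parallelepiped with centre `b`, axes given by `A` and scale `R`. -/
def affineBall {E F : Type*} [AddCommGroup E] [Module ℝ E] [NormedAddCommGroup F] [NormedSpace ℝ F]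
    (A : E →ₗ[ℝ] F) (b : E) (R : ℝ) : Set E := {x | ‖A (x - b)‖ ≤ R}

section AffineBall

open scoped Pointwise

variable {E F : Type*} [NormedAddCommGroup E] [NormedSpace ℝ E] [NormedAddCommGroup F]
  [NormedSpace ℝ F]

lemma mem_affineBall {A : E →ₗ[ℝ] F} {b x : E} {R : ℝ} : x ∈ affineBall A b R ↔ ‖A (x - b)‖ ≤ R :=
  Iff.rfl

lemma affineBall_eq_preimage_smul (A : E →ₗ[ℝ] F) (b : E) {R : ℝ} (hR : 0 < R) :
    affineBall A b R = (fun x => x - b) ⁻¹' (R • affineBall A 0 1) := by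
  ext x
  rw [Set.mem_preimage, Set.mem_smul_set_iff_inv_smul_mem₀ hR.ne', mem_affineBall, mem_affineBall,
    sub_zero, map_smul, norm_smul, norm_inv, Real.norm_of_nonneg hR.le, inv_mul_le_one₀ hR]

lemma affineBall_smul (A : E →ₗ[ℝ] F) (b : E) {c : ℝ} (hc : 0 < c) (R : ℝ) :
    affineBall (c • A) b (c * R) = affineBall A b R := by
  ext x
  rw [mem_affineBall, mem_affineBall, LinearMap.smul_apply, norm_smul, Real.norm_of_nonneg hc.le,
    mul_le_mul_iff_right₀ hc]

variable [FiniteDimensional ℝ E]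

lemma isBounded_affineBall {A : E →ₗ[ℝ] F} (hA : Function.Injective A) (b : E) (R : ℝ) :
    Bornology.IsBounded (affineBall A b R) := by
  obtain ⟨K, -, hK⟩ := A.exists_antilipschitzWith (LinearMap.ker_eq_bot.mpr hA)
  refine (Metric.isBounded_closedBall (x := b) (r := K * R)).subset fun x hx => ?_
  rw [Metric.mem_closedBall]
  refine (hK.le_mul_dist x b).trans ?_
  rw [dist_eq_norm, ← map_sub]
  exact mul_le_mul_of_nonneg_left hx K.coe_nonneg

variable [MeasurableSpace E]

lemma measure_affineBall_lt_top (μ : Measure E) [IsFiniteMeasureOnCompacts μ] {A : E →ₗ[ℝ] F}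
    (hA : Function.Injective A) (b : E) (R : ℝ) : μ (affineBall A b R) < ⊤ :=
  (isBounded_affineBall hA b R).measure_lt_top

lemma measure_affineBall_pos (μ : Measure E) [μ.IsOpenPosMeasure] (A : E →ₗ[ℝ] F) (b : E) {R : ℝ}
    (hR : 0 < R) : 0 < μ (affineBall A b R) := by
  have hA := A.continuous_of_finiteDimensional
  have hopen : IsOpen {x | ‖A (x - b)‖ < R} := isOpen_lt (by fun_prop) continuous_const
  exact (hopen.measure_pos μ ⟨b, by simpa using hR⟩).trans_le
    (measure_mono fun _ => le_of_lt (α := ℝ))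

variable [BorelSpace E]

lemma measurableSet_affineBall (A : E →ₗ[ℝ] F) (b : E) (R : ℝ) :
    MeasurableSet (affineBall A b R) := by
  have hA := A.continuous_of_finiteDimensional
  exact (isClosed_le (by fun_prop) continuous_const).measurableSet

lemma measure_affineBall (μ : Measure E) [μ.IsAddHaarMeasure] (A : E →ₗ[ℝ] F) (b b' : E) {R : ℝ}
    (hR : 0 < R) :
    μ (affineBall A b R) =
      ENNReal.ofReal (R ^ Module.finrank ℝ E) * μ (affineBall A b' 1) := by
  have htranslate : ∀ (c : E) (S : Set E), μ ((fun x => x - c) ⁻¹' S) = μ S := fun c S => by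
    simp only [sub_eq_add_neg, measure_preimage_add_right]
  rw [affineBall_eq_preimage_smul A b hR, affineBall_eq_preimage_smul A b' one_pos, htranslate,
    htranslate, one_smul, Measure.addHaar_smul, abs_of_pos (by positivity)]

end AffineBall

/-- The mass of `f` on each parallelepiped `K` of `ℝ^{m+1}` is at most `l |K| ^ (1 / (m + 2))`. With
`l` the norm of `f` in `L^{(m+2)/(m+1)}` this is Hölder's inequality; a smaller `l` means that `f`
is not concentrated on any parallelepiped. -/
def BoxMassLE (m : ℕ) (f : Pt m → ℝ≥0∞) (l : ℝ≥0∞) : Prop :=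
  ∀ (A : Pt m →ₗ[ℝ] (Fin (m + 1) → ℝ)) (b : Pt m), Function.Injective A →
    ∫⁻ x in affineBall A b 1, f x ≤ l * volume (affineBall A b 1) ^ (1 / ((m : ℝ) + 2))

lemma BoxMassLE.mono {m : ℕ} {f g : Pt m → ℝ≥0∞} {l : ℝ≥0∞} (hg : BoxMassLE m g l) (hfg : f ≤ g) :
    BoxMassLE m f l :=
  fun A b hA => (lintegral_mono hfg).trans (hg A b hA)

lemma BoxMassLE.setLIntegral_le {m : ℕ} {f : Pt m → ℝ≥0∞} {l : ℝ≥0∞} (hf : BoxMassLE m f l)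
    {A : Pt m →ₗ[ℝ] (Fin (m + 1) → ℝ)} (hA : Function.Injective A) (b : Pt m) {R : ℝ}
    (hR : 0 < R) :
    ∫⁻ x in affineBall A b R, f x ≤ l * volume (affineBall A b R) ^ (1 / ((m : ℝ) + 2)) := by
  rw [← affineBall_smul A b (inv_pos.2 hR), inv_mul_cancel₀ hR.ne']
  exact hf _ b ((smul_right_injective _ (inv_ne_zero hR.ne')).comp hA)

section Cone

variable {m : ℕ}

/-- The first coordinate of a vector, as a linear map. -/
def Vec.head : Vec (m + 1) →ₗ[ℝ] ℝ where
  toFun y := y 0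
  map_add' _ _ := rfl
  map_smul' _ _ := rfl

/-- The vector without its first coordinate, as a linear map. -/
def Vec.tail : Vec (m + 1) →ₗ[ℝ] Vec m where
  toFun y := WithLp.toLp 2 (Fin.tail y.ofLp)
  map_add' _ _ := rfl
  map_smul' _ _ := rfl

lemma Vec.cons_tail (y : Vec (m + 1)) : Vec.cons (Vec.head y) (Vec.tail y) = y := by
  ext i
  refine Fin.cases ?_ (fun j => ?_) i <;> rfl

/-- The linear map whose balls around `0` contain the double cone of the directions `(1, w)` with
`w ∈ affineBall A b 1`, truncated to `|r| ≤ R`. -/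
def coneMap (A : Pt m →ₗ[ℝ] (Fin (m + 1) → ℝ)) (b : Pt m) :
    Pt (m + 1) →ₗ[ℝ] (Fin (m + 2) → ℝ) :=
  LinearMap.vecCons (Vec.head ∘ₗ LinearMap.fst ℝ _ _)
    (A ∘ₗ (LinearMap.prodMap Vec.tail LinearMap.id -
      (Vec.head ∘ₗ LinearMap.fst ℝ _ _).smulRight b))

variable (A : Pt m →ₗ[ℝ] (Fin (m + 1) → ℝ)) (b : Pt m)

lemma coneMap_cons (r : ℝ) (w : Pt m) :
    coneMap A b (Vec.cons r w.1, w.2) = Matrix.vecCons r (A (w - r • b)) := rfl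

lemma coneMap_injective {A : Pt m →ₗ[ℝ] (Fin (m + 1) → ℝ)} (hA : Function.Injective A) :
    Function.Injective (coneMap A b) := by
  refine (injective_iff_map_eq_zero _).2 fun y hy => ?_
  obtain ⟨r, w, rfl⟩ : ∃ r, ∃ w : Pt m, y = (Vec.cons r w.1, w.2) :=
    ⟨Vec.head y.1, (Vec.tail y.1, y.2), by rw [Vec.cons_tail]⟩
  rw [coneMap_cons, Matrix.cons_eq_zero_iff] at hy
  obtain ⟨rfl, hAw⟩ := hy
  obtain rfl : w = 0 := (map_eq_zero_iff A hA).1 (by simpa using hAw)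
  ext i
  · exact Fin.cases rfl (fun _ => rfl) i
  · rfl

lemma cons_mem_affineBall_coneMap {r R : ℝ} (hR : 0 ≤ R) {w : Pt m} :
    (Vec.cons r w.1, w.2) ∈ affineBall (coneMap A b) 0 R ↔
      |r| ≤ R ∧ w ∈ affineBall A (r • b) R := by
  rw [mem_affineBall, sub_zero, coneMap_cons, pi_norm_le_iff_of_nonneg hR, Fin.forall_fin_succ,
    mem_affineBall, pi_norm_le_iff_of_nonneg hR]
  rfl

lemma volume_eq_lintegral_cons {S : Set (Pt (m + 1))} (hS : MeasurableSet S) :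
    volume S = ∫⁻ r : ℝ, volume {w : Pt m | (Vec.cons r w.1, w.2) ∈ S} := by
  rw [← lintegral_indicator_one hS, lintegral_pt_cons (measurable_one.indicator hS)]
  refine lintegral_congr fun r => ?_
  have hcons : Measurable fun w : Pt m => (Vec.cons r w.1, w.2) := by fun_prop
  exact lintegral_indicator_one (hcons hS)

lemma volume_affineBall_coneMap (p : Pt (m + 1)) {R : ℝ} (hR : 0 < R) :
    volume (affineBall (coneMap A b) p R) =
      ENNReal.ofReal (2 * R ^ (m + 2)) * volume (affineBall A b 1) := by
  have hfiber : ∀ r : ℝ, volume {w : Pt m | (Vec.cons r w.1, w.2) ∈ affineBall (coneMap A b) 0 R} =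
      (Set.Icc (-R) R).indicator
        (fun _ => ENNReal.ofReal (R ^ (m + 1)) * volume (affineBall A b 1)) r := by
    intro r
    simp only [cons_mem_affineBall_coneMap A b hR.le, Set.indicator_apply, Set.mem_Icc, ← abs_le]
    split_ifs with hr
    · simpa [hr] using measure_affineBall volume A (r • b) b hR
    · simp [hr]
  have hcenter := measure_affineBall volume (coneMap A b) p 0 hR
  rw [← measure_affineBall volume (coneMap A b) 0 0 hR] at hcenter
  rw [hcenter, volume_eq_lintegral_cons (measurableSet_affineBall _ _ _), lintegral_congr hfiber,
    lintegral_indicator_const measurableSet_Icc, Real.volume_Icc, mul_comm, ← mul_assoc,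
    ← ENNReal.ofReal_mul (by linarith)]
  congr 2
  ring

lemma add_smul_mem_affineBall_coneMap (p : Pt (m + 1)) {r R : ℝ} (hr : |r| ≤ R) {w : Pt m}
    (hw : w ∈ affineBall A b 1) :
    p + r • (Vec.cons 1 w.1, w.2) ∈ affineBall (coneMap A b) p R := by
  have hR : 0 ≤ R := (abs_nonneg r).trans hr
  rw [mem_affineBall, add_sub_cancel_left, map_smul, coneMap_cons, one_smul, norm_smul]
  have hnorm : ‖(Matrix.vecCons 1 (A (w - b)) : Fin (m + 2) → ℝ)‖ ≤ 1 := by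
    rw [pi_norm_le_iff_of_nonneg zero_le_one, Fin.forall_fin_succ]
    exact ⟨by simp, fun i => (norm_le_pi_norm _ i).trans hw⟩
  exact (mul_le_mul hr hnorm (norm_nonneg _) hR).trans_eq (mul_one R)

end Cone

section FanProjection

variable {m : ℕ} {g : Pt (m + 1) → ℝ≥0∞}

lemma lintegral_pt_projective_at {h : Pt (m + 1) → ℝ≥0∞} (hh : Measurable h) (p : Pt (m + 1)) :
    ∫⁻ q, h q = ∫⁻ w : Pt m, ∫⁻ r : ℝ,
      ENNReal.ofReal (|r| ^ (m + 1)) * h (p + r • (Vec.cons 1 w.1, w.2)) := by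
  rw [← lintegral_add_left_eq_self h p, lintegral_pt_projective (by fun_prop)]

lemma setLIntegral_fan_middle_le (hg : Measurable g) (p : Pt (m + 1))
    (A : Pt m →ₗ[ℝ] (Fin (m + 1) → ℝ)) (b : Pt m) {ρ R : ℝ} (hρ : 0 < ρ) :
    ∫⁻ w in affineBall A b 1, ∫⁻ r in {r : ℝ | ρ < |r| ∧ |r| ≤ R},
        ENNReal.ofReal (|r| ^ m) * g (p + r • (Vec.cons 1 w.1, w.2)) ≤
      ENNReal.ofReal ρ⁻¹ * ∫⁻ x in affineBall (coneMap A b) p R, g x := by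
  have hK := measurableSet_affineBall (coneMap A b) p R
  have hS : MeasurableSet {r : ℝ | ρ < |r| ∧ |r| ≤ R} :=
    (measurableSet_lt measurable_const measurable_norm).inter
      (measurableSet_le measurable_norm measurable_const)
  rw [← lintegral_indicator hK, lintegral_pt_projective_at (hg.indicator hK) p,
    ← lintegral_const_mul' _ _ ofReal_ne_top]
  refine le_trans ?_ (setLIntegral_le_lintegral (affineBall A b 1) _)
  refine setLIntegral_mono' (measurableSet_affineBall _ _ _) fun w hw => ?_
  rw [← lintegral_const_mul' _ _ ofReal_ne_top]
  refine le_trans ?_ (setLIntegral_le_lintegral {r : ℝ | ρ < |r| ∧ |r| ≤ R} _)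
  refine setLIntegral_mono' hS fun r hr => ?_
  rw [Set.indicator_of_mem (add_smul_mem_affineBall_coneMap A b p hr.2 hw), ← mul_assoc,
    ← ENNReal.ofReal_mul (by positivity)]
  gcongr
  rw [pow_succ, mul_left_comm]
  refine le_mul_of_one_le_right (by positivity) ?_
  rw [inv_mul_eq_div, one_le_div hρ]
  exact hr.1.le

lemma setLIntegral_fan_far_le (hg : Measurable g)
    (hnorm : ∫⁻ x, g x ^ (((m : ℝ) + 3) / (m + 2)) ≤ 1) (p : Pt (m + 1)) (K : Set (Pt m)) {R : ℝ}
    (hR : 0 < R) :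
    ∫⁻ w in K, ∫⁻ r in {r : ℝ | R < |r|},
        ENNReal.ofReal (|r| ^ m) * g (p + r • (Vec.cons 1 w.1, w.2)) ≤
      (volume K * ENNReal.ofReal (2 / R)) ^ (1 / ((m : ℝ) + 3)) := by
  have hfar := lintegral_setLIntegral_lt_abs_pow_mul_le (volume.restrict K) m
    (g := fun q => g (p + q.2 • (Vec.cons 1 q.1.1, q.1.2))) (by fun_prop) hR
  rw [Measure.restrict_apply_univ] at hfar
  refine hfar.trans (mul_le_of_le_one_left' (ENNReal.rpow_le_one ?_ (by positivity)))
  rw [lintegral_pt_projective_at (by fun_prop) p] at hnorm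
  exact (setLIntegral_le_lintegral _ _).trans hnorm

lemma setLIntegral_fanProjection_le_add (hg : Measurable g) {s : ℝ≥0∞} (hs : ∀ x, g x ≤ s)
    (hnorm : ∫⁻ x, g x ^ (((m : ℝ) + 3) / (m + 2)) ≤ 1) (p : Pt (m + 1))
    (A : Pt m →ₗ[ℝ] (Fin (m + 1) → ℝ)) (b : Pt m) {ρ R : ℝ} (hρ : 0 < ρ) (hR : 0 < R) :
    ∫⁻ w in affineBall A b 1, fanProjection g p w ≤
      ENNReal.ofReal (2 * ρ ^ (m + 1)) * s * volume (affineBall A b 1) +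
        ENNReal.ofReal ρ⁻¹ * (∫⁻ x in affineBall (coneMap A b) p R, g x) +
        (volume (affineBall A b 1) * ENNReal.ofReal (2 / R)) ^ (1 / ((m : ℝ) + 3)) := by
  set K := affineBall A b 1
  set φ : Pt m → ℝ → ℝ≥0∞ := fun w r =>
    ENNReal.ofReal (|r| ^ m) * g (p + r • (Vec.cons 1 w.1, w.2))
  have hφ : Measurable fun q : Pt m × ℝ => φ q.1 q.2 := by fun_prop
  have hpart : ∀ S : Set ℝ, Measurable fun w => ∫⁻ r in S, φ w r := fun S =>
    hφ.lintegral_prod_right'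
  have hcover : ({r : ℝ | |r| ≤ ρ} ∪ {r : ℝ | ρ < |r| ∧ |r| ≤ R}) ∪ {r : ℝ | R < |r|} =
      Set.univ := by
    ext r
    simp only [Set.mem_union, Set.mem_ofPred_eq, Set.mem_univ, iff_true]
    grind
  have hsplit : ∀ w, fanProjection g p w ≤ (∫⁻ r in {r : ℝ | |r| ≤ ρ}, φ w r) +
      (∫⁻ r in {r : ℝ | ρ < |r| ∧ |r| ≤ R}, φ w r) + ∫⁻ r in {r : ℝ | R < |r|}, φ w r := by
    intro w
    rw [fanProjection, ← setLIntegral_univ, ← hcover]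
    exact (lintegral_union_le _ _ _).trans (add_le_add_left (lintegral_union_le _ _ _) _)
  have hnear : ∫⁻ w in K, ∫⁻ r in {r : ℝ | |r| ≤ ρ}, φ w r ≤
      ENNReal.ofReal (2 * ρ ^ (m + 1)) * s * volume K :=
    (lintegral_mono fun _ => setLIntegral_abs_le_pow_mul_le m (fun _ => hs _) hρ).trans_eq
      (setLIntegral_const _ _)
  refine (lintegral_mono hsplit).trans ?_
  rw [lintegral_add_left (by fun_prop), lintegral_add_left (hpart _)]
  exact add_le_add (add_le_add hnear (setLIntegral_fan_middle_le hg p A b hρ))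
    (setLIntegral_fan_far_le hg hnorm p K hR)

lemma lintegral_fanProjection_rpow_le (hg : Measurable g) {σ : ℝ} (hσ : 0 < σ)
    (hs : ∀ x, g x ≤ ENNReal.ofReal (σ ^ ((m + 2) ^ 2))) (p : Pt (m + 1)) :
    ∫⁻ w, ((ENNReal.ofReal (4 * σ))⁻¹ * fanProjection g p w) ^ (((m : ℝ) + 2) / (m + 1)) ≤
      ∫⁻ x, g x ^ (((m : ℝ) + 3) / (m + 2)) := by
  rw [lintegral_pt_projective_at (by fun_prop) p]
  refine lintegral_mono fun w => ?_
  have hline := lintegral_abs_pow_mul_le (m := m)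
    (g := fun r => g (p + r • (Vec.cons 1 w.1, w.2))) (by fun_prop) hσ fun r => hs _
  rw [← ENNReal.le_rpow_inv_iff (by positivity), inv_div,
    ENNReal.inv_mul_le_iff (by simpa using hσ) ofReal_ne_top]
  exact hline

lemma fan_near_bound_le {υ σ κ : ℝ} (hυ : 0 < υ) (hσ : 0 < σ) (hκ : 0 < κ) (hκ1 : κ ≤ 1) :
    2 * ((κ / (υ * σ)) ^ (m + 3)) ^ (m + 1) * σ ^ ((m + 2) ^ 2) * υ ^ ((m + 3) * (m + 2)) ≤
      2 * σ * κ * υ ^ (m + 3) := by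
  have hσpow : σ ^ ((m + 2) ^ 2) = (σ ^ (m + 3)) ^ (m + 1) * σ := by ring
  have hυpow : υ ^ ((m + 3) * (m + 2)) = (υ ^ (m + 3)) ^ (m + 1) * υ ^ (m + 3) := by ring
  calc 2 * ((κ / (υ * σ)) ^ (m + 3)) ^ (m + 1) * σ ^ ((m + 2) ^ 2) * υ ^ ((m + 3) * (m + 2))
      = 2 * σ * κ ^ ((m + 3) * (m + 1)) * υ ^ (m + 3) := by
        rw [hσpow, hυpow, pow_mul κ, div_pow, mul_pow, div_pow, mul_pow]
        field_simp
    _ ≤ 2 * σ * κ * υ ^ (m + 3) := by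
        gcongr
        exact pow_le_of_le_one hκ.le hκ1 (by positivity)

lemma fan_middle_bound_le {υ σ κ : ℝ} (hυ : 0 < υ) (hσ : 0 < σ) (hκ : 0 < κ) (hκ1 : κ ≤ 1) :
    ((κ / (υ * σ)) ^ (m + 3))⁻¹ * (κ ^ (3 * (m + 3)) * (2 * (1 / (κ * υ * σ)) ^ (m + 2) *
      υ ^ (m + 2))) ≤ 2 * σ * κ * υ ^ (m + 3) := by
  have hκpow : κ ^ (3 * (m + 3)) = κ ^ (m + 3) * κ ^ (m + 2) * κ ^ (m + 4) := by ring
  calc ((κ / (υ * σ)) ^ (m + 3))⁻¹ * (κ ^ (3 * (m + 3)) * (2 * (1 / (κ * υ * σ)) ^ (m + 2) *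
        υ ^ (m + 2)))
      = 2 * σ * κ ^ (m + 4) * υ ^ (m + 3) := by
        rw [hκpow, div_pow, one_div_pow, mul_pow, mul_pow, mul_pow]
        field_simp
        exact pow_succ _ _
    _ ≤ 2 * σ * κ * υ ^ (m + 3) := by
        gcongr
        exact pow_le_of_le_one hκ.le hκ1 (by positivity)

lemma ofReal_two_mul_pow_mul_rpow_le {x y : ℝ} (hx : 0 ≤ x) (hy : 0 ≤ y) {k : ℕ} (hk : k ≠ 0) :
    ENNReal.ofReal (2 * (x ^ k * y ^ k)) ^ (1 / (k : ℝ)) ≤ ENNReal.ofReal (2 * x * y) := by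
  rw [← pow_one (2 * x * y), ← ofReal_pow_rpow (k := k) (t := 1 / (k : ℝ)) (by positivity)
    (by positivity) (by push_cast; field_simp), mul_assoc, mul_pow, mul_pow]
  gcongr
  exact le_self_pow₀ one_le_two hk

lemma fan_far_bound_le {υ σ κ : ℝ} (hυ : 0 < υ) (hσ : 0 < σ) (hκ : 0 < κ) :
    (ENNReal.ofReal (υ ^ ((m + 3) * (m + 2))) *
        ENNReal.ofReal (2 / (1 / (κ * υ * σ)) ^ (m + 3))) ^ (1 / ((m : ℝ) + 3)) ≤
      ENNReal.ofReal (2 * σ * κ * υ ^ (m + 3)) := by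
  have hexp : (m : ℝ) + 3 = (m + 3 : ℕ) := by push_cast; ring
  have hpow : υ ^ ((m + 3) * (m + 2)) * (2 / (1 / (κ * υ * σ)) ^ (m + 3)) =
      2 * ((κ * υ * σ) ^ (m + 3) * (υ ^ (m + 2)) ^ (m + 3)) := by
    rw [one_div_pow, div_div_eq_mul_div, div_one, ← pow_mul]
    ring
  rw [← ENNReal.ofReal_mul (by positivity), hexp, hpow]
  refine (ofReal_two_mul_pow_mul_rpow_le (by positivity) (by positivity)
    (by positivity)).trans_eq ?_
  ring_nf

lemma BoxMassLE.setLIntegral_coneMap_le {l : ℝ≥0∞} (hmass : BoxMassLE (m + 1) g l)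
    {A : Pt m →ₗ[ℝ] (Fin (m + 1) → ℝ)} (hA : Function.Injective A) (b : Pt m) (p : Pt (m + 1))
    {υ x : ℝ} (hυ : 0 < υ) (hx : 0 < x)
    (hvol : volume (affineBall A b 1) = ENNReal.ofReal (υ ^ ((m + 3) * (m + 2)))) :
    ∫⁻ y in affineBall (coneMap A b) p (x ^ (m + 3)), g y ≤
      l * ENNReal.ofReal (2 * x ^ (m + 2) * υ ^ (m + 2)) := by
  have hcone := hmass.setLIntegral_le (coneMap_injective b hA) p (pow_pos hx (m + 3))
  have hexp : (((m + 1 : ℕ) : ℝ) + 2) = (m + 3 : ℕ) := by push_cast; ring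
  have hpow : 2 * (x ^ (m + 3)) ^ (m + 2) * υ ^ ((m + 3) * (m + 2)) =
      2 * ((x ^ (m + 2)) ^ (m + 3) * (υ ^ (m + 2)) ^ (m + 3)) := by ring
  rw [volume_affineBall_coneMap A b p (pow_pos hx (m + 3)), hvol,
    ← ENNReal.ofReal_mul (by positivity), hexp, hpow] at hcone
  exact hcone.trans (mul_le_mul_right
    (ofReal_two_mul_pow_mul_rpow_le (by positivity) (by positivity) (by positivity)) _)

-- The radii separating the near, middle and far part of each line through `p` are chosen so that
-- all three contribute the same amount.
theorem BoxMassLE.fanProjection (hg : Measurable g) {σ : ℝ} (hσ : 0 < σ)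
    (hs : ∀ x, g x ≤ ENNReal.ofReal (σ ^ ((m + 2) ^ 2)))
    (hnorm : ∫⁻ x, g x ^ (((m : ℝ) + 3) / (m + 2)) ≤ 1) {κ : ℝ} (hκ : 0 < κ) (hκ1 : κ ≤ 1)
    (hmass : BoxMassLE (m + 1) g (ENNReal.ofReal (κ ^ (3 * (m + 3))))) (p : Pt (m + 1)) :
    BoxMassLE m (fun w => (ENNReal.ofReal (6 * σ))⁻¹ * fanProjection g p w)
      (ENNReal.ofReal κ) := by
  intro A b hA
  obtain ⟨υ, hυ, hvol⟩ := exists_eq_ofReal_pow (measure_affineBall_pos volume A b one_pos).ne'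
    (measure_affineBall_lt_top volume hA b 1).ne (n := (m + 3) * (m + 2)) (by positivity)
  have hnear : ENNReal.ofReal (2 * ((κ / (υ * σ)) ^ (m + 3)) ^ (m + 1)) *
      ENNReal.ofReal (σ ^ ((m + 2) ^ 2)) * volume (affineBall A b 1) ≤
      ENNReal.ofReal (2 * σ * κ * υ ^ (m + 3)) := by
    rw [hvol, ← ENNReal.ofReal_mul (by positivity), ← ENNReal.ofReal_mul (by positivity)]
    exact ENNReal.ofReal_le_ofReal (fan_near_bound_le hυ hσ hκ hκ1)
  have hmiddle : ENNReal.ofReal ((κ / (υ * σ)) ^ (m + 3))⁻¹ *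
      (∫⁻ x in affineBall (coneMap A b) p ((1 / (κ * υ * σ)) ^ (m + 3)), g x) ≤
      ENNReal.ofReal (2 * σ * κ * υ ^ (m + 3)) := by
    refine (mul_le_mul_right (hmass.setLIntegral_coneMap_le hA b p hυ (by positivity) hvol)
      _).trans ?_
    rw [← ENNReal.ofReal_mul (by positivity), ← ENNReal.ofReal_mul (by positivity)]
    exact ENNReal.ofReal_le_ofReal (fan_middle_bound_le hυ hσ hκ hκ1)
  have hfar : (volume (affineBall A b 1) * ENNReal.ofReal (2 / (1 / (κ * υ * σ)) ^ (m + 3))) ^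
      (1 / ((m : ℝ) + 3)) ≤ ENNReal.ofReal (2 * σ * κ * υ ^ (m + 3)) :=
    hvol ▸ fan_far_bound_le hυ hσ hκ
  have hvolroot : volume (affineBall A b 1) ^ (1 / ((m : ℝ) + 2)) =
      ENNReal.ofReal (υ ^ (m + 3)) :=
    hvol ▸ ofReal_pow_rpow hυ.le (by positivity) (by push_cast; field_simp)
  rw [lintegral_const_mul' _ _ (by simpa using hσ),
    ENNReal.inv_mul_le_iff (by simpa using hσ) ofReal_ne_top, hvolroot]
  refine ((setLIntegral_fanProjection_le_add hg hs hnorm p A b (by positivity)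
    (by positivity)).trans (add_le_add (add_le_add hnear hmiddle) hfar)).trans_eq ?_
  simp_rw [← ENNReal.ofReal_mul hκ.le]
  rw [← ENNReal.ofReal_add (by positivity) (by positivity),
    ← ENNReal.ofReal_add (by positivity) (by positivity), ← ENNReal.ofReal_mul (by positivity)]
  ring_nf

end FanProjection

section PowerGain

variable {m : ℕ} {θ C : ℝ}

/-- A power gain for the hyperplane transform: normalised functions of mass at most `l` on boxes,
relative to the critical power of the volume, have transforms of size `C * l ^ θ`. This is the
contrapositive form in which the theorem is proved by induction on the dimension. -/
def HasPowerGain (m : ℕ) (θ C : ℝ) : Prop :=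
  ∀ f : Pt m → ℝ≥0∞, Measurable f → ∀ l : ℝ, 0 < l → l ≤ 1 →
    ∫⁻ x, f x ^ (((m : ℝ) + 2) / (m + 1)) ≤ 1 → BoxMassLE m f (ENNReal.ofReal l) →
    ∫⁻ x, hyperplaneTransform f x ^ (m + 2) ≤ ENNReal.ofReal (C * l ^ θ)

lemma HasPowerGain.pencilMoment_le (hgain : HasPowerGain m θ C) {g : Pt (m + 1) → ℝ≥0∞}
    (hg : Measurable g) {σ : ℝ} (hσ : 0 < σ) (hs : ∀ x, g x ≤ ENNReal.ofReal (σ ^ ((m + 2) ^ 2)))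
    (hnorm : ∫⁻ x, g x ^ (((m : ℝ) + 3) / (m + 2)) ≤ 1) {κ : ℝ} (hκ : 0 < κ) (hκ1 : κ ≤ 1)
    (hmass : BoxMassLE (m + 1) g (ENNReal.ofReal (κ ^ (3 * (m + 3))))) (p : Pt (m + 1)) :
    pencilMoment (m + 2) g p ≤
      ENNReal.ofReal ((6 * σ) ^ (m + 2)) * ENNReal.ofReal (C * κ ^ θ) := by
  set φ : Pt m → ℝ≥0∞ := fun w => (ENNReal.ofReal (6 * σ))⁻¹ * fanProjection g p w
  have hφ : Measurable φ := by fun_prop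
  have hφnorm : ∫⁻ w, φ w ^ (((m : ℝ) + 2) / (m + 1)) ≤ 1 := by
    refine le_trans (lintegral_mono fun w => ?_)
      ((lintegral_fanProjection_rpow_le hg hσ hs p).trans hnorm)
    dsimp only [φ]
    gcongr
    norm_num
  have hbound := hgain φ hφ κ hκ hκ1 hφnorm (.fanProjection hg hσ hs hnorm hκ hκ1 hmass p)
  have hscale : fanProjection g p = fun w => ENNReal.ofReal (6 * σ) * φ w := by
    ext w
    exact (ENNReal.mul_inv_cancel_left (by simpa using hσ) ofReal_ne_top).symm
  rw [pencilMoment_eq_lintegral_fanProjection hg, hscale]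
  simp_rw [hyperplaneTransform_const_mul _ hφ, mul_pow]
  rw [lintegral_const_mul' _ _ (by finiteness), ← mul_pow, ENNReal.ofReal_pow (by positivity)]
  gcongr

lemma HasPowerGain.mul_pencilMoment_truncLE_le (hgain : HasPowerGain m θ C)
    {f : Pt (m + 1) → ℝ≥0∞} (hf : Measurable f)
    (hnorm : ∫⁻ x, f x ^ (((m : ℝ) + 3) / (m + 2)) ≤ 1) {κ : ℝ} (hκ : 0 < κ) (hκ1 : κ ≤ 1)
    (hmass : BoxMassLE (m + 1) f (ENNReal.ofReal (κ ^ (3 * (m + 3))))) {p : Pt (m + 1)}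
    (hp : f p ≠ ⊤) :
    f p * pencilMoment (m + 2) (truncLE f (f p)) p ≤
      ENNReal.ofReal (6 ^ (m + 2)) * ENNReal.ofReal (C * κ ^ θ) *
        f p ^ (((m : ℝ) + 3) / (m + 2)) := by
  rcases eq_or_ne (f p) 0 with h0 | h0
  · rw [h0, zero_mul]
    exact zero_le
  obtain ⟨σ, hσ, hfσ⟩ := exists_eq_ofReal_pow h0 hp (n := (m + 2) ^ 2) (by positivity)
  have hpencil := hgain.pencilMoment_le (g := truncLE f (f p)) (by fun_prop) hσ
    (fun x => (truncLE_apply_le _ _ _).trans_eq hfσ)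
    ((lintegral_mono fun x => by gcongr; exact truncLE_le_self _ _ _).trans hnorm) hκ hκ1
    (hmass.mono fun x => truncLE_le_self _ _ _) p
  have hroot : f p ^ (1 / ((m : ℝ) + 2)) = ENNReal.ofReal (σ ^ (m + 2)) :=
    hfσ ▸ ofReal_pow_rpow hσ.le (by positivity) (by push_cast; field_simp)
  have hsplit : f p ^ (((m : ℝ) + 3) / (m + 2)) = f p * ENNReal.ofReal (σ ^ (m + 2)) := by
    have hexp : ((m : ℝ) + 3) / (m + 2) = 1 + 1 / (m + 2) := by field_simp; ring
    rw [hexp, ENNReal.rpow_add _ _ h0 hp, ENNReal.rpow_one, hroot]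
  calc f p * pencilMoment (m + 2) (truncLE f (f p)) p
      ≤ f p * (ENNReal.ofReal ((6 * σ) ^ (m + 2)) * ENNReal.ofReal (C * κ ^ θ)) := by gcongr
    _ = _ := by
      rw [hsplit, mul_pow, ENNReal.ofReal_mul (by positivity)]
      ring

theorem HasPowerGain.succ (hgain : HasPowerGain m θ C) :
    HasPowerGain (m + 1) (θ / (3 * (m + 3))) (12 ^ (m + 2) * C) := by
  intro f hf l hl hl1 hnorm hmass
  set κ : ℝ := l ^ (1 / (3 * ((m : ℝ) + 3))) with hκ_def
  have hκ : 0 < κ := by positivity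
  have hκ1 : κ ≤ 1 := Real.rpow_le_one hl.le hl1 (by positivity)
  have hκl : κ ^ (3 * (m + 3)) = l := by
    rw [hκ_def, ← Real.rpow_natCast, ← Real.rpow_mul hl.le]
    push_cast
    rw [one_div_mul_cancel (by positivity), Real.rpow_one]
  have hκθ : κ ^ θ = l ^ (θ / (3 * ((m : ℝ) + 3))) := by
    rw [hκ_def, ← Real.rpow_mul hl.le, one_div_mul_eq_div]
  have hexp : (((m + 1 : ℕ) : ℝ) + 2) / ((m + 1 : ℕ) + 1) = ((m : ℝ) + 3) / (m + 2) := by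
    push_cast
    ring_nf
  rw [hexp] at hnorm
  rw [← hκl] at hmass
  have hfin : ∀ᵐ p, f p ≠ ⊤ := by
    filter_upwards [ae_lt_top (hf.pow_const _) (hnorm.trans_lt one_lt_top).ne] with p hp htop
    rw [htop, ENNReal.top_rpow_of_pos (by positivity)] at hp
    exact hp.false
  calc ∫⁻ x, hyperplaneTransform f x ^ (m + 1 + 2)
      ≤ 2 ^ (m + 2) * ∫⁻ p, f p * pencilMoment (m + 2) (truncLE f (f p)) p :=
        lintegral_hyperplaneTransform_pow_succ_le hf (m + 2)
    _ ≤ 2 ^ (m + 2) * ∫⁻ p, ENNReal.ofReal (6 ^ (m + 2)) * ENNReal.ofReal (C * κ ^ θ) *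
          f p ^ (((m : ℝ) + 3) / (m + 2)) := by
        gcongr 2 ^ (m + 2) * ?_
        refine lintegral_mono_ae (hfin.mono fun p hp => ?_)
        exact hgain.mul_pencilMoment_truncLE_le hf hnorm hκ hκ1 hmass hp
    _ ≤ 2 ^ (m + 2) * (ENNReal.ofReal (6 ^ (m + 2)) * ENNReal.ofReal (C * κ ^ θ)) := by
        rw [lintegral_const_mul _ (by fun_prop)]
        gcongr 2 ^ (m + 2) * ?_
        exact mul_le_of_le_one_right' hnorm
    _ = ENNReal.ofReal (12 ^ (m + 2) * C * l ^ (θ / (3 * ((m : ℝ) + 3)))) := by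
        have htwo : (2 : ℝ≥0∞) ^ (m + 2) = ENNReal.ofReal (2 ^ (m + 2)) := by
          rw [ENNReal.ofReal_pow (by norm_num), ENNReal.ofReal_ofNat]
        rw [hκθ, htwo, ← mul_assoc, ← ENNReal.ofReal_mul (by positivity),
          ← ENNReal.ofReal_mul (by positivity), ← mul_pow]
        norm_num [mul_assoc]

theorem HasPowerGain.exists_of_one (hθ : 0 < θ) (hC : 0 ≤ C) (hgain : HasPowerGain 1 θ C) (n : ℕ) :
    ∃ θ' C' : ℝ, 0 < θ' ∧ 0 ≤ C' ∧ HasPowerGain (n + 1) θ' C' := by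
  induction n with
  | zero => exact ⟨θ, C, hθ, hC, hgain⟩
  | succ n ih =>
    obtain ⟨θ', C', hθ', hC', hgain'⟩ := ih
    exact ⟨_, _, by positivity, by positivity, hgain'.succ⟩

end PowerGain

/-- The slope and intercept of the line of slope `a` through the point `p` of the plane. -/
def lineThrough (p : ℝ × ℝ) (a : ℝ) : ℝ × ℝ := (a, p.2 - a * p.1)

section Plane

lemma lineThrough_add_smul (p : ℝ × ℝ) (a r : ℝ) :
    lineThrough (p + r • (1, a)) a = lineThrough p a :=
  Prod.ext rfl (by
    simp only [lineThrough, Prod.fst_add, Prod.snd_add, Prod.smul_mk, smul_eq_mul]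
    ring)

@[fun_prop]
lemma measurable_lineThrough {α : Type*} [MeasurableSpace α] {p : α → ℝ × ℝ} {a : α → ℝ}
    (hp : Measurable p) (ha : Measurable a) : Measurable fun t => lineThrough (p t) (a t) := by
  unfold lineThrough
  fun_prop

lemma real_inner_eq_mul (a y : ℝ) : ⟪a, y⟫ = a * y := mul_comm y a

lemma pencilMoment_real (k : ℕ) (g : ℝ × ℝ → ℝ≥0∞) (p : ℝ × ℝ) :
    pencilMoment k g p = ∫⁻ a, hyperplaneTransform g (lineThrough p a) ^ k := by
  simp only [pencilMoment, lineThrough, real_inner_eq_mul]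

lemma hyperplaneTransform_real (g : ℝ × ℝ → ℝ≥0∞) (x : ℝ × ℝ) :
    hyperplaneTransform g x = ∫⁻ y, g (y, x.2 + x.1 * y) := by
  simp only [hyperplaneTransform, real_inner_eq_mul]

lemma hyperplaneTransform_lineThrough (g : ℝ × ℝ → ℝ≥0∞) (p : ℝ × ℝ) (a : ℝ) :
    hyperplaneTransform g (lineThrough p a) = ∫⁻ r : ℝ, g (p + r • (1, a)) := by
  have h := hyperplaneTransform_through g p a
  simp only [real_inner_eq_mul] at h
  rw [lineThrough, h]
  refine lintegral_congr fun r => congrArg g (Prod.ext ?_ ?_) <;> simp [mul_comm]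

lemma lintegral_incidence_swap_real {Φ : (ℝ × ℝ) × (ℝ × ℝ) → ℝ≥0∞} (hΦ : Measurable Φ) :
    ∫⁻ x : ℝ × ℝ, ∫⁻ y : ℝ, Φ ((y, x.2 + x.1 * y), x) =
      ∫⁻ p : ℝ × ℝ, ∫⁻ a : ℝ, Φ (p, lineThrough p a) := by
  simpa only [lineThrough, real_inner_eq_mul] using lintegral_incidence_swap hΦ

lemma lintegral_eq_lintegral_lineThrough {h : ℝ × ℝ → ℝ≥0∞} (hh : Measurable h) (p : ℝ × ℝ) :
    ∫⁻ q, h q = ∫⁻ a : ℝ, ∫⁻ r : ℝ, ENNReal.ofReal |r| * h (p + r • (1, a)) := by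
  have hpolar := lintegral_lintegral_eq_projective (volume : Measure ℝ)
    (h := fun q => h (p + q)) (by fun_prop)
  rw [← lintegral_add_left_eq_self _ p, Measure.volume_eq_prod, lintegral_prod _ (by fun_prop),
    hpolar]
  simp only [Module.finrank_self, pow_one, Prod.smul_mk, smul_eq_mul, mul_one]

lemma lintegral_hyperplaneTransform_abs_sub_mul {g : ℝ × ℝ → ℝ≥0∞} (hg : Measurable g)
    (p : ℝ × ℝ) :
    ∫⁻ a, hyperplaneTransform (fun q => ENNReal.ofReal |q.1 - p.1| * g q) (lineThrough p a) =
      ∫⁻ q, g q := by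
  simp only [hyperplaneTransform_lineThrough, lintegral_eq_lintegral_lineThrough hg p,
    Prod.fst_add, Prod.smul_mk, smul_eq_mul, mul_one, add_sub_cancel_left]

lemma lintegral_mul_hyperplaneTransform_lineThrough {F g : ℝ × ℝ → ℝ≥0∞} (hF : Measurable F)
    (hg : Measurable g) (p : ℝ × ℝ) :
    ∫⁻ a, F (lineThrough p a) * hyperplaneTransform g (lineThrough p a) =
      ∫⁻ q : ℝ × ℝ, ENNReal.ofReal |q.1 - p.1|⁻¹ *
        (g q * F (lineThrough q ((q.2 - p.2) / (q.1 - p.1)))) := by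
  rw [lintegral_eq_lintegral_lineThrough (by fun_prop) p]
  refine lintegral_congr fun a => ?_
  rw [hyperplaneTransform_lineThrough, ← lintegral_const_mul _ (by fun_prop)]
  refine lintegral_congr_ae ?_
  filter_upwards [Measure.ae_ne volume 0] with r hr
  have hslope : ((p + r • (1, a)).2 - p.2) / ((p + r • (1, a)).1 - p.1) = a := by
    simp [hr]
  have hcancel : ENNReal.ofReal |r| * ENNReal.ofReal |(p + r • (1, a)).1 - p.1|⁻¹ = 1 := by
    rw [Prod.fst_add, add_sub_cancel_left, ← ENNReal.ofReal_mul (abs_nonneg r)]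
    simp [hr]
  rw [hslope, lineThrough_add_smul, ← mul_assoc, hcancel, one_mul, mul_comm]

lemma pencilMoment_two_le {g : ℝ × ℝ → ℝ≥0∞} (hg : Measurable g) {t : ℝ} (ht : 0 < t)
    (hgt : ∀ q, g q ≤ ENNReal.ofReal (t ^ 2)) (p : ℝ × ℝ) :
    pencilMoment 2 g p ≤ ENNReal.ofReal (16 * t) * ∫⁻ q, g q ^ (3 / 2 : ℝ) := by
  have hσ : √t ^ 2 ^ 2 = t ^ 2 := by rw [sq 2, pow_mul, Real.sq_sqrt ht.le]
  rw [pencilMoment_real, lintegral_eq_lintegral_lineThrough (by fun_prop) p,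
    ← lintegral_const_mul' _ _ ENNReal.ofReal_ne_top]
  refine lintegral_mono fun a => ?_
  have hline := lintegral_abs_pow_mul_le (m := 0) (g := fun r => g (p + r • (1, a))) (by fun_prop)
    (Real.sqrt_pos.2 ht) (fun r => by simpa only [zero_add, hσ] using hgt _)
  simp only [pow_zero, ENNReal.ofReal_one, one_mul, zero_add, pow_one, Nat.cast_zero] at hline
  calc hyperplaneTransform g (lineThrough p a) ^ 2
      ≤ (ENNReal.ofReal (4 * √t) * (∫⁻ r : ℝ, ENNReal.ofReal |r| *
          g (p + r • (1, a)) ^ (3 / 2 : ℝ)) ^ (1 / 2 : ℝ)) ^ 2 := by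
        rw [hyperplaneTransform_lineThrough]
        gcongr
    _ = _ := by
        rw [mul_pow, ← ENNReal.ofReal_pow (by positivity), mul_pow, Real.sq_sqrt ht.le,
          ← ENNReal.rpow_natCast, ← ENNReal.rpow_mul]
        norm_num

lemma pencilMoment_two_le_of_le_one {e : ℝ × ℝ → ℝ≥0∞} (he : Measurable e) (h1 : ∀ q, e q ≤ 1)
    (p : ℝ × ℝ) : pencilMoment 2 e p ≤ 16 * ∫⁻ q, e q :=
  calc pencilMoment 2 e p
      ≤ ENNReal.ofReal (16 * 1) * ∫⁻ q, e q ^ (3 / 2 : ℝ) :=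
        pencilMoment_two_le he one_pos (by simpa using h1) p
    _ ≤ 16 * ∫⁻ q, e q := by
        rw [mul_one, ENNReal.ofReal_ofNat]
        gcongr with q
        exact ENNReal.rpow_le_self_of_le_one (h1 q) (by norm_num)

lemma lintegral_hyperplaneTransform_cube {f : ℝ × ℝ → ℝ≥0∞} (hf : Measurable f) :
    ∫⁻ x, hyperplaneTransform f x ^ 3 = ∫⁻ p, f p * pencilMoment 2 f p := by
  have hswap := lintegral_incidence_swap_real
    (Φ := fun q => f q.1 * hyperplaneTransform f q.2 ^ 2) (by fun_prop)
  calc ∫⁻ x, hyperplaneTransform f x ^ 3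
      = ∫⁻ x : ℝ × ℝ, ∫⁻ y : ℝ, f (y, x.2 + x.1 * y) * hyperplaneTransform f x ^ 2 := by
        refine lintegral_congr fun x => ?_
        rw [lintegral_mul_const _ (by fun_prop), ← hyperplaneTransform_real, ← pow_succ']
    _ = ∫⁻ p : ℝ × ℝ, ∫⁻ a : ℝ, f p * hyperplaneTransform f (lineThrough p a) ^ 2 := hswap
    _ = _ := lintegral_congr fun p => by
        rw [lintegral_const_mul _ (by fun_prop), pencilMoment_real]

lemma lintegral_hyperplaneTransform_cube_le {e : ℝ × ℝ → ℝ≥0∞} (he : Measurable e)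
    (h1 : ∀ q, e q ≤ 1) : ∫⁻ x, hyperplaneTransform e x ^ 3 ≤ 16 * (∫⁻ q, e q) ^ 2 :=
  calc ∫⁻ x, hyperplaneTransform e x ^ 3
      = ∫⁻ p, e p * pencilMoment 2 e p := lintegral_hyperplaneTransform_cube he
    _ ≤ ∫⁻ p, e p * (16 * ∫⁻ q, e q) := by
        gcongr with p
        exact pencilMoment_two_le_of_le_one he h1 p
    _ = 16 * (∫⁻ q, e q) ^ 2 := by rw [lintegral_mul_const _ he]; ring

end Plane

lemma sq_lintegral_mul_le {α : Type*} [MeasurableSpace α] {μ : Measure α} {f g : α → ℝ≥0∞}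
    (hf : AEMeasurable f μ) (hg : AEMeasurable g μ) :
    (∫⁻ x, f x * g x ∂μ) ^ 2 ≤ (∫⁻ x, f x ^ 2 ∂μ) * ∫⁻ x, g x ^ 2 ∂μ := by
  have h := ENNReal.lintegral_mul_le_Lp_mul_Lq μ Real.HolderConjugate.two_two hf hg
  simp only [Pi.mul_apply, ENNReal.rpow_ofNat] at h
  calc (∫⁻ x, f x * g x ∂μ) ^ 2
      ≤ ((∫⁻ x, f x ^ 2 ∂μ) ^ (1 / 2 : ℝ) * (∫⁻ x, g x ^ 2 ∂μ) ^ (1 / 2 : ℝ)) ^ 2 := by gcongr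
    _ = _ := by
        rw [mul_pow, ← ENNReal.rpow_mul_natCast, ← ENNReal.rpow_mul_natCast]
        norm_num

lemma sq_lintegral_hyperplaneTransform_cube_le {e : ℝ × ℝ → ℝ≥0∞} (he : Measurable e) :
    (∫⁻ x, hyperplaneTransform e x ^ 3) ^ 2 ≤
      (∫⁻ q, e q) * ∫⁻ p, e p * pencilMoment 2 e p ^ 2 := by
  have hroot : ∀ q, (e q ^ (1 / 2 : ℝ)) ^ 2 = e q := fun q => by
    rw [← ENNReal.rpow_mul_natCast]
    norm_num
  have hcs := sq_lintegral_mul_le (μ := volume) (f := fun p => e p ^ (1 / 2 : ℝ))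
    (g := fun p => e p ^ (1 / 2 : ℝ) * pencilMoment 2 e p) (by fun_prop) (by fun_prop)
  simpa only [mul_pow, hroot, ← mul_assoc, ← sq, ← lintegral_hyperplaneTransform_cube he] using hcs

lemma lintegral_inv_sq_mul_comp_slope_le (x q : ℝ × ℝ) (hq : q.2 - (x.2 + x.1 * q.1) ≠ 0)
    (ψ : ℝ → ℝ≥0∞) :
    ∫⁻ y, ENNReal.ofReal |q.1 - y|⁻¹ ^ 2 * ψ ((q.2 - (x.2 + x.1 * y)) / (q.1 - y)) ≤
      ENNReal.ofReal |q.2 - (x.2 + x.1 * q.1)|⁻¹ * ∫⁻ s, ψ s := by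
  set h := q.2 - (x.2 + x.1 * q.1)
  have hne : ∀ {y}, y ∈ ({q.1}ᶜ : Set ℝ) → q.1 - y ≠ 0 := fun hy =>
    sub_ne_zero.2 (Ne.symm hy)
  have hslope : ∀ {y}, y ∈ ({q.1}ᶜ : Set ℝ) →
      (q.2 - (x.2 + x.1 * y)) / (q.1 - y) = x.1 + h / (q.1 - y) := fun {y} hy => by
    have := hne hy
    field_simp
    ring
  have hderiv : ∀ y ∈ ({q.1}ᶜ : Set ℝ), HasDerivWithinAt (fun y => x.1 + h / (q.1 - y))
      (h / (q.1 - y) ^ 2) {q.1}ᶜ y := fun y hy => by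
    have := ((hasDerivAt_const y h).div ((hasDerivAt_id y).const_sub q.1) (hne hy)).const_add x.1
    simpa using this.hasDerivWithinAt
  have hinj : Set.InjOn (fun y => x.1 + h / (q.1 - y)) {q.1}ᶜ := fun y hy z hz hyz => by
    have := (div_eq_div_iff (hne hy) (hne hz)).1 (add_left_cancel hyz)
    linarith [mul_left_cancel₀ hq this]
  calc ∫⁻ y, ENNReal.ofReal |q.1 - y|⁻¹ ^ 2 * ψ ((q.2 - (x.2 + x.1 * y)) / (q.1 - y))
      = ∫⁻ y in {q.1}ᶜ, ENNReal.ofReal |h|⁻¹ *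
          (ENNReal.ofReal |h / (q.1 - y) ^ 2| * ψ (x.1 + h / (q.1 - y))) := by
        conv_lhs => rw [← restrict_compl_singleton (μ := volume) q.1]
        refine setLIntegral_congr_fun (measurableSet_singleton _).compl fun y hy => ?_
        rw [hslope hy, ← mul_assoc, ← ENNReal.ofReal_mul (by positivity),
          ← ENNReal.ofReal_pow (by positivity), abs_div, abs_pow]
        have := abs_ne_zero.2 hq
        congr 2
        field_simp
    _ = ENNReal.ofReal |h|⁻¹ * ∫⁻ s in (fun y => x.1 + h / (q.1 - y)) '' {q.1}ᶜ, ψ s := by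
        rw [lintegral_const_mul' _ _ ENNReal.ofReal_ne_top,
          lintegral_image_eq_lintegral_abs_deriv_mul (measurableSet_singleton _).compl hderiv hinj]
    _ ≤ _ := by
        gcongr
        exact Measure.restrict_le_self

/-- The closed strip of vertical half-height `H` around the line with slope `x.1` and
intercept `x.2`. -/
def strip (x : ℝ × ℝ) (H : ℝ) : Set (ℝ × ℝ) := {q | |q.2 - (x.2 + x.1 * q.1)| ≤ H}

/-- The parallelogram centred at `p` with two vertical sides of length `2 * H`, at horizontal
distance `M` from `p`, and two sides of slope `a`. -/
def parallelogram (p : ℝ × ℝ) (a M H : ℝ) : Set (ℝ × ℝ) :=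
  {q | |q.1 - p.1| ≤ M} ∩ strip (lineThrough p a) H

/-- The part of the second pencil moment of `e` at `p` in which one of the two factors only sees
the complement of the strip of half-height `H` around the line `x`. -/
def pencilOffStrip (e : ℝ × ℝ → ℝ≥0∞) (p x : ℝ × ℝ) (H : ℝ) : ℝ≥0∞ :=
  ∫⁻ a, hyperplaneTransform e (lineThrough p a) *
    hyperplaneTransform ((strip x H)ᶜ.indicator e) (lineThrough p a)

section Strip

lemma measurableSet_strip (x : ℝ × ℝ) (H : ℝ) : MeasurableSet (strip x H) :=
  measurableSet_le (by fun_prop) measurable_const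

lemma measurableSet_parallelogram (p : ℝ × ℝ) (a M H : ℝ) :
    MeasurableSet (parallelogram p a M H) :=
  (measurableSet_le (by fun_prop) measurable_const).inter (measurableSet_strip _ _)

variable {e : ℝ × ℝ → ℝ≥0∞} (he : Measurable e)
include he

@[fun_prop]
lemma measurable_pencilOffStrip {α : Type*} [MeasurableSpace α] {p x : α → ℝ × ℝ} {H : α → ℝ}
    (hp : Measurable p) (hx : Measurable x) (hH : Measurable H) :
    Measurable fun t => pencilOffStrip e (p t) (x t) (H t) := by
  have hoff : Measurable fun s : (α × ℝ) × ℝ => (strip (x s.1.1) (H s.1.1))ᶜ.indicator e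
      (s.2, (lineThrough (p s.1.1) s.1.2).2 + (lineThrough (p s.1.1) s.1.2).1 * s.2) := by
    classical
    simp only [Set.indicator_apply, strip, Set.mem_compl_iff, Set.mem_ofPred_eq, not_le]
    exact Measurable.ite (measurableSet_lt (by fun_prop) (by fun_prop)) (by fun_prop)
      measurable_const
  have hline : Measurable fun s : α × ℝ => hyperplaneTransform
      ((strip (x s.1) (H s.1))ᶜ.indicator e) (lineThrough (p s.1) s.2) := by
    simpa only [hyperplaneTransform_real] using hoff.lintegral_prod_right'
  refine Measurable.lintegral_prod_right' (f := fun s : α × ℝ =>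
    hyperplaneTransform e (lineThrough (p s.1) s.2) * hyperplaneTransform
      ((strip (x s.1) (H s.1))ᶜ.indicator e) (lineThrough (p s.1) s.2)) ?_
  exact Measurable.mul (by fun_prop) hline

-- A point is at horizontal distance at least `M` from `p`, in the parallelogram, or off the strip.
lemma hyperplaneTransform_lineThrough_le_add (p : ℝ × ℝ) (a a' : ℝ) {M : ℝ} (hM : 0 < M) (H : ℝ) :
    hyperplaneTransform e (lineThrough p a') ≤
      ENNReal.ofReal M⁻¹ *
          hyperplaneTransform (fun q => ENNReal.ofReal |q.1 - p.1| * e q) (lineThrough p a') +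
        hyperplaneTransform ((parallelogram p a M H).indicator e) (lineThrough p a') +
        hyperplaneTransform ((strip (lineThrough p a) H)ᶜ.indicator e) (lineThrough p a') := by
  have hpara := he.indicator (measurableSet_parallelogram p a M H)
  rw [← hyperplaneTransform_const_mul _ (by fun_prop), ← hyperplaneTransform_add (by fun_prop),
    ← hyperplaneTransform_add (by fun_prop)]
  refine hyperplaneTransform_mono (fun q => ?_) _
  simp only [Pi.add_apply]
  by_cases hstrip : q ∈ strip (lineThrough p a) H
  swap
  · rw [Set.indicator_of_mem (s := (strip _ _)ᶜ) hstrip]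
    exact le_add_self
  rcases le_total |q.1 - p.1| M with hnear | hfar
  · rw [Set.indicator_of_mem (s := parallelogram p a M H) ⟨hnear, hstrip⟩]
    exact le_add_self.trans le_self_add
  · rw [← mul_assoc, ← ENNReal.ofReal_mul (by positivity), add_assoc]
    refine le_add_right (le_mul_of_one_le_left zero_le ?_)
    rwa [ENNReal.one_le_ofReal, inv_mul_eq_div, one_le_div hM]

variable (h1 : ∀ q, e q ≤ 1)
include h1

lemma lintegral_hyperplaneTransform_mul_indicator_le {s : Set (ℝ × ℝ)} (hs : MeasurableSet s)
    (p : ℝ × ℝ) :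
    ∫⁻ a, hyperplaneTransform e (lineThrough p a) *
        hyperplaneTransform (s.indicator e) (lineThrough p a) ≤
      16 * ((∫⁻ q, e q) * ∫⁻ q in s, e q) ^ (1 / 2 : ℝ) := by
  have hes := he.indicator hs
  refine (ENNReal.pow_le_pow_left_iff two_ne_zero).1 ?_
  calc _ ≤ (∫⁻ a, hyperplaneTransform e (lineThrough p a) ^ 2) *
        ∫⁻ a, hyperplaneTransform (s.indicator e) (lineThrough p a) ^ 2 :=
        sq_lintegral_mul_le (by fun_prop) (by fun_prop)
    _ = pencilMoment 2 e p * pencilMoment 2 (s.indicator e) p := by simp only [pencilMoment_real]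
    _ ≤ (16 * ∫⁻ q, e q) * (16 * ∫⁻ q, s.indicator e q) := by
        gcongr
        · exact pencilMoment_two_le_of_le_one he h1 p
        · exact pencilMoment_two_le_of_le_one hes
            (fun q => (Set.indicator_le_self _ _ q).trans (h1 q)) p
    _ = _ := by
        rw [mul_pow, ← ENNReal.rpow_mul_natCast, lintegral_indicator hs]
        norm_num
        ring

lemma lintegral_truncLE_sq_hyperplaneTransform_le (p : ℝ × ℝ) (a : ℝ) {M : ℝ} (hM : 0 < M)
    (H : ℝ) :
    ∫⁻ a', truncLE (fun a' => hyperplaneTransform e (lineThrough p a') ^ 2)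
        (hyperplaneTransform e (lineThrough p a) ^ 2) a' ≤
      hyperplaneTransform e (lineThrough p a) * (ENNReal.ofReal M⁻¹ * ∫⁻ q, e q) +
        16 * ((∫⁻ q, e q) * ∫⁻ q in parallelogram p a M H, e q) ^ (1 / 2 : ℝ) +
        pencilOffStrip e p (lineThrough p a) H := by
  have hpara := he.indicator (measurableSet_parallelogram p a M H)
  set R := fun g a' => hyperplaneTransform g (lineThrough p a')
  have hR : ∀ {g}, Measurable g → Measurable (R g) := fun hg => by fun_prop
  calc ∫⁻ a', truncLE (fun a' => R e a' ^ 2) (R e a ^ 2) a'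
      ≤ ∫⁻ a', (R e a * (ENNReal.ofReal M⁻¹ * R (fun q => ENNReal.ofReal |q.1 - p.1| * e q) a') +
          R e a' * R ((parallelogram p a M H).indicator e) a' +
          R e a' * R ((strip (lineThrough p a) H)ᶜ.indicator e) a') := by
        refine lintegral_mono fun a' => Set.indicator_apply_le' (fun ha' => ?_)
          fun _ => zero_le
        have hle : R e a' ≤ R e a := (ENNReal.pow_le_pow_left_iff two_ne_zero).1 ha'
        rw [sq]
        refine (mul_le_mul_right (hyperplaneTransform_lineThrough_le_add he p a a' hM H) _).trans ?_
        rw [mul_add, mul_add]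
        gcongr
    _ = R e a * (ENNReal.ofReal M⁻¹ * ∫⁻ q, e q) +
          (∫⁻ a', R e a' * R ((parallelogram p a M H).indicator e) a') +
          pencilOffStrip e p (lineThrough p a) H := by
        rw [lintegral_add_left (by fun_prop), lintegral_add_left (by fun_prop),
          lintegral_const_mul _ (by fun_prop), lintegral_const_mul _ (by fun_prop),
          lintegral_hyperplaneTransform_abs_sub_mul he]
        rfl
    _ ≤ _ := by
        gcongr
        exact lintegral_hyperplaneTransform_mul_indicator_le he h1
          (measurableSet_parallelogram p a M H) p

lemma lintegral_mul_hyperplaneTransform_slope_le (x q : ℝ × ℝ) {H : ℝ} (hH : 0 < H)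
    (hq : q ∈ (strip x H)ᶜ) :
    ∫⁻ y, e (y, x.2 + x.1 * y) * (ENNReal.ofReal |q.1 - y|⁻¹ *
        hyperplaneTransform e (lineThrough q ((q.2 - (x.2 + x.1 * y)) / (q.1 - y)))) ≤
      (hyperplaneTransform e x * (ENNReal.ofReal H⁻¹ * (16 * ∫⁻ q, e q))) ^ (1 / 2 : ℝ) := by
  have hlt : H < |q.2 - (x.2 + x.1 * q.1)| := not_le.1 hq
  rw [one_div, ENNReal.le_rpow_inv_iff two_pos, ENNReal.rpow_ofNat]
  refine (sq_lintegral_mul_le (by fun_prop) (by fun_prop)).trans ?_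
  gcongr
  · rw [hyperplaneTransform_real]
    gcongr with y
    exact pow_le_of_le_one zero_le (h1 _) two_ne_zero
  · simp only [mul_pow]
    refine (lintegral_inv_sq_mul_comp_slope_le x q (abs_pos.1 (hH.trans hlt))
      fun s => hyperplaneTransform e (lineThrough q s) ^ 2).trans ?_
    rw [← pencilMoment_real]
    gcongr
    exact pencilMoment_two_le_of_le_one he h1 q

-- Passing to polar coordinates around each point `y` of the line `x` turns the left side into a
-- double integral over `y` and the points `q` off the strip, integrated in `y` first.
lemma lintegral_mul_pencilOffStrip_le (x : ℝ × ℝ) {H : ℝ} (hH : 0 < H) :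
    ∫⁻ y, e (y, x.2 + x.1 * y) * pencilOffStrip e (y, x.2 + x.1 * y) x H ≤
      (∫⁻ q, e q) *
        (hyperplaneTransform e x * (ENNReal.ofReal H⁻¹ * (16 * ∫⁻ q, e q))) ^ (1 / 2 : ℝ) := by
  set g := (strip x H)ᶜ.indicator e
  have hg : Measurable g := he.indicator (measurableSet_strip x H).compl
  set K : ℝ → ℝ × ℝ → ℝ≥0∞ := fun y q => e (y, x.2 + x.1 * y) * (ENNReal.ofReal |q.1 - y|⁻¹ *
    hyperplaneTransform e (lineThrough q ((q.2 - (x.2 + x.1 * y)) / (q.1 - y))))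
  have hKm : Measurable (Function.uncurry K) := by fun_prop
  calc ∫⁻ y, e (y, x.2 + x.1 * y) * pencilOffStrip e (y, x.2 + x.1 * y) x H
      = ∫⁻ y, ∫⁻ q, g q * K y q := by
        refine lintegral_congr fun y => ?_
        rw [pencilOffStrip, lintegral_mul_hyperplaneTransform_lineThrough (by fun_prop) hg,
          ← lintegral_const_mul _ (by fun_prop)]
        exact lintegral_congr fun q => by ring
    _ = ∫⁻ q, g q * ∫⁻ y, K y q := by
        rw [lintegral_lintegral_swap (by fun_prop)]
        exact lintegral_congr fun q => lintegral_const_mul _ (by fun_prop)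
    _ ≤ ∫⁻ q, e q *
          (hyperplaneTransform e x * (ENNReal.ofReal H⁻¹ * (16 * ∫⁻ q, e q))) ^ (1 / 2 : ℝ) := by
        refine lintegral_mono fun q => ?_
        by_cases hq : q ∈ (strip x H)ᶜ
        · gcongr
          · exact Set.indicator_le_self _ _ q
          · exact lintegral_mul_hyperplaneTransform_slope_le he h1 x q hH hq
        · simp [g, Set.indicator_of_notMem hq]
    _ = _ := lintegral_mul_const _ he

end Strip

/-- The half-height of the strip around the line `x` when `e` has mass `N`: the
parallelograms of half-width `(hyperplaneTransform e x).toReal / γ ^ 2` and this half-height have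
area proportional to `N / γ ^ 4` whatever `x` is. -/
def balancedHeight (e : ℝ × ℝ → ℝ≥0∞) (N γ : ℝ) (x : ℝ × ℝ) : ℝ :=
  N / (γ ^ 2 * (hyperplaneTransform e x).toReal)

section RestrictedType

variable {e : ℝ × ℝ → ℝ≥0∞} (he : Measurable e) (h1 : ∀ q, e q ≤ 1) {N γ : ℝ} (hN : 0 < N)
  (hγ : 0 < γ) (heN : ∫⁻ q, e q = ENNReal.ofReal N)
include he h1 hN hγ heN

lemma lintegral_truncLE_sq_le_of_setLIntegral_parallelogram_le {p : ℝ × ℝ} {a φ : ℝ} (hφ : 0 < φ)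
    (hφa : hyperplaneTransform e (lineThrough p a) = ENNReal.ofReal φ)
    (hK : ∫⁻ q in parallelogram p a (φ / γ ^ 2) (N / (γ ^ 2 * φ)), e q ≤
      ENNReal.ofReal ((2 * γ) ^ 2 * N)) :
    ∫⁻ a', truncLE (fun a' => hyperplaneTransform e (lineThrough p a') ^ 2)
        (hyperplaneTransform e (lineThrough p a) ^ 2) a' ≤
      ENNReal.ofReal (N * (γ ^ 2 + 32 * γ)) +
        pencilOffStrip e p (lineThrough p a) (N / (γ ^ 2 * φ)) := by
  refine (lintegral_truncLE_sq_hyperplaneTransform_le he h1 p a (M := φ / γ ^ 2) (by positivity)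
    (N / (γ ^ 2 * φ))).trans (add_le_add_left ?_ _)
  calc _ ≤ ENNReal.ofReal φ * (ENNReal.ofReal (φ / γ ^ 2)⁻¹ * ENNReal.ofReal N) +
        16 * (ENNReal.ofReal N * ENNReal.ofReal ((2 * γ) ^ 2 * N)) ^ (1 / 2 : ℝ) := by
        rw [hφa, heN]
        gcongr
    _ = ENNReal.ofReal (φ * ((φ / γ ^ 2)⁻¹ * N)) + ENNReal.ofReal (16 * (2 * γ * N)) := by
        rw [← ENNReal.ofReal_mul hN.le, show N * ((2 * γ) ^ 2 * N) = (2 * γ * N) ^ 2 by ring,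
          ofReal_pow_rpow (j := 1) (by positivity) (by norm_num) (by norm_num), pow_one,
          ← ENNReal.ofReal_mul (by positivity), ← ENNReal.ofReal_mul hφ.le,
          ENNReal.ofReal_mul (p := 16) (by norm_num), ENNReal.ofReal_ofNat]
    _ = _ := by
        rw [← ENNReal.ofReal_add (by positivity) (by positivity)]
        congr 1
        field_simp
        ring

lemma sq_pencilMoment_two_le
    (hK : ∀ (p : ℝ × ℝ) (a M H : ℝ), 0 < M → 0 < H → M * H = N / γ ^ 4 →
      ∫⁻ q in parallelogram p a M H, e q ≤ ENNReal.ofReal ((2 * γ) ^ 2 * N)) (p : ℝ × ℝ) :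
    pencilMoment 2 e p ^ 2 ≤ 2 * (ENNReal.ofReal (N * (γ ^ 2 + 32 * γ)) * pencilMoment 2 e p +
      ∫⁻ a, hyperplaneTransform e (lineThrough p a) ^ 2 * pencilOffStrip e p (lineThrough p a)
        (balancedHeight e N γ (lineThrough p a))) := by
  set R := fun a => hyperplaneTransform e (lineThrough p a)
  have hR : Measurable R := by fun_prop
  have hfin : ∫⁻ a, R a ^ 2 ≠ ⊤ := by
    rw [← pencilMoment_real]
    refine ne_top_of_le_ne_top ?_ (pencilMoment_two_le_of_le_one he h1 p)
    rw [heN]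
    finiteness
  rw [pencilMoment_real, ← lintegral_const_mul _ (by fun_prop), ← lintegral_add_left (by fun_prop)]
  refine (lintegral_pow_succ_le (by fun_prop : Measurable fun a => R a ^ 2) 1).trans ?_
  rw [pow_one]
  refine mul_le_mul_right (lintegral_mono_ae ?_) _
  filter_upwards [ae_lt_top (by fun_prop) hfin] with a ha
  rcases eq_or_ne (R a) 0 with h0 | h0
  · simp [h0]
  have htop : R a ≠ ⊤ := fun h => by simp [h] at ha
  have hφ := ENNReal.toReal_pos h0 htop
  rw [pow_one, mul_comm (ENNReal.ofReal _), ← mul_add]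
  gcongr
  refine lintegral_truncLE_sq_le_of_setLIntegral_parallelogram_le he h1 hN hγ heN hφ
    (ENNReal.ofReal_toReal htop).symm (hK _ _ _ _ (by positivity) (by positivity) ?_)
  have hφ' : (hyperplaneTransform e (lineThrough p a)).toReal ≠ 0 := hφ.ne'
  field_simp

lemma sq_hyperplaneTransform_mul_lintegral_pencilOffStrip_le (x : ℝ × ℝ) :
    hyperplaneTransform e x ^ 2 * ∫⁻ y, e (y, x.2 + x.1 * y) *
        pencilOffStrip e (y, x.2 + x.1 * y) x (balancedHeight e N γ x) ≤
      ENNReal.ofReal (4 * γ * N) * hyperplaneTransform e x ^ 3 := by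
  set R := hyperplaneTransform e x
  rcases eq_or_ne R 0 with h0 | h0
  · simp [h0]
  rcases eq_or_ne R ⊤ with htop | htop
  · rw [htop, ENNReal.top_pow three_ne_zero,
      ENNReal.mul_top (ENNReal.ofReal_pos.2 (by positivity)).ne']
    exact le_top
  have hφ := ENNReal.toReal_pos h0 htop
  set φ := R.toReal
  have hRφ : R = ENNReal.ofReal φ := (ENNReal.ofReal_toReal htop).symm
  have hH : balancedHeight e N γ x = N / (γ ^ 2 * φ) := rfl
  calc _ ≤ R ^ 2 * (ENNReal.ofReal N *
        (R * (ENNReal.ofReal (N / (γ ^ 2 * φ))⁻¹ * (16 * ENNReal.ofReal N))) ^ (1 / 2 : ℝ)) := by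
        rw [hH, ← heN]
        gcongr
        exact lintegral_mul_pencilOffStrip_le he h1 x (by positivity)
    _ = R ^ 2 * (ENNReal.ofReal N * ENNReal.ofReal (4 * γ * φ)) := by
        rw [hRφ, ← ENNReal.ofReal_ofNat 16, ← ENNReal.ofReal_mul (by norm_num),
          ← ENNReal.ofReal_mul (by positivity), ← ENNReal.ofReal_mul hφ.le,
          show φ * ((N / (γ ^ 2 * φ))⁻¹ * (16 * N)) = (4 * γ * φ) ^ 2 by field_simp; ring,
          ofReal_pow_rpow (j := 1) (by positivity) (by norm_num) (by norm_num), pow_one]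
    _ = _ := by
        rw [ENNReal.ofReal_mul (p := 4 * γ) (by positivity), ← hRφ,
          ENNReal.ofReal_mul (p := 4 * γ) (by positivity)]
        ring

lemma lintegral_mul_lintegral_pencilOffStrip_le :
    ∫⁻ p, e p * ∫⁻ a, hyperplaneTransform e (lineThrough p a) ^ 2 *
        pencilOffStrip e p (lineThrough p a) (balancedHeight e N γ (lineThrough p a)) ≤
      ENNReal.ofReal (4 * γ * N) * ∫⁻ x, hyperplaneTransform e x ^ 3 := by
  have hheight : Measurable (balancedHeight e N γ) := by unfold balancedHeight; fun_prop
  set Φ : (ℝ × ℝ) × (ℝ × ℝ) → ℝ≥0∞ := fun t => e t.1 * (hyperplaneTransform e t.2 ^ 2 *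
    pencilOffStrip e t.1 t.2 (balancedHeight e N γ t.2))
  have hΦ : Measurable Φ := by fun_prop
  calc _ = ∫⁻ p : ℝ × ℝ, ∫⁻ a : ℝ, Φ (p, lineThrough p a) :=
        lintegral_congr fun p => (lintegral_const_mul _ (by fun_prop)).symm
    _ = ∫⁻ x : ℝ × ℝ, ∫⁻ y : ℝ, Φ ((y, x.2 + x.1 * y), x) :=
        (lintegral_incidence_swap_real hΦ).symm
    _ ≤ ∫⁻ x, ENNReal.ofReal (4 * γ * N) * hyperplaneTransform e x ^ 3 := by
        refine lintegral_mono fun x => ?_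
        simp only [Φ, mul_left_comm (e _)]
        rw [lintegral_const_mul _ (by fun_prop)]
        exact sq_hyperplaneTransform_mul_lintegral_pencilOffStrip_le he h1 hN hγ heN x
    _ = _ := lintegral_const_mul _ (by fun_prop)

theorem lintegral_hyperplaneTransform_cube_le_of_parallelogram
    (hK : ∀ (p : ℝ × ℝ) (a M H : ℝ), 0 < M → 0 < H → M * H = N / γ ^ 4 →
      ∫⁻ q in parallelogram p a M H, e q ≤ ENNReal.ofReal ((2 * γ) ^ 2 * N)) :
    ∫⁻ x, hyperplaneTransform e x ^ 3 ≤ ENNReal.ofReal (74 * γ * N ^ 2) := by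
  set I := ∫⁻ x, hyperplaneTransform e x ^ 3 with hI
  have htriv : I ≤ ENNReal.ofReal (16 * N ^ 2) := by
    refine (lintegral_hyperplaneTransform_cube_le he h1).trans_eq ?_
    rw [heN, ENNReal.ofReal_mul (by norm_num), ENNReal.ofReal_pow hN.le, ENNReal.ofReal_ofNat]
  rcases le_total 1 γ with hγ1 | hγ1
  · refine htriv.trans (ENNReal.ofReal_le_ofReal ?_)
    gcongr
    linarith
  rcases eq_or_ne I 0 with h0 | h0
  · simp [h0]
  set D := ENNReal.ofReal (N * (γ ^ 2 + 32 * γ)) with hD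
  refine (ENNReal.mul_le_mul_iff_right h0 (ne_top_of_le_ne_top ENNReal.ofReal_ne_top htriv)).1 ?_
  calc I * I ≤ ENNReal.ofReal N * ∫⁻ p, e p * pencilMoment 2 e p ^ 2 := by
        rw [← sq, ← heN]
        exact sq_lintegral_hyperplaneTransform_cube_le he
    _ ≤ ENNReal.ofReal N * ∫⁻ p, 2 * (D * (e p * pencilMoment 2 e p) +
          e p * ∫⁻ a, hyperplaneTransform e (lineThrough p a) ^ 2 * pencilOffStrip e p
            (lineThrough p a) (balancedHeight e N γ (lineThrough p a))) := by
        refine mul_le_mul_right (lintegral_mono fun p => ?_) _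
        refine (mul_le_mul_right (sq_pencilMoment_two_le he h1 hN hγ heN hK p) _).trans_eq ?_
        ring
    _ ≤ ENNReal.ofReal N * (2 * (D * I + ENNReal.ofReal (4 * γ * N) * I)) := by
        rw [lintegral_const_mul' _ _ ofNat_ne_top, lintegral_add_left (by fun_prop),
          lintegral_const_mul _ (by fun_prop), ← lintegral_hyperplaneTransform_cube he, ← hI]
        gcongr
        exact lintegral_mul_lintegral_pencilOffStrip_le he h1 hN hγ heN
    _ = I * ENNReal.ofReal (N * (2 * (N * (γ ^ 2 + 32 * γ) + 4 * γ * N))) := by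
        rw [ENNReal.ofReal_mul hN.le, ENNReal.ofReal_mul zero_le_two,
          ENNReal.ofReal_add (by positivity) (by positivity), ENNReal.ofReal_ofNat, ← hD]
        ring
    _ ≤ I * ENNReal.ofReal (74 * γ * N ^ 2) := by
        refine mul_le_mul_right (ENNReal.ofReal_le_ofReal ?_) _
        have : γ ^ 2 ≤ γ := pow_le_of_le_one hγ.le hγ1 two_ne_zero
        nlinarith [mul_le_mul_of_nonneg_right this (sq_nonneg N)]

end RestrictedType

/-- `f` has mass at most `l * |K| ^ (1 / 3)` on every parallelogram `K`: the normalization, for a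
function of unit norm in `L ^ (3 / 2)`, of having small `L ^ (3 / 2)` correlation with all
parallelograms. -/
def ParallelogramMassLE (f : ℝ × ℝ → ℝ≥0∞) (l : ℝ≥0∞) : Prop :=
  ∀ (p : ℝ × ℝ) (a M H : ℝ), 0 < M → 0 < H →
    ∫⁻ q in parallelogram p a M H, f q ≤ l * volume (parallelogram p a M H) ^ (1 / 3 : ℝ)

lemma ParallelogramMassLE.mono {f g : ℝ × ℝ → ℝ≥0∞} {l : ℝ≥0∞} (hf : ParallelogramMassLE f l)
    (hgf : g ≤ f) : ParallelogramMassLE g l :=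
  fun p a M H hM hH => (lintegral_mono hgf).trans (hf p a M H hM hH)

lemma ParallelogramMassLE.const_mul {f : ℝ × ℝ → ℝ≥0∞} {l c : ℝ≥0∞} (hf : ParallelogramMassLE f l)
    (hc : c ≠ ⊤) : ParallelogramMassLE (fun q => c * f q) (c * l) := fun p a M H hM hH => by
  rw [lintegral_const_mul' _ _ hc, mul_assoc]
  exact mul_le_mul_right (hf p a M H hM hH) c

lemma volume_parallelogram (p : ℝ × ℝ) (a : ℝ) {M : ℝ} (hM : 0 ≤ M) (H : ℝ) :
    volume (parallelogram p a M H) = ENNReal.ofReal (4 * M * H) := by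
  have hslice (y : ℝ) : volume (Prod.mk y ⁻¹' parallelogram p a M H) =
      (Metric.closedBall p.1 M).indicator (fun _ => ENNReal.ofReal (2 * H)) y := by
    by_cases hy : y ∈ Metric.closedBall p.1 M
    · rw [Set.indicator_of_mem hy, ← Real.volume_closedBall ((lineThrough p a).2 + a * y)]
      congr 1
      ext u
      simpa [parallelogram, strip, Real.dist_eq, lineThrough] using fun _ => hy
    · rw [Set.indicator_of_notMem hy]
      convert measure_empty (μ := volume)
      ext u
      simpa [parallelogram, Real.dist_eq] using fun h => absurd (Metric.mem_closedBall.2 h) hy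
  rw [Measure.volume_eq_prod, Measure.prod_apply (measurableSet_parallelogram p a M H)]
  simp_rw [hslice]
  rw [lintegral_indicator_const measurableSet_closedBall, Real.volume_closedBall, mul_comm,
    ← ENNReal.ofReal_mul (by positivity)]
  congr 1
  ring

-- The choice `γ ^ 10 = Λ ^ 3 / (∫ e) ^ 2` makes the two sides of the parallelogram bound agree.
theorem lintegral_hyperplaneTransform_cube_le_of_parallelogramMassLE {e : ℝ × ℝ → ℝ≥0∞}
    (he : Measurable e) (h1 : ∀ q, e q ≤ 1) {Λ : ℝ} (hΛ : 0 < Λ)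
    (hK : ParallelogramMassLE e (ENNReal.ofReal Λ)) :
    ∫⁻ x, hyperplaneTransform e x ^ 3 ≤
      ENNReal.ofReal (74 * Λ ^ (3 / 10 : ℝ)) * (∫⁻ q, e q) ^ (9 / 5 : ℝ) := by
  rcases eq_or_ne (∫⁻ q, e q) 0 with h0 | h0
  · simpa [h0] using lintegral_hyperplaneTransform_cube_le he h1
  rcases eq_or_ne (∫⁻ q, e q) ⊤ with htop | htop
  · rw [htop, ENNReal.top_rpow_of_pos (by norm_num),
      ENNReal.mul_top (ENNReal.ofReal_pos.2 (by positivity)).ne']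
    exact le_top
  obtain ⟨ν, hν, heN⟩ := exists_eq_ofReal_pow h0 htop (n := 15) (by norm_num)
  obtain ⟨u, hu, rfl⟩ : ∃ u : ℝ, 0 < u ∧ u ^ 10 = Λ :=
    ⟨Λ ^ ((10 : ℕ) : ℝ)⁻¹, by positivity, Real.rpow_inv_natCast_pow hΛ.le (by norm_num)⟩
  refine (lintegral_hyperplaneTransform_cube_le_of_parallelogram he h1 (N := ν ^ 15)
    (γ := (u / ν) ^ 3) (by positivity) (by positivity) heN fun p a M H hM hH hMH => ?_).trans_eq ?_
  · refine (hK p a M H hM hH).trans ?_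
    have hvol : volume (parallelogram p a M H) ≤ ENNReal.ofReal ((4 * ν ^ 9 / u ^ 4) ^ 3) := by
      rw [volume_parallelogram p a hM.le H]
      refine ENNReal.ofReal_le_ofReal ?_
      calc 4 * M * H = 4 * (ν ^ 9 / u ^ 4) ^ 3 := by
            rw [mul_assoc, hMH]
            field_simp
        _ ≤ 4 ^ 3 * (ν ^ 9 / u ^ 4) ^ 3 := by gcongr; norm_num
        _ = _ := by ring
    calc ENNReal.ofReal (u ^ 10) * volume (parallelogram p a M H) ^ (1 / 3 : ℝ)
        ≤ ENNReal.ofReal (u ^ 10) * ENNReal.ofReal ((4 * ν ^ 9 / u ^ 4) ^ 3) ^ (1 / 3 : ℝ) := by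
          gcongr
      _ = _ := by
          rw [ofReal_pow_rpow (j := 1) (by positivity) (by norm_num) (by norm_num),
            ← ENNReal.ofReal_mul (by positivity)]
          congr 1
          field_simp
          norm_num
  · rw [heN, ofReal_pow_rpow (j := 27) hν.le (by norm_num) (by norm_num),
      ← ENNReal.ofReal_mul (by positivity), ← Real.rpow_natCast u, ← Real.rpow_mul hu.le]
    congr 1
    norm_num
    field_simp

lemma le_inv_mul_rpow_three_halves {x : ℝ≥0∞} {y : ℝ} (hy : 0 < y)
    (hx : x = 0 ∨ ENNReal.ofReal (y ^ 2) ≤ x) :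
    x ≤ ENNReal.ofReal y⁻¹ * x ^ (3 / 2 : ℝ) := by
  rcases hx with rfl | hx
  · simp
  have hroot : ENNReal.ofReal y ≤ x ^ (1 / 2 : ℝ) := by
    refine le_of_eq_of_le ?_ (ENNReal.rpow_le_rpow hx (by norm_num))
    rw [ofReal_pow_rpow (j := 1) hy.le (by norm_num) (by norm_num), pow_one]
  calc x = ENNReal.ofReal y⁻¹ * (ENNReal.ofReal y * x) := by
        rw [← mul_assoc, ← ENNReal.ofReal_mul (by positivity), inv_mul_cancel₀ hy.ne',
          ENNReal.ofReal_one, one_mul]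
    _ ≤ ENNReal.ofReal y⁻¹ * (x ^ (1 / 2 : ℝ) * x ^ (1 : ℝ)) := by
        rw [ENNReal.rpow_one]
        gcongr
    _ = _ := by
        rw [← ENNReal.rpow_add_of_nonneg _ _ (by norm_num) (by norm_num)]
        norm_num

lemma sq_pow_three_mul_rpow_mul_rpow_le {η b l : ℝ} (hη : 0 < η) (hb : 1 ≤ b) (hl : 0 < l) :
    (η ^ 2) ^ 3 * (((η ^ 2)⁻¹ * l) ^ (3 / 10 : ℝ) * (b / η ^ 3) ^ (9 / 5 : ℝ)) ≤
      b ^ 2 * l ^ (3 / 10 : ℝ) := by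
  have hη6 : η ^ (-(3 / 5) : ℝ) * η ^ (-(27 / 5) : ℝ) * (η ^ 2) ^ 3 = 1 := by
    rw [← pow_mul, ← Real.rpow_natCast η, ← Real.rpow_add hη, ← Real.rpow_add hη]
    norm_num
  have hη2 : ((η ^ 2)⁻¹) ^ (3 / 10 : ℝ) = η ^ (-(3 / 5) : ℝ) := by
    rw [← Real.rpow_natCast, ← Real.rpow_neg hη.le, ← Real.rpow_mul hη.le]
    norm_num
  have hη3 : ((η ^ 3)⁻¹) ^ (9 / 5 : ℝ) = η ^ (-(27 / 5) : ℝ) := by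
    rw [← Real.rpow_natCast, ← Real.rpow_neg hη.le, ← Real.rpow_mul hη.le]
    norm_num
  have hb2 : b ^ (9 / 5 : ℝ) ≤ b ^ 2 := by
    rw [← Real.rpow_natCast]
    exact Real.rpow_le_rpow_of_exponent_le hb (by norm_num)
  rw [div_eq_mul_inv b, Real.mul_rpow (by positivity) hl.le,
    Real.mul_rpow (by positivity) (by positivity), hη2, hη3]
  calc _ = (η ^ (-(3 / 5) : ℝ) * η ^ (-(27 / 5) : ℝ) * (η ^ 2) ^ 3) *
        (b ^ (9 / 5 : ℝ) * l ^ (3 / 10 : ℝ)) := by ring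
    _ ≤ _ := by
        rw [hη6, one_mul]
        gcongr

theorem lintegral_hyperplaneTransform_cube_le_of_pinched {g : ℝ × ℝ → ℝ≥0∞} (hg : Measurable g)
    {η b l : ℝ} (hη : 0 < η) (hb : 1 ≤ b) (hl : 0 < l)
    (hgη : ∀ q, g q ≤ ENNReal.ofReal (η ^ 2))
    (hηg : ∀ q, g q = 0 ∨ ENNReal.ofReal ((η / b) ^ 2) ≤ g q)
    (hn : ∫⁻ q, g q ^ (3 / 2 : ℝ) ≤ 1) (hK : ParallelogramMassLE g (ENNReal.ofReal l)) :
    ∫⁻ x, hyperplaneTransform g x ^ 3 ≤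
      ENNReal.ofReal (74 * b ^ 2 * l ^ (3 / 10 : ℝ)) * ∫⁻ q, g q ^ (3 / 2 : ℝ) := by
  set c := ENNReal.ofReal (η ^ 2)⁻¹ with hc
  set I := ∫⁻ q, g q ^ (3 / 2 : ℝ)
  have : 0 < b := by linarith
  have hηc : ENNReal.ofReal (η ^ 2) * c = 1 := by
    rw [hc, ← ENNReal.ofReal_mul (by positivity), mul_inv_cancel₀ (by positivity), ofReal_one]
  have hmass : ∫⁻ q, c * g q ≤ ENNReal.ofReal (b / η ^ 3) * I := by
    rw [← lintegral_const_mul _ (by fun_prop)]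
    refine lintegral_mono fun q => ?_
    refine (mul_le_mul_right (le_inv_mul_rpow_three_halves (by positivity) (hηg q)) c).trans_eq ?_
    rw [← mul_assoc, hc, ← ENNReal.ofReal_mul (by positivity)]
    congr 2
    field_simp
  have hI : I ^ (9 / 5 : ℝ) ≤ I :=
    (ENNReal.rpow_le_rpow_of_exponent_ge hn (by norm_num)).trans_eq (ENNReal.rpow_one I)
  have hmain := lintegral_hyperplaneTransform_cube_le_of_parallelogramMassLE
    (e := fun q => c * g q) (by fun_prop)
    (fun q => (mul_le_mul_right (hgη q) c).trans_eq (by rw [mul_comm, hηc]))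
    (Λ := (η ^ 2)⁻¹ * l) (by positivity)
    (by rw [ENNReal.ofReal_mul (by positivity)]; exact hK.const_mul ofReal_ne_top)
  calc ∫⁻ x, hyperplaneTransform g x ^ 3
      = ENNReal.ofReal (η ^ 2) ^ 3 * ∫⁻ x, hyperplaneTransform (fun q => c * g q) x ^ 3 := by
        simp_rw [hyperplaneTransform_const_mul c hg, mul_pow]
        rw [lintegral_const_mul _ (by fun_prop), ← mul_assoc, ← mul_pow, hηc, one_pow, one_mul]
    _ ≤ ENNReal.ofReal (η ^ 2) ^ 3 * (ENNReal.ofReal (74 * ((η ^ 2)⁻¹ * l) ^ (3 / 10 : ℝ)) *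
          (ENNReal.ofReal (b / η ^ 3) * I) ^ (9 / 5 : ℝ)) := by
        gcongr
        exact hmain.trans (by gcongr)
    _ = ENNReal.ofReal ((η ^ 2) ^ 3 * (74 * ((η ^ 2)⁻¹ * l) ^ (3 / 10 : ℝ) *
          (b / η ^ 3) ^ (9 / 5 : ℝ))) * I ^ (9 / 5 : ℝ) := by
        rw [ENNReal.mul_rpow_of_nonneg _ _ (by norm_num),
          ENNReal.ofReal_rpow_of_nonneg (by positivity) (by norm_num),
          ← mul_assoc (ENNReal.ofReal (_ * _)), ← mul_assoc, ← ENNReal.ofReal_mul (by positivity),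
          ← ENNReal.ofReal_pow (by positivity), ← ENNReal.ofReal_mul (by positivity)]
    _ ≤ _ := by
        refine mul_le_mul' (ENNReal.ofReal_le_ofReal ?_) hI
        linarith [sq_pow_three_mul_rpow_mul_rpow_le hη hb hl]

lemma tsum_setLIntegral_preimage_Ioc_le {α : Type*} [MeasurableSpace α] {μ : Measure α}
    {L : ℤ → ℝ≥0∞} (hL : Monotone L) {f : α → ℝ≥0∞} (hf : Measurable f) (g : α → ℝ≥0∞) :
    ∑' n, ∫⁻ q in f ⁻¹' Set.Ioc (L (n - 1)) (L (n + 1)), g q ∂μ ≤ 2 * ∫⁻ q, g q ∂μ := by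
  set J : ℤ → ℝ≥0∞ := fun n => ∫⁻ q in f ⁻¹' Set.Ioc (L n) (L (n + 1)), g q ∂μ
  have hJ : ∑' n, J n ≤ ∫⁻ q, g q ∂μ := by
    refine le_of_eq_of_le (lintegral_iUnion (fun n => hf measurableSet_Ioc)
      (fun i j hij => ?_) g).symm (setLIntegral_le_lintegral _ _)
    exact (hL.pairwise_disjoint_on_Ioc_succ hij).preimage f
  calc _ ≤ ∑' n, (J (n - 1) + J n) := by
        refine ENNReal.tsum_le_tsum fun n => ?_
        refine (lintegral_mono_set (Set.preimage_mono (Set.Ioc_subset_Ioc_union_Ioc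
          (b := L n)))).trans ?_
        rw [Set.preimage_union]
        simpa [J] using lintegral_union_le g (f ⁻¹' Set.Ioc (L (n - 1)) (L n)) _
    _ = ∑' n, J n + ∑' n, J n := by
        rw [ENNReal.tsum_add]
        exact congrArg (· + _) ((Equiv.subRight (1 : ℤ)).tsum_eq J)
    _ ≤ 2 * ∫⁻ q, g q ∂μ := by
        rw [two_mul]
        exact add_le_add hJ hJ

section DyadicPieces

/-- The threshold `b ^ (2 * n)`; it is kept in the form of a square since the planar estimates
involve square roots of the bounds on a function. -/
def geomLevel (b : ℝ) (n : ℤ) : ℝ≥0∞ := ENNReal.ofReal ((b ^ n) ^ 2)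

/-- The part of `f` with values between the thresholds `geomLevel b (n - 1)` and
`geomLevel b (n + 1)`. Consecutive pieces overlap, so that each of them contains all values of `f`
that are slightly smaller than a value between its two upper thresholds. -/
def geomPiece {α : Type*} (f : α → ℝ≥0∞) (b : ℝ) (n : ℤ) : α → ℝ≥0∞ :=
  (f ⁻¹' Set.Ioc (geomLevel b (n - 1)) (geomLevel b (n + 1))).indicator f

variable {α : Type*} {f : α → ℝ≥0∞} {b : ℝ}

lemma geomLevel_mono (hb : 1 ≤ b) : Monotone (geomLevel b) := fun i j hij =>
  ENNReal.ofReal_le_ofReal (pow_le_pow_left₀ (by positivity) (zpow_le_zpow_right₀ hb hij) 2)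

lemma geomPiece_le (f : α → ℝ≥0∞) (b : ℝ) (n : ℤ) : geomPiece f b n ≤ f :=
  Set.indicator_le_self _ _

lemma geomPiece_apply_le (f : α → ℝ≥0∞) (b : ℝ) (n : ℤ) (q : α) :
    geomPiece f b n q ≤ geomLevel b (n + 1) :=
  Set.indicator_le (g := fun _ => geomLevel b (n + 1)) (fun _ hq => hq.2) q

lemma geomPiece_eq_zero_or_le (f : α → ℝ≥0∞) (b : ℝ) (n : ℤ) (q : α) :
    geomPiece f b n q = 0 ∨ geomLevel b (n - 1) ≤ geomPiece f b n q := by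
  by_cases hq : q ∈ f ⁻¹' Set.Ioc (geomLevel b (n - 1)) (geomLevel b (n + 1))
  · rw [geomPiece, Set.indicator_of_mem hq]
    exact Or.inr hq.1.le
  · exact Or.inl (Set.indicator_of_notMem hq f)

@[fun_prop]
lemma measurable_geomPiece [MeasurableSpace α] (hf : Measurable f) (b : ℝ) (n : ℤ) :
    Measurable (geomPiece f b n) :=
  hf.indicator (hf measurableSet_Ioc)

lemma tsum_lintegral_geomPiece_rpow_le [MeasurableSpace α] {μ : Measure α} (hb : 1 ≤ b)
    (hf : Measurable f) {s : ℝ} (hs : 0 < s) :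
    ∑' n, ∫⁻ q, geomPiece f b n q ^ s ∂μ ≤ 2 * ∫⁻ q, f q ^ s ∂μ := by
  refine le_of_eq_of_le (tsum_congr fun n => ?_)
    (tsum_setLIntegral_preimage_Ioc_le (geomLevel_mono hb) hf fun q => f q ^ s)
  rw [← lintegral_indicator (hf measurableSet_Ioc)]
  refine lintegral_congr fun q => ?_
  exact (Set.indicator_comp_of_zero (g := fun x : ℝ≥0∞ => x ^ s)
    (ENNReal.zero_rpow_of_pos hs)).symm ▸ rfl

lemma exists_truncLE_le_add_geomPiece (hb : 1 < b) {t : ℝ} (ht : 0 < t) {p : α}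
    (hp : f p = ENNReal.ofReal (t ^ 2)) :
    ∃ n, geomPiece f b n p = f p ∧
      truncLE f (f p) ≤ truncLE f (ENNReal.ofReal ((t / b) ^ 2)) + geomPiece f b n := by
  obtain ⟨n, hnt⟩ := exists_mem_Ioc_zpow ht hb
  have hn (q : α) (hq : ENNReal.ofReal ((t / b) ^ 2) < f q) (hqp : f q ≤ f p) :
      geomPiece f b n q = f q := by
    have hmem : f q ∈ Set.Ioc (geomLevel b (n - 1)) (geomLevel b (n + 1)) := by
      refine ⟨lt_of_le_of_lt ?_ hq, (hqp.trans_eq hp).trans ?_⟩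
      · refine ENNReal.ofReal_le_ofReal (pow_le_pow_left₀ (by positivity) ?_ 2)
        rw [zpow_sub_one₀ (by positivity), ← div_eq_mul_inv]
        exact div_le_div_of_nonneg_right hnt.1.le (by positivity)
      · exact ENNReal.ofReal_le_ofReal (pow_le_pow_left₀ ht.le hnt.2 2)
    exact Set.indicator_of_mem (s := f ⁻¹' _) hmem f
  refine ⟨n, hn p ?_ le_rfl, fun q => ?_⟩
  · rw [hp, ENNReal.ofReal_lt_ofReal_iff (by positivity)]
    exact pow_lt_pow_left₀ (div_lt_self ht hb) (by positivity) two_ne_zero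
  by_cases hq : f q ≤ f p
  · refine (truncLE_le_self f _ q).trans ?_
    rcases le_or_gt (f q) (ENNReal.ofReal ((t / b) ^ 2)) with hqt | hqt
    · exact le_add_right (Set.indicator_of_mem (s := {z | f z ≤ _}) hqt f).ge
    · exact le_add_left (hn q hqt hq).ge
  · exact (Set.indicator_of_notMem (s := {z | f z ≤ _}) hq f).trans_le zero_le

end DyadicPieces

lemma ennreal_add_sq_le (x y : ℝ≥0∞) : (x + y) ^ 2 ≤ 2 * (x ^ 2 + y ^ 2) := by
  simpa [show (2 : ℝ) - 1 = 1 by norm_num] using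
    ENNReal.rpow_add_le_mul_rpow_add_rpow x y (one_le_two : (1 : ℝ) ≤ 2)

lemma pencilMoment_two_add_le {g h : ℝ × ℝ → ℝ≥0∞} (hg : Measurable g) (p : ℝ × ℝ) :
    pencilMoment 2 (g + h) p ≤ 2 * (pencilMoment 2 g p + pencilMoment 2 h p) := by
  unfold pencilMoment
  rw [← lintegral_add_left (by fun_prop), ← lintegral_const_mul' _ _ ofNat_ne_top]
  refine lintegral_mono fun a => ?_
  rw [hyperplaneTransform_add hg]
  exact ennreal_add_sq_le _ _

lemma mul_pencilMoment_two_truncLE_le {f : ℝ × ℝ → ℝ≥0∞} (hf : Measurable f)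
    (hn : ∫⁻ q, f q ^ (3 / 2 : ℝ) ≤ 1) {b : ℝ} (hb : 1 < b) {p : ℝ × ℝ} (hp : f p ≠ ⊤) :
    f p * pencilMoment 2 (truncLE f (f p)) p ≤
      2 * (ENNReal.ofReal (16 / b) * f p ^ (3 / 2 : ℝ) +
        ∑' n, geomPiece f b n p * pencilMoment 2 (geomPiece f b n) p) := by
  rcases eq_or_ne (f p) 0 with h0 | h0
  · simp [h0]
  have : 0 < b := by linarith
  obtain ⟨t, ht, hft⟩ := exists_eq_ofReal_pow h0 hp two_ne_zero
  obtain ⟨n, hnp, hsplit⟩ := exists_truncLE_le_add_geomPiece hb ht hft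
  set g := truncLE f (ENNReal.ofReal ((t / b) ^ 2))
  have hgm : Measurable g := measurable_truncLE_comp hf measurable_const measurable_id
  have hlow : f p * pencilMoment 2 g p ≤ ENNReal.ofReal (16 / b) * f p ^ (3 / 2 : ℝ) := by
    calc f p * pencilMoment 2 g p
        ≤ ENNReal.ofReal (t ^ 2) * (ENNReal.ofReal (16 * (t / b)) * 1) := by
          rw [← hft]
          gcongr
          refine (pencilMoment_two_le hgm (by positivity) (truncLE_apply_le f _) p).trans ?_
          gcongr
          refine (lintegral_mono fun q => ?_).trans hn
          exact ENNReal.rpow_le_rpow (truncLE_le_self f _ q) (by norm_num)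
      _ = _ := by
          rw [hft, ofReal_pow_rpow (j := 3) ht.le (by norm_num) (by norm_num), mul_one,
            ← ENNReal.ofReal_mul (by positivity), ← ENNReal.ofReal_mul (by positivity)]
          congr 1
          ring
  have hhigh : f p * pencilMoment 2 (geomPiece f b n) p ≤
      ∑' n, geomPiece f b n p * pencilMoment 2 (geomPiece f b n) p := by
    rw [← hnp]
    exact ENNReal.le_tsum (f := fun n => geomPiece f b n p * pencilMoment 2 (geomPiece f b n) p) n
  calc f p * pencilMoment 2 (truncLE f (f p)) p
      ≤ f p * (2 * (pencilMoment 2 g p + pencilMoment 2 (geomPiece f b n) p)) := by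
        gcongr
        exact (pencilMoment_mono hsplit 2 p).trans (pencilMoment_two_add_le hgm p)
    _ = 2 * (f p * pencilMoment 2 g p + f p * pencilMoment 2 (geomPiece f b n) p) := by ring
    _ ≤ _ := by gcongr

lemma lintegral_mul_pencilMoment_geomPiece_le {f : ℝ × ℝ → ℝ≥0∞} (hf : Measurable f)
    (hn : ∫⁻ q, f q ^ (3 / 2 : ℝ) ≤ 1) {l : ℝ} (hl : 0 < l)
    (hK : ParallelogramMassLE f (ENNReal.ofReal l)) {b : ℝ} (hb : 1 ≤ b) (n : ℤ) :
    ∫⁻ p, geomPiece f b n p * pencilMoment 2 (geomPiece f b n) p ≤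
      ENNReal.ofReal (74 * (b ^ 2) ^ 2 * l ^ (3 / 10 : ℝ)) *
        ∫⁻ q, geomPiece f b n q ^ (3 / 2 : ℝ) := by
  have hb0 : 0 < b := by linarith
  rw [← lintegral_hyperplaneTransform_cube (measurable_geomPiece hf b n)]
  refine lintegral_hyperplaneTransform_cube_le_of_pinched (by fun_prop) (η := b ^ (n + 1))
    (by positivity) (one_le_pow₀ hb) hl (geomPiece_apply_le f b n) (fun q => ?_) ?_
    (hK.mono (geomPiece_le f b n))
  · convert geomPiece_eq_zero_or_le f b n q using 2
    rw [geomLevel, show n - 1 = n + 1 - (2 : ℕ) by push_cast; ring, zpow_sub₀ hb0.ne', zpow_natCast]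
  · refine (lintegral_mono fun q => ?_).trans hn
    exact ENNReal.rpow_le_rpow (geomPiece_le f b n q) (by norm_num)

theorem lintegral_hyperplaneTransform_cube_le_add {f : ℝ × ℝ → ℝ≥0∞} (hf : Measurable f)
    (hn : ∫⁻ q, f q ^ (3 / 2 : ℝ) ≤ 1) {l : ℝ} (hl : 0 < l)
    (hK : ParallelogramMassLE f (ENNReal.ofReal l)) {b : ℝ} (hb : 1 < b) :
    ∫⁻ x, hyperplaneTransform f x ^ 3 ≤
      ENNReal.ofReal (128 / b + 1184 * b ^ 4 * l ^ (3 / 10 : ℝ)) := by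
  have hfin : ∀ᵐ p, f p ≠ ⊤ := by
    filter_upwards [ae_lt_top (by fun_prop) (ne_top_of_le_ne_top one_ne_top hn)] with p hp h
    simp [h] at hp
  set D := ENNReal.ofReal (74 * (b ^ 2) ^ 2 * l ^ (3 / 10 : ℝ)) with hD
  have hsum : ∫⁻ p, ∑' n, geomPiece f b n p * pencilMoment 2 (geomPiece f b n) p ≤ D * 2 := by
    rw [lintegral_tsum fun n => by fun_prop]
    calc _ ≤ ∑' n, D * ∫⁻ q, geomPiece f b n q ^ (3 / 2 : ℝ) :=
          ENNReal.tsum_le_tsum (lintegral_mul_pencilMoment_geomPiece_le hf hn hl hK hb.le)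
      _ ≤ D * (2 * 1) := by
          rw [ENNReal.tsum_mul_left]
          gcongr
          exact (tsum_lintegral_geomPiece_rpow_le hb.le hf (by norm_num)).trans (by gcongr)
      _ = D * 2 := by rw [mul_one]
  calc ∫⁻ x, hyperplaneTransform f x ^ 3
      ≤ 2 ^ 2 * ∫⁻ p, f p * pencilMoment 2 (truncLE f (f p)) p :=
        lintegral_hyperplaneTransform_pow_succ_le hf 2
    _ ≤ 2 ^ 2 * ∫⁻ p, 2 * (ENNReal.ofReal (16 / b) * f p ^ (3 / 2 : ℝ) +
          ∑' n, geomPiece f b n p * pencilMoment 2 (geomPiece f b n) p) := by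
        refine mul_le_mul_right (lintegral_mono_ae ?_) _
        filter_upwards [hfin] with p hp using mul_pencilMoment_two_truncLE_le hf hn hb hp
    _ ≤ 2 ^ 2 * (2 * (ENNReal.ofReal (16 / b) * 1 + D * 2)) := by
        rw [lintegral_const_mul' _ _ ofNat_ne_top, lintegral_add_left (by fun_prop),
          lintegral_const_mul _ (by fun_prop)]
        gcongr
    _ = ENNReal.ofReal (8 * (16 / b + 74 * (b ^ 2) ^ 2 * l ^ (3 / 10 : ℝ) * 2)) := by
        rw [ENNReal.ofReal_mul (by norm_num), ENNReal.ofReal_add (by positivity) (by positivity),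
          ENNReal.ofReal_mul (q := 2) (by positivity), ← hD, ENNReal.ofReal_ofNat,
          ENNReal.ofReal_ofNat]
        ring
    _ = _ := by ring_nf

theorem lintegral_hyperplaneTransform_cube_le_rpow {f : ℝ × ℝ → ℝ≥0∞} (hf : Measurable f)
    (hn : ∫⁻ q, f q ^ (3 / 2 : ℝ) ≤ 1) {l : ℝ} (hl : 0 < l) (hl1 : l ≤ 1)
    (hK : ParallelogramMassLE f (ENNReal.ofReal l)) :
    ∫⁻ x, hyperplaneTransform f x ^ 3 ≤ ENNReal.ofReal (20000 * l ^ (1 / 20 : ℝ)) := by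
  set s := l ^ (1 / 20 : ℝ) with hs
  have hs0 : 0 < s := by positivity
  have hs1 : s ≤ 1 := Real.rpow_le_one hl.le hl1 (by norm_num)
  have hs6 : l ^ (3 / 10 : ℝ) = s ^ 6 := by
    rw [hs, ← Real.rpow_natCast, ← Real.rpow_mul hl.le]
    norm_num
  refine (lintegral_hyperplaneTransform_cube_le_add hf hn hl hK (b := 2 / s)
    ((one_lt_div hs0).2 (by linarith))).trans (ENNReal.ofReal_le_ofReal ?_)
  calc 128 / (2 / s) + 1184 * (2 / s) ^ 4 * l ^ (3 / 10 : ℝ) = 64 * s + 18944 * s ^ 2 := by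
        rw [hs6]
        field_simp
        ring
    _ ≤ 20000 * s := by nlinarith

section Isometry

variable {V W : Type*} [NormedAddCommGroup V] [InnerProductSpace ℝ V] [MeasurableSpace V]
  [BorelSpace V] [NormedAddCommGroup W] [InnerProductSpace ℝ W] [MeasurableSpace W]
  [BorelSpace W] (φ : V ≃ₗᵢ[ℝ] W)

lemma measurableEmbedding_prodMap_id : MeasurableEmbedding (Prod.map φ id : V × ℝ → W × ℝ) :=
  (φ.toHomeomorph.prodCongr (.refl ℝ)).measurableEmbedding

variable [FiniteDimensional ℝ V] [FiniteDimensional ℝ W]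

lemma measurePreserving_prodMap_id :
    MeasurePreserving (Prod.map φ id : V × ℝ → W × ℝ) :=
  φ.measurePreserving.prod (.id volume)

lemma hyperplaneTransform_comp_prodMap (f : W × ℝ → ℝ≥0∞) (x : V × ℝ) :
    hyperplaneTransform (f ∘ Prod.map φ id) x = hyperplaneTransform f (Prod.map φ id x) := by
  unfold hyperplaneTransform
  rw [← φ.measurePreserving.lintegral_comp_emb φ.toHomeomorph.measurableEmbedding]
  simp

lemma lintegral_hyperplaneTransform_pow_comp_prodMap (f : W × ℝ → ℝ≥0∞) (k : ℕ) :
    ∫⁻ x, hyperplaneTransform (f ∘ Prod.map φ id) x ^ k = ∫⁻ x, hyperplaneTransform f x ^ k := by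
  simp_rw [hyperplaneTransform_comp_prodMap]
  exact (measurePreserving_prodMap_id φ).lintegral_comp_emb (measurableEmbedding_prodMap_id φ)
    fun x => hyperplaneTransform f x ^ k

end Isometry

/-- The isometry identifying the line with the one-dimensional Euclidean space. -/
def lineIsometry : ℝ ≃ₗᵢ[ℝ] Vec 1 := (OrthonormalBasis.singleton (Fin 1) ℝ).repr

/-- The linear map, on the plane, whose unit ball is the parallelogram `parallelogram 0 a M H`. -/
def parallelogramMap (a M H : ℝ) : Pt 1 →ₗ[ℝ] (Fin 2 → ℝ) :=
  let s : Pt 1 →ₗ[ℝ] ℝ := lineIsometry.symm.toLinearEquiv.toLinearMap ∘ₗ .fst ℝ (Vec 1) ℝ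
  LinearMap.pi ![M⁻¹ • s, H⁻¹ • (.snd ℝ (Vec 1) ℝ - a • s)]

lemma parallelogramMap_injective (a : ℝ) {M H : ℝ} (hM : 0 < M) (hH : 0 < H) :
    Function.Injective (parallelogramMap a M H) := by
  rw [injective_iff_map_eq_zero]
  intro w hw
  have h0 : w.1 = 0 := by simpa [parallelogramMap, hM.ne'] using congrFun hw 0
  have h1 : w.2 = 0 := by simpa [parallelogramMap, hH.ne', h0] using congrFun hw 1
  exact Prod.ext h0 h1

lemma preimage_affineBall_parallelogramMap (p : ℝ × ℝ) (a : ℝ) {M H : ℝ} (hM : 0 < M)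
    (hH : 0 < H) :
    Prod.map lineIsometry id ⁻¹'
        affineBall (parallelogramMap a M H) (Prod.map lineIsometry id p) 1 =
      parallelogram p a M H := by
  ext q
  rw [Set.mem_preimage, mem_affineBall, pi_norm_le_iff_of_nonneg zero_le_one, Fin.forall_fin_two]
  have hslope : q.2 - p.2 - a * (q.1 - p.1) = q.2 - (p.2 - a * p.1 + a * q.1) := by ring
  simp [parallelogramMap, parallelogram, strip, lineThrough, abs_of_pos hM, abs_of_pos hH,
    inv_mul_le_one₀ hM, inv_mul_le_one₀ hH, ← map_sub, hslope]

lemma BoxMassLE.comp_lineIsometry {f : Pt 1 → ℝ≥0∞} {l : ℝ≥0∞} (hf : BoxMassLE 1 f l) :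
    ParallelogramMassLE (f ∘ Prod.map lineIsometry id) l := fun p a M H hM hH => by
  have hφ := measurePreserving_prodMap_id lineIsometry
  have hφe := measurableEmbedding_prodMap_id lineIsometry
  rw [← preimage_affineBall_parallelogramMap p a hM hH,
    hφ.measure_preimage_emb hφe]
  refine (hφ.setLIntegral_comp_preimage_emb hφe f _).trans_le ?_
  convert hf _ _ (parallelogramMap_injective a hM hH) using 3
  norm_num

theorem hasPowerGain_one : HasPowerGain 1 (1 / 20) 20000 := by
  intro f hf l hl hl1 hn hK
  rw [← lintegral_hyperplaneTransform_pow_comp_prodMap lineIsometry]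
  refine lintegral_hyperplaneTransform_cube_le_rpow (hf.comp (by fun_prop)) ?_ hl hl1
    hK.comp_lineIsometry
  refine le_of_eq_of_le ?_ hn
  rw [← (measurePreserving_prodMap_id lineIsometry).lintegral_comp_emb
    (measurableEmbedding_prodMap_id lineIsometry)]
  norm_num

section SlantedBox

variable {V : Type*} [NormedAddCommGroup V] [InnerProductSpace ℝ V] {ι : Type*}

/-- The box centred at `v` whose base has axes `e j` and half-widths `r j`, and whose vertical
sections have half-height `ρ` around the hyperplane of slope `a` through `v`. -/
def slantedBox (v : V × ℝ) (a : V) (e : ι → V) (r : ι → ℝ) (ρ : ℝ) : Set (V × ℝ) :=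
  {w | (∀ j, |⟪w.1 - v.1, e j⟫| < r j) ∧ |w.2 - v.2 - ⟪a, w.1 - v.1⟫| < ρ}

variable [FiniteDimensional ℝ V] {W : Type*} [NormedAddCommGroup W] [InnerProductSpace ℝ W]
  [FiniteDimensional ℝ W]

-- `a` is chosen so that the image of its graph is orthogonal to the image of the vertical axis.
lemma exists_norm_sq_map_prod_eq (A : V × ℝ →ₗ[ℝ] W) (hA : A (0, 1) ≠ 0) :
    ∃ a : V, ∀ w, ‖A w‖ ^ 2 = ‖A (w.1, ⟪a, w.1⟫)‖ ^ 2 + (w.2 - ⟪a, w.1⟫) ^ 2 * ‖A (0, 1)‖ ^ 2 := by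
  let a : V := (-(‖A (0, 1)‖ ^ 2)⁻¹) • (A ∘ₗ .inl ℝ V ℝ).adjoint (A (0, 1))
  have ha (y : V) : ⟪a, y⟫ = -(‖A (0, 1)‖ ^ 2)⁻¹ * ⟪A (0, 1), A (y, 0)⟫ := by
    rw [real_inner_smul_left, LinearMap.adjoint_inner_left]
    rfl
  have hsplit (y : V) (u : ℝ) : A (y, u) = A (y, 0) + u • A (0, 1) := by
    rw [← map_smul, ← map_add]
    simp
  have horth (y : V) : ⟪A (y, ⟪a, y⟫), A (0, 1)⟫ = 0 := by
    have hpos := norm_ne_zero_iff.2 hA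
    rw [hsplit, inner_add_left, real_inner_smul_left, ha, real_inner_self_eq_norm_sq,
      real_inner_comm (A (0, 1))]
    field_simp
    ring
  refine ⟨a, fun w => ?_⟩
  have hw : A w = A (w.1, ⟪a, w.1⟫) + (w.2 - ⟪a, w.1⟫) • A (0, 1) := by
    rw [hsplit w.1 ⟪a, w.1⟫, add_assoc, ← add_smul, add_sub_cancel, ← hsplit]
  rw [hw, norm_add_sq_real, real_inner_smul_right, horth, norm_smul, mul_pow, Real.norm_eq_abs,
    sq_abs]
  ring

lemma exists_orthonormalBasis_norm_sq_eq_sum (D : V →ₗ[ℝ] W) (hD : Function.Injective D) {n : ℕ}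
    (hn : Module.finrank ℝ V = n) :
    ∃ (e : OrthonormalBasis (Fin n) ℝ V) (σ : Fin n → ℝ), (∀ j, 0 < σ j) ∧
      ∀ y, ‖D y‖ ^ 2 = ∑ j, (σ j * ⟪y, e j⟫) ^ 2 := by
  have hT : (D.adjoint ∘ₗ D).IsSymmetric := fun x y => by
    simp only [LinearMap.comp_apply, LinearMap.adjoint_inner_left, LinearMap.adjoint_inner_right]
  let e := hT.eigenvectorBasis hn
  have hinner (j : Fin n) (y : V) : ⟪D (e j), D y⟫ = hT.eigenvalues hn j * ⟪e j, y⟫ := by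
    rw [← LinearMap.adjoint_inner_left, ← LinearMap.comp_apply, hT.apply_eigenvectorBasis hn j]
    exact real_inner_smul_left _ _ _
  have hpos (j : Fin n) : 0 < hT.eigenvalues hn j := by
    have hne : D (e j) ≠ 0 := (map_ne_zero_iff D hD).2 (e.orthonormal.ne_zero j)
    have hself := hinner j (e j)
    rw [real_inner_self_eq_norm_sq, real_inner_self_eq_norm_sq, e.orthonormal.1 j] at hself
    have := norm_pos_iff.2 hne
    nlinarith
  refine ⟨e, fun j => √(hT.eigenvalues hn j), fun j => Real.sqrt_pos.2 (hpos j), fun y => ?_⟩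
  rw [← real_inner_self_eq_norm_sq, ← LinearMap.adjoint_inner_right, ← e.sum_inner_mul_inner]
  refine Finset.sum_congr rfl fun j _ => ?_
  rw [LinearMap.adjoint_inner_right, hinner, mul_pow, Real.sq_sqrt (hpos j).le,
    real_inner_comm (e j)]
  ring

lemma exists_norm_sq_map_prod_eq_sum_add (A : V × ℝ →ₗ[ℝ] W) (hA : Function.Injective A) {n : ℕ}
    (hn : Module.finrank ℝ V = n) :
    ∃ (e : OrthonormalBasis (Fin n) ℝ V) (σ : Fin n → ℝ) (a : V) (η : ℝ), (∀ j, 0 < σ j) ∧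
      0 < η ∧ ∀ w, ‖A w‖ ^ 2 = ∑ j, (σ j * ⟪w.1, e j⟫) ^ 2 + (η * (w.2 - ⟪a, w.1⟫)) ^ 2 := by
  have hvert : A (0, 1) ≠ 0 := (map_ne_zero_iff A hA).2 (by simp)
  obtain ⟨a, ha⟩ := exists_norm_sq_map_prod_eq A hvert
  have hgraph : Function.Injective (A ∘ₗ LinearMap.id.prod (innerₛₗ ℝ a)) :=
    hA.comp fun y z hyz => congrArg Prod.fst hyz
  obtain ⟨e, σ, hσ, he⟩ := exists_orthonormalBasis_norm_sq_eq_sum _ hgraph hn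
  refine ⟨e, σ, a, ‖A (0, 1)‖, hσ, norm_pos_iff.2 hvert, fun w => ?_⟩
  rw [ha w, ← he]
  simp [mul_pow, mul_comm]

end SlantedBox

section Sandwich

variable {n : ℕ} (x : Fin (n + 1) → ℝ)

lemma norm_le_norm_toLp_two : ‖x‖ ≤ ‖WithLp.toLp 2 x‖ :=
  (pi_norm_le_iff_of_nonneg (norm_nonneg _)).2 fun i => PiLp.norm_apply_le (WithLp.toLp 2 x) i

lemma norm_toLp_two_sq_le : ‖WithLp.toLp 2 x‖ ^ 2 ≤ (n + 1) * ‖x‖ ^ 2 := by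
  rw [EuclideanSpace.norm_sq_eq]
  refine (Finset.sum_le_sum fun i _ => pow_le_pow_left₀ (norm_nonneg _) (norm_le_pi_norm x i)
    2).trans_eq ?_
  simp

end Sandwich

lemma abs_lt_div_iff_sq_mul_lt_sq {Q σ x : ℝ} (hQ : 0 ≤ Q) (hσ : 0 < σ) :
    |x| < Q / σ ↔ (σ * x) ^ 2 < Q ^ 2 := by
  rw [sq_lt_sq, lt_div_iff₀ hσ, abs_mul, abs_of_pos hσ, abs_of_nonneg hQ, mul_comm]

theorem exists_affineBall_subset_slantedBox_subset {n : ℕ} (A : Pt n →ₗ[ℝ] (Fin (n + 1) → ℝ))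
    (hA : Function.Injective A) (v : Pt n) :
    ∃ (e : Fin n → Vec n) (r : Fin n → ℝ) (a : Vec n) (ρ : ℝ), Orthonormal ℝ e ∧ (∀ j, 0 < r j) ∧
      0 < ρ ∧ affineBall A v 1 ⊆ slantedBox v a e r ρ ∧
      slantedBox v a e r ρ ⊆ affineBall A v (n + 2) := by
  obtain ⟨e, σ, a, η, hσ, hη, hnorm⟩ := exists_norm_sq_map_prod_eq_sum_add
    ((WithLp.linearEquiv 2 ℝ (Fin (n + 1) → ℝ)).symm.toLinearMap ∘ₗ A)
    ((WithLp.linearEquiv 2 ℝ (Fin (n + 1) → ℝ)).symm.injective.comp hA) finrank_euclideanSpace_fin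
  set Q := √((n : ℝ) + 2)
  have hQ : Q ^ 2 = n + 2 := Real.sq_sqrt (by positivity)
  have hQpos : 0 < Q := by positivity
  refine ⟨e, fun j => Q / σ j, a, Q / η, e.orthonormal, fun j => div_pos hQpos (hσ j),
    by positivity, fun w hw => ?_, fun w ⟨hbase, hvert⟩ => ?_⟩
  · have hw1 := pow_le_one₀ (norm_nonneg _) hw (n := 2)
    have hsum : ∑ j, (σ j * ⟪(w - v).1, e j⟫) ^ 2 + (η * ((w - v).2 - ⟪a, (w - v).1⟫)) ^ 2
        < Q ^ 2 := by
      refine (hnorm (w - v)).symm.trans_lt ((norm_toLp_two_sq_le (A (w - v))).trans_lt ?_)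
      nlinarith [n.cast_nonneg (α := ℝ)]
    refine ⟨fun j => (abs_lt_div_iff_sq_mul_lt_sq hQpos.le (hσ j)).2 (lt_of_le_of_lt ?_ hsum),
      (abs_lt_div_iff_sq_mul_lt_sq hQpos.le hη).2 (lt_of_le_of_lt ?_ hsum)⟩
    · exact le_add_of_le_of_nonneg (Finset.single_le_sum (fun j _ => sq_nonneg
        (σ j * ⟪(w - v).1, e j⟫)) (Finset.mem_univ j)) (sq_nonneg _)
    · exact le_add_of_nonneg_left (Finset.sum_nonneg fun j _ => sq_nonneg _)
  · have hsum : ∑ j, (σ j * ⟪(w - v).1, e j⟫) ^ 2 ≤ n * Q ^ 2 := by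
      refine (Finset.sum_le_card_nsmul _ _ (Q ^ 2) fun j _ =>
        ((abs_lt_div_iff_sq_mul_lt_sq hQpos.le (hσ j)).1 (hbase j)).le).trans_eq ?_
      simp
    have hlast : (η * ((w - v).2 - ⟪a, (w - v).1⟫)) ^ 2 < Q ^ 2 :=
      (abs_lt_div_iff_sq_mul_lt_sq hQpos.le hη).1 hvert
    refine (norm_le_norm_toLp_two _).trans (abs_le_of_sq_le_sq' ?_ (by positivity)).2
    refine (hnorm (w - v)).trans_le ?_
    nlinarith

section Averaging

variable {E F : Type*} [NormedAddCommGroup E] [NormedSpace ℝ E] [NormedAddCommGroup F]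
  [NormedSpace ℝ F]

lemma mem_affineBall_comm {A : E →ₗ[ℝ] F} {x v : E} {R : ℝ} :
    x ∈ affineBall A v R ↔ v ∈ affineBall A x R := by
  rw [mem_affineBall, mem_affineBall, ← neg_sub v x, map_neg, norm_neg]

lemma affineBall_subset_affineBall {A : E →ₗ[ℝ] F} {b x : E} {R τ R' : ℝ}
    (hx : x ∈ affineBall A b R) (hR : τ + R ≤ R') : affineBall A x τ ⊆ affineBall A b R' := by
  intro v hv
  rw [mem_affineBall, ← sub_add_sub_cancel v x b, map_add]
  exact (norm_add_le _ _).trans ((add_le_add hv hx).trans hR)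

variable [FiniteDimensional ℝ E] [MeasurableSpace E] [BorelSpace E] (μ : Measure E)
  [μ.IsAddHaarMeasure] {A : E →ₗ[ℝ] F} {b : E} {τ : ℝ} {S : Set E}

lemma setLIntegral_measure_affineBall_inter (hτ : 0 < τ) (hτ1 : τ ≤ 1) (hS : MeasurableSet S)
    (hSb : S ⊆ affineBall A b 1) :
    ∫⁻ v in affineBall A b 2, μ (affineBall A v τ ∩ S) ∂μ =
      ENNReal.ofReal (τ ^ Module.finrank ℝ E) * μ (affineBall A b 1) * μ S := by
  have hAc := A.continuous_of_finiteDimensional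
  have hP : MeasurableSet {z : E × E | ‖A (z.2 - z.1)‖ ≤ τ} :=
    (isClosed_le (by fun_prop) continuous_const).measurableSet
  have hleft := Measure.prod_apply (μ := μ.restrict (affineBall A b 2)) (ν := μ.restrict S) hP
  have hright := Measure.prod_apply_symm (μ := μ.restrict (affineBall A b 2)) (ν := μ.restrict S) hP
  have hfiber (x : E) (hx : x ∈ S) :
      μ.restrict (affineBall A b 2) ((fun v => (v, x)) ⁻¹' {z : E × E | ‖A (z.2 - z.1)‖ ≤ τ}) =
        ENNReal.ofReal (τ ^ Module.finrank ℝ E) * μ (affineBall A b 1) := by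
    have hpre : (fun v => (v, x)) ⁻¹' {z : E × E | ‖A (z.2 - z.1)‖ ≤ τ} = affineBall A x τ :=
      Set.ext fun v => mem_affineBall_comm
    rw [hpre, Measure.restrict_eq_self _
      (affineBall_subset_affineBall (hSb hx) (by linarith)), measure_affineBall μ A x b hτ]
  rw [setLIntegral_congr_fun hS hfiber, setLIntegral_const] at hright
  rw [← hright, hleft]
  exact lintegral_congr fun v => (Measure.restrict_apply' hS).symm

-- Averaging `μ (affineBall A v τ ∩ S)` over `v ∈ affineBall A b 2` gives the density `(τ / 2) ^ d`.
lemma exists_mul_measure_le_measure_affineBall_inter (hA : Function.Injective A) (hτ : 0 < τ)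
    (hτ1 : τ ≤ 1) (hS : MeasurableSet S) (hSb : S ⊆ affineBall A b 1) :
    ∃ v, ENNReal.ofReal ((τ / 2) ^ Module.finrank ℝ E) * μ S ≤ μ (affineBall A v τ ∩ S) := by
  have hint := setLIntegral_measure_affineBall_inter μ hτ hτ1 hS hSb
  have hfin (R : ℝ) := measure_affineBall_lt_top μ hA b R
  have hpos {R : ℝ} (hR : 0 < R) := (measure_affineBall_pos μ A b hR).ne'
  obtain ⟨v, -, hv⟩ := exists_setLAverage_le (μ := μ) (hpos two_pos)
    (measurableSet_affineBall A b 2).nullMeasurableSet (hint.trans_ne (by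
      have := (measure_mono hSb).trans_lt (hfin 1)
      finiteness [(hfin 1).ne]))
  refine ⟨v, le_of_eq_of_le ?_ hv⟩
  rw [setLAverage_eq, hint, measure_affineBall μ A b b two_pos,
    ENNReal.eq_div_iff (mul_ne_zero (by simp) (hpos one_pos))
      (ENNReal.mul_ne_top ENNReal.ofReal_ne_top (hfin 1).ne),
    mul_mul_mul_comm, ← ENNReal.ofReal_mul (by positivity), ← mul_pow,
    mul_div_cancel₀ _ two_ne_zero, mul_assoc]

end Averaging

section LevelSet

variable {α : Type*} [MeasurableSpace α] (μ : Measure α) {g : α → ℝ≥0∞} {p q : ℝ}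

lemma setLIntegral_le_measure_rpow_one_div (hpq : p.HolderConjugate q) (hg : Measurable g)
    (hnorm : ∫⁻ x, g x ^ p ∂μ ≤ 1) (S : Set α) : ∫⁻ x in S, g x ∂μ ≤ μ S ^ (1 / q) := by
  have hholder := ENNReal.lintegral_mul_le_Lp_mul_Lq (μ.restrict S) hpq (g := fun _ => 1)
    hg.aemeasurable aemeasurable_const
  simp only [Pi.mul_apply, mul_one, ENNReal.one_rpow, lintegral_const, one_mul,
    Measure.restrict_apply_univ] at hholder
  exact hholder.trans (mul_le_of_le_one_left zero_le
    (ENNReal.rpow_le_one ((setLIntegral_le_lintegral _ _).trans hnorm) (by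
      have := hpq.pos
      positivity)))

lemma rpow_mul_measure_lt_le (hg : Measurable g) (hp : 0 ≤ p) (t : ℝ≥0∞) :
    t ^ p * μ {x | t < g x} ≤ ∫⁻ x, g x ^ p ∂μ :=
  (mul_le_mul_right (measure_mono fun _ hx => ENNReal.rpow_le_rpow (le_of_lt hx) hp) _).trans
    (mul_meas_ge_le_lintegral (by fun_prop) _)

lemma setLIntegral_le_mul_measure_add (hg : Measurable g) (t : ℝ≥0∞) {K : Set α}
    (hK : MeasurableSet K) :
    ∫⁻ x in K, g x ∂μ ≤ t * μ K + ∫⁻ x in K ∩ {x | t < g x}, g x ∂μ := by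
  have hlevel : MeasurableSet {x | t < g x} := measurableSet_lt measurable_const hg
  rw [← lintegral_inter_add_sdiff g K hlevel, add_comm]
  have hlow := setLIntegral_mono' (μ := μ) (hK.diff hlevel) fun x hx => not_lt.1 hx.2
  refine add_le_add_left (hlow.trans ?_) _
  rw [setLIntegral_const]
  exact mul_le_mul_right (measure_mono Set.sdiff_subset) _

-- `t` is the level at which `t μ(K)` is half of the given lower bound for the integral over `K`.
theorem exists_level_of_lt_setLIntegral (hpq : p.HolderConjugate q) (hg : Measurable g)
    (hnorm : ∫⁻ x, g x ^ p ∂μ ≤ 1) {K : Set α} (hK : MeasurableSet K) (hK0 : μ K ≠ 0)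
    (hKtop : μ K ≠ ⊤) {s : ℝ} (hs : 0 < s)
    (hmass : ENNReal.ofReal (2 * s) * μ K ^ (1 / q) < ∫⁻ x in K, g x ∂μ) :
    ∃ t : ℝ, 0 < t ∧ ENNReal.ofReal t ^ p * μ K = ENNReal.ofReal (s ^ p) ∧
      ENNReal.ofReal (s ^ p) * μ {x | ENNReal.ofReal t < g x} ≤ μ K ∧
      ENNReal.ofReal (s ^ q) * μ K ≤ μ (K ∩ {x | ENNReal.ofReal t < g x}) := by
  have hp := hpq.pos
  have hq := hpq.symm.pos
  have ht : ENNReal.ofReal s * μ K ^ (-(1 / p)) ≠ ⊤ :=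
    ENNReal.mul_ne_top ENNReal.ofReal_ne_top (ENNReal.rpow_ne_top_of_ne_zero hK0 hKtop)
  have ht0 : ENNReal.ofReal s * μ K ^ (-(1 / p)) ≠ 0 :=
    mul_ne_zero (by simpa using hs) (ENNReal.rpow_pos (pos_iff_ne_zero.2 hK0) hKtop).ne'
  refine ⟨(ENNReal.ofReal s * μ K ^ (-(1 / p))).toReal, ENNReal.toReal_pos ht0 ht, ?_⟩
  rw [ENNReal.ofReal_toReal ht]
  set t := ENNReal.ofReal s * μ K ^ (-(1 / p))
  have htp : t ^ p * μ K = ENNReal.ofReal (s ^ p) := by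
    rw [ENNReal.mul_rpow_of_nonneg _ _ hp.le, ENNReal.ofReal_rpow_of_pos hs, ← ENNReal.rpow_mul,
      neg_mul, one_div_mul_cancel hp.ne', ENNReal.rpow_neg_one, mul_assoc,
      ENNReal.inv_mul_cancel hK0 hKtop, mul_one]
  have htK : t * μ K = ENNReal.ofReal s * μ K ^ (1 / q) := by
    have hexp : -(1 / p) + 1 = 1 / q := by
      have := hpq.inv_add_inv_eq_one
      rw [one_div, one_div]
      linarith
    rw [mul_assoc, ← hexp, ENNReal.rpow_add _ _ hK0 hKtop, ENNReal.rpow_one]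
  refine ⟨htp, ?_, ?_⟩
  · rw [← htp, mul_right_comm]
    exact mul_le_of_le_one_left zero_le ((rpow_mul_measure_lt_le μ hg hp.le t).trans hnorm)
  · have hsplit := hmass.trans_le (setLIntegral_le_mul_measure_add μ hg t hK)
    rw [htK, two_mul, ENNReal.ofReal_add hs.le hs.le, add_mul] at hsplit
    have hhigh := (lt_of_add_lt_add_left hsplit).le.trans
      (setLIntegral_le_measure_rpow_one_div μ hpq hg hnorm _)
    have hroot := ENNReal.rpow_le_rpow hhigh hq.le
    rwa [ENNReal.mul_rpow_of_nonneg _ _ hq.le, ENNReal.ofReal_rpow_of_pos hs, ← ENNReal.rpow_mul,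
      ← ENNReal.rpow_mul, one_div_mul_cancel hq.ne', ENNReal.rpow_one, ENNReal.rpow_one] at hroot

end LevelSet

section Concentration

variable {m : ℕ} {g : Pt m → ℝ≥0∞}

lemma holderConjugate_add_two_div (m : ℕ) :
    (((m : ℝ) + 2) / (m + 1)).HolderConjugate ((m : ℝ) + 2) := by
  simpa only [add_assoc, one_add_one_eq_two] using
    holderConjugate_add_one_div (a := (m : ℝ) + 1) (by positivity)

lemma boxMassLE_one (hg : Measurable g)
    (hnorm : ∫⁻ x, g x ^ (((m : ℝ) + 2) / (m + 1)) ≤ 1) : BoxMassLE m g 1 := fun A b _ => by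
  rw [one_mul]
  exact setLIntegral_le_measure_rpow_one_div volume (holderConjugate_add_two_div m) hg hnorm _

lemma HasPowerGain.exists_lt_setLIntegral {θ C : ℝ} (h : HasPowerGain m θ C) (hθ : 0 < θ)
    (hC : 0 ≤ C) (hg : Measurable g) (hnorm : ∫⁻ x, g x ^ (((m : ℝ) + 2) / (m + 1)) ≤ 1) {ε : ℝ}
    (hε : 0 < ε) (hT : ENNReal.ofReal (ε ^ (m + 2)) ≤ ∫⁻ x, hyperplaneTransform g x ^ (m + 2)) :
    (ε ^ (m + 2) / (C + 1)) ^ (1 / θ) ≤ 1 ∧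
      ∃ (A : Pt m →ₗ[ℝ] (Fin (m + 1) → ℝ)) (b : Pt m), Function.Injective A ∧
        ENNReal.ofReal ((ε ^ (m + 2) / (C + 1)) ^ (1 / θ)) *
          volume (affineBall A b 1) ^ (1 / ((m : ℝ) + 2)) < ∫⁻ x in affineBall A b 1, g x := by
  have hεC : ε ^ (m + 2) ≤ C := by
    have hone := h g hg 1 one_pos le_rfl hnorm (by simpa using boxMassLE_one hg hnorm)
    rw [Real.one_rpow, mul_one] at hone
    exact (ENNReal.ofReal_le_ofReal_iff hC).1 (hT.trans hone)
  have hl : (ε ^ (m + 2) / (C + 1)) ^ (1 / θ) ≤ 1 :=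
    Real.rpow_le_one (by positivity) ((div_le_one (by positivity)).2 (by linarith)) (by positivity)
  refine ⟨hl, ?_⟩
  by_contra! hbox
  have hgain := hT.trans (h g hg _ (by positivity) hl hnorm hbox)
  rw [ENNReal.ofReal_le_ofReal_iff (by positivity), ← Real.rpow_mul (by positivity),
    one_div_mul_cancel hθ.ne', Real.rpow_one, mul_div_assoc', le_div_iff₀ (by positivity)] at hgain
  have : 0 < ε ^ (m + 2) := by positivity
  nlinarith

lemma one_le_add_two_div (m : ℕ) : 1 ≤ ((m : ℝ) + 2) / (m + 1) :=
  (one_le_div (by positivity)).2 (by linarith)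

lemma add_two_div_le_two (m : ℕ) : ((m : ℝ) + 2) / (m + 1) ≤ 2 :=
  (div_le_iff₀ (by positivity)).2 (by linarith [m.cast_nonneg (α := ℝ)])

-- Rescaling by `τ = s ^ 2 / (m + 2)` makes the dilate by `m + 2` no larger than `E`.
lemma exists_affineBall_of_measure_inter {A : Pt m →ₗ[ℝ] (Fin (m + 1) → ℝ)}
    (hA : Function.Injective A) (b : Pt m) {E : Set (Pt m)} (hE : MeasurableSet E) {s : ℝ}
    (hs : 0 < s) (hs1 : s ≤ 1) (hEK : ENNReal.ofReal (s ^ 2) * volume E ≤ volume (affineBall A b 1))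
    (hKE : ENNReal.ofReal (s ^ (m + 2)) * volume (affineBall A b 1) ≤
      volume (affineBall A b 1 ∩ E)) :
    ∃ (A' : Pt m →ₗ[ℝ] (Fin (m + 1) → ℝ)) (v : Pt m), Function.Injective A' ∧
      volume (affineBall A' v (m + 2)) ≤ volume E ∧
      ENNReal.ofReal ((1 / (2 * ((m : ℝ) + 2))) ^ (m + 1) * s ^ (3 * m + 6)) * volume E ≤
        volume (affineBall A' v 1 ∩ E) := by
  have hrank : Module.finrank ℝ (Pt m) = m + 1 := by simp
  have hs2 : s ^ 2 ≤ 1 := pow_le_one₀ hs.le hs1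
  set τ := s ^ 2 / ((m : ℝ) + 2) with hτ_def
  have hτ : 0 < τ := by positivity
  have hτ1 : τ ≤ 1 := (div_le_one (by positivity)).2 (by linarith [m.cast_nonneg (α := ℝ)])
  obtain ⟨v, hv⟩ := exists_mul_measure_le_measure_affineBall_inter volume hA hτ hτ1
    ((measurableSet_affineBall A b 1).inter hE) Set.inter_subset_left
  rw [hrank] at hv
  refine ⟨τ⁻¹ • A, v, (smul_right_injective _ (inv_ne_zero hτ.ne')).comp hA, ?_, ?_⟩
  · have hscale : (m : ℝ) + 2 = τ⁻¹ * s ^ 2 := by rw [hτ_def]; field_simp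
    rw [hscale, affineBall_smul A v (inv_pos.2 hτ), measure_affineBall volume A v b (by positivity),
      hrank, ← pow_mul]
    exact (mul_le_mul_left (ENNReal.ofReal_le_ofReal
      (pow_le_pow_of_le_one hs.le hs1 (by omega))) _).trans
        (hKE.trans (measure_mono Set.inter_subset_right))
  · have hball : affineBall (τ⁻¹ • A) v 1 = affineBall A v τ := by
      rw [← affineBall_smul A v (inv_pos.2 hτ), inv_mul_cancel₀ hτ.ne']
    have hconst : (1 / (2 * ((m : ℝ) + 2))) ^ (m + 1) * s ^ (3 * m + 6) =
        (τ / 2) ^ (m + 1) * s ^ (m + 2) * s ^ 2 := by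
      rw [hτ_def, div_div, div_pow, div_pow, one_pow, mul_comm (2 : ℝ)]
      ring
    calc ENNReal.ofReal ((1 / (2 * ((m : ℝ) + 2))) ^ (m + 1) * s ^ (3 * m + 6)) * volume E
        = ENNReal.ofReal ((τ / 2) ^ (m + 1)) *
            (ENNReal.ofReal (s ^ (m + 2)) * (ENNReal.ofReal (s ^ 2) * volume E)) := by
          rw [hconst, ENNReal.ofReal_mul (by positivity),
            ENNReal.ofReal_mul (p := (τ / 2) ^ (m + 1)) (by positivity), mul_assoc, mul_assoc]
      _ ≤ ENNReal.ofReal ((τ / 2) ^ (m + 1)) * volume (affineBall A b 1 ∩ E) := by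
          gcongr
          exact (mul_le_mul_right hEK _).trans hKE
      _ ≤ volume (affineBall A v τ ∩ (affineBall A b 1 ∩ E)) := hv
      _ ≤ volume (affineBall (τ⁻¹ • A) v 1 ∩ E) := by
          rw [hball]
          exact measure_mono (Set.inter_subset_inter_right _ Set.inter_subset_right)

theorem exists_level_affineBall {A : Pt m →ₗ[ℝ] (Fin (m + 1) → ℝ)} (hA : Function.Injective A)
    (b : Pt m) (hg : Measurable g) (hnorm : ∫⁻ x, g x ^ (((m : ℝ) + 2) / (m + 1)) ≤ 1) {s : ℝ}
    (hs : 0 < s) (hs1 : s ≤ 1)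
    (hmass : ENNReal.ofReal (2 * s) * volume (affineBall A b 1) ^ (1 / ((m : ℝ) + 2)) <
      ∫⁻ x in affineBall A b 1, g x) :
    ∃ (t : ℝ) (A' : Pt m →ₗ[ℝ] (Fin (m + 1) → ℝ)) (v : Pt m), 0 < t ∧ Function.Injective A' ∧
      ENNReal.ofReal (s ^ (m + 4)) ≤ ENNReal.ofReal t ^ (((m : ℝ) + 2) / (m + 1)) *
        volume {x | ENNReal.ofReal t < g x} ∧
      volume (affineBall A' v (m + 2)) ≤ volume {x | ENNReal.ofReal t < g x} ∧
      ENNReal.ofReal ((1 / (2 * ((m : ℝ) + 2))) ^ (m + 1) * s ^ (3 * m + 6)) *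
          volume {x | ENNReal.ofReal t < g x} ≤
        volume (affineBall A' v 1 ∩ {x | ENNReal.ofReal t < g x}) := by
  have hKtop := (measure_affineBall_lt_top volume hA b 1).ne
  obtain ⟨t, ht, htK, hEK, hKE⟩ := exists_level_of_lt_setLIntegral volume
    (holderConjugate_add_two_div m) hg hnorm (measurableSet_affineBall A b 1)
    (measure_affineBall_pos volume A b one_pos).ne' hKtop hs hmass
  set E := {x | ENNReal.ofReal t < g x}
  have hE : MeasurableSet E := measurableSet_lt measurable_const hg
  have hp : ENNReal.ofReal (s ^ 2) ≤ ENNReal.ofReal (s ^ (((m : ℝ) + 2) / (m + 1))) := by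
    rw [← Real.rpow_two]
    exact ENNReal.ofReal_le_ofReal
      (Real.rpow_le_rpow_of_exponent_ge hs hs1 (add_two_div_le_two m))
  have hq : s ^ ((m : ℝ) + 2) = s ^ (m + 2) := by exact_mod_cast Real.rpow_natCast s (m + 2)
  rw [hq] at hKE
  obtain ⟨A', v, hA', hsize, hdensity⟩ := exists_affineBall_of_measure_inter hA b hE hs hs1
    ((mul_le_mul_left hp _).trans hEK) hKE
  refine ⟨t, A', v, ht, hA', ?_, hsize, hdensity⟩
  calc ENNReal.ofReal (s ^ (m + 4))
      = ENNReal.ofReal (s ^ 2) * ENNReal.ofReal (s ^ (m + 2)) := by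
        rw [← ENNReal.ofReal_mul (by positivity), ← pow_add]
        ring_nf
    _ ≤ ENNReal.ofReal t ^ (((m : ℝ) + 2) / (m + 1)) * volume (affineBall A b 1) *
          ENNReal.ofReal (s ^ (m + 2)) := by
        rw [htK]
        gcongr
    _ = ENNReal.ofReal t ^ (((m : ℝ) + 2) / (m + 1)) *
          (ENNReal.ofReal (s ^ (m + 2)) * volume (affineBall A b 1)) := by ring
    _ ≤ ENNReal.ofReal t ^ (((m : ℝ) + 2) / (m + 1)) * volume E := by
        gcongr
        exact hKE.trans (measure_mono Set.inter_subset_right)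

end Concentration

/-- The shear `(y', y_d) ↦ (y', y_d - |y'|²)`, straightening paraboloids into hyperplanes: it turns
`radonT` into `hyperplaneTransform` and slanted boxes into projections of balls. -/
def paraboloidShear (V : Type*) [NormedAddCommGroup V] : V × ℝ ≃ₜ V × ℝ where
  toFun y := (y.1, y.2 - ‖y.1‖ ^ 2)
  invFun y := (y.1, y.2 + ‖y.1‖ ^ 2)
  left_inv y := by simp
  right_inv y := by simp
  continuous_toFun := by fun_prop
  continuous_invFun := by fun_prop

lemma paraboloidShear_apply {V : Type*} [NormedAddCommGroup V] (y : V × ℝ) :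
    paraboloidShear V y = (y.1, y.2 - ‖y.1‖ ^ 2) := rfl

section ParaboloidShear

variable {V : Type*} [NormedAddCommGroup V] [MeasureSpace V] [BorelSpace V]
  [SFinite (volume : Measure V)]

lemma measurePreserving_paraboloidShear : MeasurePreserving (paraboloidShear V) :=
  (MeasurePreserving.id volume).skew_product (g := fun y u => u - ‖y‖ ^ 2) (by fun_prop)
    (.of_forall fun y => (measurePreserving_sub_right volume (‖y‖ ^ 2)).map_eq)

lemma volume_image_paraboloidShear (S : Set (V × ℝ)) :
    volume (paraboloidShear V '' S) = volume S := by
  rw [← measurePreserving_paraboloidShear.measure_preimage_emb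
    (paraboloidShear V).measurableEmbedding, Set.preimage_image_eq _ (paraboloidShear V).injective]

end ParaboloidShear

section RadonTransform

variable {n : ℕ} {f : Pt n → ℝ≥0∞}

lemma radonT_eq_hyperplaneTransform (f : Pt n → ℝ≥0∞) (x : Pt n) :
    radonT n f x = hyperplaneTransform (f ∘ paraboloidShear (Vec n))
      ((2 : ℝ) • (paraboloidShear (Vec n) x).1, (paraboloidShear (Vec n) x).2) := by
  have htranslate : radonT n f x = ∫⁻ y, f (y, x.2 - ‖x.1 - y‖ ^ 2) := by
    rw [← lintegral_sub_left_eq_self _ x.1]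
    simp only [radonT, _root_.sub_sub_cancel]
  rw [htranslate, hyperplaneTransform]
  refine lintegral_congr fun y => congrArg f (Prod.ext rfl ?_)
  simp only [paraboloidShear_apply, norm_sub_sq_real, real_inner_smul_left]
  ring

lemma lintegral_hyperplaneTransform_comp_paraboloidShear_pow (hf : Measurable f) (k : ℕ) :
    ∫⁻ w, hyperplaneTransform (f ∘ paraboloidShear (Vec n)) w ^ k =
      ENNReal.ofReal (2 ^ n) * ∫⁻ x, radonT n f x ^ k := by
  set G : Pt n → ℝ≥0∞ := fun w => hyperplaneTransform (f ∘ paraboloidShear (Vec n)) w ^ k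
  have hG : Measurable G :=
    (measurable_hyperplaneTransform (hf.comp (paraboloidShear (Vec n)).measurable)).pow_const k
  have hradon : ∫⁻ x, radonT n f x ^ k = ∫⁻ x : Pt n, G ((2 : ℝ) • x.1, x.2) := by
    simp only [radonT_eq_hyperplaneTransform]
    exact measurePreserving_paraboloidShear.lintegral_comp
      (f := fun x : Pt n => G ((2 : ℝ) • x.1, x.2)) (by fun_prop)
  rw [hradon, Measure.volume_eq_prod, lintegral_prod_symm' _ hG,
    lintegral_prod_symm' _ (by fun_prop), ← lintegral_const_mul _ (by fun_prop)]
  refine lintegral_congr fun u => ?_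
  simpa using lintegral_eq_abs_pow_finrank_mul_comp_smul volume two_ne_zero fun x => G (x, u)

end RadonTransform

section Balls

variable {n : ℕ}

lemma exists_isBallParams_image_ballI_eq (v : Pt n) (a : Vec n) {e : Fin n → Vec n}
    (he : Orthonormal ℝ e) {rs : Fin n → ℝ} (hrs : ∀ j, 0 < rs j) {ρ : ℝ} (hρ : 0 < ρ) :
    ∃ zb r, IsBallParams n zb e r rs ρ ∧
      Prod.snd '' ballI n zb e r rs ρ = paraboloidShear (Vec n) '' slantedBox v a e rs ρ := by
  -- The hyperplane through `v` of slope `a` is sheared into the paraboloid with vertex `x`.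
  set x : Pt n := ((1 / 2 : ℝ) • a, v.2 - ⟪a, v.1⟫ + ‖(1 / 2 : ℝ) • a‖ ^ 2) with hx
  have hparaboloid (y : Pt n) :
      y.2 - x.2 + ‖y.1 - x.1‖ ^ 2 = y.2 + ‖y.1‖ ^ 2 - v.2 - ⟪a, y.1 - v.1⟫ := by
    rw [norm_sub_sq_real, inner_sub_right, hx, real_inner_smul_right, real_inner_comm a y.1]
    ring
  refine ⟨(x, (v.1, x.2 - ‖v.1 - x.1‖ ^ 2)), fun j => ρ / rs j, ⟨rfl, hρ, he,
    fun j => div_pos hρ (hrs j), hrs, fun j => div_mul_cancel₀ _ (hrs j).ne'⟩, ?_⟩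
  rw [← Homeomorph.preimage_symm]
  ext y
  constructor
  · rintro ⟨z, ⟨-, -, -, hbase, hheight⟩, rfl⟩
    exact ⟨hbase, (hparaboloid z.2).symm ▸ hheight⟩
  · rintro ⟨hbase, hheight⟩
    have hheight' : |y.2 - x.2 + ‖y.1 - x.1‖ ^ 2| < ρ := (hparaboloid y).symm ▸ hheight
    refine ⟨((x.1, y.2 + ‖y.1 - x.1‖ ^ 2), y), ⟨by simp, fun j => ?_, ?_, hbase, hheight'⟩, rfl⟩
    · simpa using div_pos hρ (hrs j)
    · convert hheight' using 2
      simp only [norm_sub_rev x.1 v.1]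
      ring

/-- The conclusion of the theorem for `f` in `L^p(ℝ^{n+1})`, with density `δ`: some set `E` and
height `t > 0` with `t χ_E ≤ f` carry a proportion `δ` of the `L^p` norm of `f`, and some ball `ℬ`
with `|π*(ℬ)| ≤ |E|` has `|π*(ℬ) ∩ E| ≥ δ |E|`. -/
def ConcentratesOnBall (n : ℕ) (p δ : ℝ) (f : Pt n → ℝ≥0∞) : Prop :=
  ∃ (t : ℝ) (E : Set (Pt n)) (zb : Pt n × Pt n) (e : Fin n → Vec n) (r rs : Fin n → ℝ) (ρ : ℝ),
    0 < t ∧ MeasurableSet E ∧ IsBallParams n zb e r rs ρ ∧ (∀ x ∈ E, ENNReal.ofReal t ≤ f x) ∧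
    ENNReal.ofReal δ * LpN n p f ≤ LpN n p (E.indicator fun _ => ENNReal.ofReal t) ∧
    volume (Prod.snd '' ballI n zb e r rs ρ) ≤ volume E ∧
    ENNReal.ofReal δ * volume E ≤ volume (Prod.snd '' ballI n zb e r rs ρ ∩ E)

section LpN

variable {p : ℝ} {f : Pt n → ℝ≥0∞}

lemma LpN_rpow (hp : p ≠ 0) (f : Pt n → ℝ≥0∞) : LpN n p f ^ p = ∫⁻ x, f x ^ p := by
  rw [LpN, ← ENNReal.rpow_mul, one_div_mul_cancel hp, ENNReal.rpow_one]

lemma LpN_const_mul (hp : 0 < p) (c : ℝ≥0∞) (hf : Measurable f) :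
    LpN n p (fun x => c * f x) = c * LpN n p f := by
  simp only [LpN, ENNReal.mul_rpow_of_nonneg _ _ hp.le]
  rw [lintegral_const_mul _ (by fun_prop), ENNReal.mul_rpow_of_nonneg _ _ (by positivity),
    ← ENNReal.rpow_mul, mul_one_div_cancel hp.ne', ENNReal.rpow_one]

lemma LpN_indicator_const (hp : 0 < p) {E : Set (Pt n)} (hE : MeasurableSet E) (c : ℝ≥0∞) :
    LpN n p (E.indicator fun _ => c) = (c ^ p * volume E) ^ (1 / p) := by
  rw [LpN, ← lintegral_indicator_const hE]
  congr 2 with x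
  by_cases hx : x ∈ E <;> simp [hx, hp]

lemma le_LpN_indicator_const (hp : 1 ≤ p) {E : Set (Pt n)} (hE : MeasurableSet E) {x c : ℝ≥0∞}
    (hx : x ≤ 1) (h : x ≤ c ^ p * volume E) : x ≤ LpN n p (E.indicator fun _ => c) := by
  have hp0 : 0 < p := one_pos.trans_le hp
  calc x = x ^ (1 : ℝ) := (ENNReal.rpow_one x).symm
    _ ≤ x ^ (1 / p) := ENNReal.rpow_le_rpow_of_exponent_ge hx ((div_le_one hp0).2 hp)
    _ ≤ (c ^ p * volume E) ^ (1 / p) := ENNReal.rpow_le_rpow h (by positivity)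
    _ = LpN n p (E.indicator fun _ => c) := (LpN_indicator_const hp0 hE c).symm

end LpN

end Balls

section Main

variable {m : ℕ} {f : Pt m → ℝ≥0∞}

lemma radonT_const_mul (c : ℝ≥0∞) (hf : Measurable f) (x : Pt m) :
    radonT m (fun y => c * f y) x = c * radonT m f x :=
  lintegral_const_mul c (by fun_prop)

lemma measurable_radonT (hf : Measurable f) : Measurable (radonT m f) :=
  Measurable.lintegral_prod_right' (f := fun q : Pt m × Vec m =>
    f (q.1.1 - q.2, q.1.2 - ‖q.2‖ ^ 2)) (by fun_prop)

lemma LpN_radonT_pow_le (hf : Measurable f) :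
    LpN m ((m : ℝ) + 2) (radonT m f) ^ (m + 2) ≤
      ∫⁻ w, hyperplaneTransform (f ∘ paraboloidShear (Vec m)) w ^ (m + 2) := by
  have hcast : (m : ℝ) + 2 = (m + 2 : ℕ) := by push_cast; rfl
  rw [lintegral_hyperplaneTransform_comp_paraboloidShear_pow hf, ← ENNReal.rpow_natCast, hcast,
    LpN_rpow (by positivity)]
  simp only [ENNReal.rpow_natCast]
  exact le_mul_of_one_le_left' (ENNReal.one_le_ofReal.2 (one_le_pow₀ one_le_two))

lemma ConcentratesOnBall.const_mul {p δ : ℝ} (hp : 0 < p) (hf : Measurable f)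
    (h : ConcentratesOnBall m p δ f) {c : ℝ} (hc : 0 < c) :
    ConcentratesOnBall m p δ fun x => ENNReal.ofReal c * f x := by
  obtain ⟨t, E, zb, e, r, rs, ρ, ht, hE, hball, hle, hnorm, hsize, hdensity⟩ := h
  refine ⟨c * t, E, zb, e, r, rs, ρ, by positivity, hE, hball, fun x hx => ?_, ?_, hsize, hdensity⟩
  · rw [ENNReal.ofReal_mul hc.le]
    exact mul_le_mul_right (hle x hx) _
  · have hindicator : (E.indicator fun _ => ENNReal.ofReal (c * t)) =
        fun x => ENNReal.ofReal c * E.indicator (fun _ => ENNReal.ofReal t) x := by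
      ext x
      by_cases hx : x ∈ E <;> simp [hx, ENNReal.ofReal_mul hc.le]
    rw [hindicator, LpN_const_mul hp _ hf,
      LpN_const_mul hp _ (measurable_const.indicator hE), mul_left_comm]
    exact mul_le_mul_right hnorm _

lemma concentratesOnBall_of_affineBall {p δ t : ℝ} (hf : Measurable f) (ht : 0 < t)
    (hnorm : ENNReal.ofReal δ * LpN m p f ≤
      LpN m p ({x | ENNReal.ofReal t < f x}.indicator fun _ => ENNReal.ofReal t))
    {A : Pt m →ₗ[ℝ] (Fin (m + 1) → ℝ)} (hA : Function.Injective A) {v : Pt m}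
    (hsize : volume (affineBall A v (m + 2)) ≤ volume {x | ENNReal.ofReal t < f x})
    (hdensity : ENNReal.ofReal δ * volume {x | ENNReal.ofReal t < f x} ≤
      volume (affineBall A v 1 ∩ paraboloidShear (Vec m) ⁻¹' {x | ENNReal.ofReal t < f x})) :
    ConcentratesOnBall m p δ f := by
  obtain ⟨e, rs, a, ρ, he, hrs, hρ, hinner, houter⟩ :=
    exists_affineBall_subset_slantedBox_subset A hA v
  obtain ⟨zb, r, hball, himage⟩ := exists_isBallParams_image_ballI_eq v a he hrs hρ
  refine ⟨t, _, zb, e, r, rs, ρ, ht, measurableSet_lt measurable_const hf, hball,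
    fun x hx => le_of_lt hx, hnorm, ?_, ?_⟩
  · rw [himage, volume_image_paraboloidShear]
    exact (measure_mono houter).trans hsize
  · rw [himage, ← Set.image_inter_preimage, volume_image_paraboloidShear]
    exact hdensity.trans (measure_mono (Set.inter_subset_inter_left _ hinner))

variable {θ C : ℝ}

lemma HasPowerGain.concentratesOnBall_of_LpN_eq_one (h : HasPowerGain m θ C) (hθ : 0 < θ)
    (hC : 0 ≤ C) {ε : ℝ} (hε : 0 < ε) (hf : Measurable f)
    (hnorm : LpN m (((m : ℝ) + 2) / (m + 1)) f = 1)
    (hT : ENNReal.ofReal ε ≤ LpN m ((m : ℝ) + 2) (radonT m f)) :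
    ConcentratesOnBall m (((m : ℝ) + 2) / (m + 1)) ((1 / (2 * ((m : ℝ) + 2))) ^ (m + 1) *
      ((ε ^ (m + 2) / (C + 1)) ^ (1 / θ) / 2) ^ (3 * m + 6)) f := by
  have hp : 0 < ((m : ℝ) + 2) / (m + 1) := by positivity
  have hκ1 : (1 / (2 * ((m : ℝ) + 2))) ^ (m + 1) ≤ 1 :=
    pow_le_one₀ (by positivity) ((div_le_one (by positivity)).2 (by linarith))
  set s := (ε ^ (m + 2) / (C + 1)) ^ (1 / θ) / 2
  set g := f ∘ paraboloidShear (Vec m)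
  have hg : Measurable g := hf.comp (paraboloidShear (Vec m)).measurable
  have hgnorm : ∫⁻ w, g w ^ (((m : ℝ) + 2) / (m + 1)) ≤ 1 := by
    rw [← ENNReal.one_rpow (((m : ℝ) + 2) / (m + 1)), ← hnorm, LpN_rpow hp.ne']
    exact (measurePreserving_paraboloidShear.lintegral_comp (hf.pow_const _)).le
  obtain ⟨hs1, A, b, hA, hmass⟩ := h.exists_lt_setLIntegral hθ hC hg hgnorm hε (by
    rw [ENNReal.ofReal_pow hε.le]
    exact (pow_le_pow_left' hT _).trans (LpN_radonT_pow_le hf))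
  have hs : 0 < s := by positivity
  have h2s : 2 * s = (ε ^ (m + 2) / (C + 1)) ^ (1 / θ) := mul_div_cancel₀ _ two_ne_zero
  rw [← h2s] at hs1 hmass
  have hs1' : s ≤ 1 := by linarith
  obtain ⟨t, A', v, ht, hA', hlevel, hsize, hdensity⟩ :=
    exists_level_affineBall hA b hg hgnorm hs hs1' hmass
  have hvolume : volume {w | ENNReal.ofReal t < g w} = volume {x | ENNReal.ofReal t < f x} :=
    measurePreserving_paraboloidShear.measure_preimage_emb
      (paraboloidShear (Vec m)).measurableEmbedding {x | ENNReal.ofReal t < f x}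
  rw [hvolume] at hlevel hsize hdensity
  refine concentratesOnBall_of_affineBall hf ht ?_ hA' hsize hdensity
  rw [hnorm, mul_one]
  refine le_LpN_indicator_const (one_le_add_two_div m) (measurableSet_lt measurable_const hf)
    (ENNReal.ofReal_le_one.2 ?_) (le_trans (ENNReal.ofReal_le_ofReal ?_) hlevel)
  · exact mul_le_one₀ hκ1 (by positivity) (pow_le_one₀ hs.le hs1')
  · exact (mul_le_of_le_one_left (by positivity) hκ1).trans
      (pow_le_pow_of_le_one hs.le hs1' (by lia))

theorem HasPowerGain.exists_concentratesOnBall (h : HasPowerGain m θ C) (hθ : 0 < θ) (hC : 0 ≤ C) :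
    ∃ c K : ℝ, 0 < c ∧ 0 < K ∧ ∀ ε : ℝ, 0 < ε → ∀ f : Pt m → ℝ≥0∞, Measurable f →
      0 < LpN m (((m : ℝ) + 2) / (m + 1)) f → LpN m (((m : ℝ) + 2) / (m + 1)) f < ⊤ →
      ENNReal.ofReal ε * LpN m (((m : ℝ) + 2) / (m + 1)) f ≤ LpN m ((m : ℝ) + 2) (radonT m f) →
      ConcentratesOnBall m (((m : ℝ) + 2) / (m + 1)) (c * ε ^ K) f := by
  set p := ((m : ℝ) + 2) / (m + 1)
  have hp : 0 < p := by positivity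
  refine ⟨(1 / (2 * ((m : ℝ) + 2))) ^ (m + 1) * (((C + 1)⁻¹) ^ (1 / θ) / 2) ^ (3 * m + 6),
    ((m + 2 : ℕ) : ℝ) * (1 / θ) * (3 * m + 6 : ℕ), by positivity, by positivity,
    fun ε hε f hf hpos hfin hT => ?_⟩
  have hδ : (1 / (2 * ((m : ℝ) + 2))) ^ (m + 1) * (((C + 1)⁻¹) ^ (1 / θ) / 2) ^ (3 * m + 6) *
      ε ^ (((m + 2 : ℕ) : ℝ) * (1 / θ) * (3 * m + 6 : ℕ)) = (1 / (2 * ((m : ℝ) + 2))) ^ (m + 1) *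
        ((ε ^ (m + 2) / (C + 1)) ^ (1 / θ) / 2) ^ (3 * m + 6) := by
    rw [Real.rpow_mul hε.le, Real.rpow_natCast, Real.rpow_mul hε.le, Real.rpow_natCast,
      div_eq_inv_mul (ε ^ (m + 2)), Real.mul_rpow (by positivity) (by positivity)]
    ring
  obtain ⟨ν, hν, hfν⟩ : ∃ ν : ℝ, 0 < ν ∧ LpN m p f = ENNReal.ofReal ν :=
    ⟨_, ENNReal.toReal_pos hpos.ne' hfin.ne, (ENNReal.ofReal_toReal hfin.ne).symm⟩
  have hν_inv : ENNReal.ofReal ν⁻¹ * ENNReal.ofReal ν = 1 := by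
    rw [← ENNReal.ofReal_mul (by positivity), inv_mul_cancel₀ hν.ne', ENNReal.ofReal_one]
  have hfh : f = fun x => ENNReal.ofReal ν * (ENNReal.ofReal ν⁻¹ * f x) := by
    ext x
    rw [← mul_assoc, mul_comm (ENNReal.ofReal ν), hν_inv, one_mul]
  rw [hδ, hfh]
  refine (h.concentratesOnBall_of_LpN_eq_one hθ hC hε (by fun_prop) ?_ ?_).const_mul hp
    (by fun_prop) hν
  · rw [LpN_const_mul hp _ hf, hfν, hν_inv]
  · rw [funext (radonT_const_mul _ hf), LpN_const_mul (by positivity) _ (measurable_radonT hf)]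
    calc ENNReal.ofReal ε = ENNReal.ofReal ν⁻¹ * (ENNReal.ofReal ε * LpN m p f) := by
          rw [hfν, mul_left_comm, hν_inv, mul_one]
      _ ≤ _ := mul_le_mul_right hT _

end Main

/-- Theorem thm:single (ii): if `f ≥ 0` satisfies
`‖Tf‖_{d+1} ≥ ε ‖f‖_{(d+1)/d}` then there are `t > 0`, a set `E` with
`t χ_E ≤ f` of comparable norm, and a ball `ℬ` with `|π*(ℬ)| ≤ |E|` and
`|π*(ℬ) ∩ E| ≥ c ε^C |E|`. -/
theorem stmt10 (d : ℕ) (hd : 2 ≤ d) :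
    ∃ c C : ℝ, 0 < c ∧ 0 < C ∧
      ∀ (ε : ℝ), 0 < ε →
      ∀ (f : Pt (d - 1) → ℝ≥0∞), Measurable f →
        0 < LpN (d - 1) (((d : ℝ) + 1) / d) f → LpN (d - 1) (((d : ℝ) + 1) / d) f < ⊤ →
        ENNReal.ofReal ε * LpN (d - 1) (((d : ℝ) + 1) / d) f ≤
          LpN (d - 1) ((d : ℝ) + 1) (radonT (d - 1) f) →
        ∃ (t : ℝ) (E : Set (Pt (d - 1)))
          (zb : Pt (d - 1) × Pt (d - 1)) (e : Fin (d - 1) → Vec (d - 1))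
          (r rs : Fin (d - 1) → ℝ) (ρ : ℝ),
          0 < t ∧ MeasurableSet E ∧ IsBallParams (d - 1) zb e r rs ρ ∧
          (∀ x ∈ E, ENNReal.ofReal t ≤ f x) ∧
          ENNReal.ofReal (c * ε ^ C) * LpN (d - 1) (((d : ℝ) + 1) / d) f ≤
            LpN (d - 1) (((d : ℝ) + 1) / d)
              (E.indicator fun _ => ENNReal.ofReal t) ∧
          volume (Prod.snd '' ballI (d - 1) zb e r rs ρ) ≤ volume E ∧
          ENNReal.ofReal (c * ε ^ C) * volume E ≤
            volume (Prod.snd '' ballI (d - 1) zb e r rs ρ ∩ E) := by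
  have hdim : d - 2 + 1 = d - 1 := by lia
  have hcast : ((d - 1 : ℕ) : ℝ) = d - 1 := Nat.cast_pred (by lia)
  obtain ⟨θ, C, hθ, hC, hgain⟩ :=
    HasPowerGain.exists_of_one (by norm_num) (by norm_num) hasPowerGain_one (d - 2)
  rw [hdim] at hgain
  obtain ⟨c, K, hc, hK, hmain⟩ := hgain.exists_concentratesOnBall hθ hC
  have hp : (((d - 1 : ℕ) : ℝ) + 2) / ((d - 1 : ℕ) + 1) = ((d : ℝ) + 1) / d := by
    rw [hcast]
    ring_nf
  have hq : ((d - 1 : ℕ) : ℝ) + 2 = (d : ℝ) + 1 := by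
    rw [hcast]
    ring
  rw [hp, hq] at hmain
  exact ⟨c, K, hc, hK, hmain⟩
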